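/- arXiv:1705.08316 — 5 statements merged into one kernel-verified Lean document; each statement's English description precedes it below -/
import Mathlib

section
/- Let G be a connected simple graph on n ≥ 8 vertices. Then cfc(G) = n − 3 if and only if G is a tree with maximum degree Δ(G) = n − 3, or G is isomorphic to K_{1,n−1}+e, or G is isomorphic to U_n. -/
open SimpleGraph

/-- An edge-coloring `c` makes `G` conflict-free connected: every pair of distinct
vertices is joined by a path on which some color appears on exactly one edge. -/
def IsCFCColoring {V : Type*} (G : SimpleGraph V) (c : Sym2 V → ℕ) : Prop :=
  ∀ u v : V, u ≠ v → ∃ p : G.Path u v, ∃ e ∈ (p.1).edges,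
    ∀ e' ∈ (p.1).edges, c e' = c e → e' = e

/-- The conflict-free connection number of `G`: the least `k` such that some
edge-coloring of `G` with colors from `{0, …, k-1}` makes `G` conflict-free connected. -/
noncomputable def cfcNum {V : Type*} (G : SimpleGraph V) : ℕ :=
  sInf {k | ∃ c : Sym2 V → ℕ, (∀ e ∈ G.edgeSet, c e < k) ∧ IsCFCColoring G c}

/-- G is (a copy of) K_{1,n−1}+e : a star whose center v is adjacent to all other
vertices, together with one extra edge joining two leaves x and y. -/
def IsStarPlusEdge {V : Type*} (G : SimpleGraph V) : Prop :=
  ∃ v x y : V, v ≠ x ∧ v ≠ y ∧ x ≠ y ∧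
    ∀ a b : V, G.Adj a b ↔ (((a = v ∨ b = v) ∧ a ≠ b) ∨ s(a, b) = s(x, y))

/-- G is (a copy of) U_n : obtained from the double star S_{3,n−3} — with adjacent
centers u (degree 3, with leaf neighbors x, y) and w (adjacent to u and to all the
remaining vertices) — by adding the edge xy. -/
def IsUnGraph {V : Type*} (G : SimpleGraph V) : Prop :=
  ∃ u w x y : V, u ≠ w ∧ u ≠ x ∧ u ≠ y ∧ w ≠ x ∧ w ≠ y ∧ x ≠ y ∧
    ∀ a b : V, G.Adj a b ↔
      (s(a, b) = s(u, w) ∨ s(a, b) = s(u, x) ∨ s(a, b) = s(u, y) ∨ s(a, b) = s(x, y) ∨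
        ∃ z : V, z ≠ u ∧ z ≠ w ∧ z ≠ x ∧ z ≠ y ∧ s(a, b) = s(w, z))



section Search

/-- Some entry of the list occurs exactly once. -/
def HasSingleton (l : List ℕ) : Bool := l.any fun x => l.count x == 1

/-- Extend a table of path colors by a new vertex (index `0`, all old indices shifted by one)
joined to the old vertex `p` by an edge of color `c`. -/
def extendTable (M : ℕ → ℕ → List ℕ) (p c : ℕ) : ℕ → ℕ → List ℕ
  | 0, 0 => []
  | 0, j + 1 => c :: M p j
  | i + 1, 0 => c :: M p i
  | i + 1, j + 1 => M i j

/-- Search for a conflict-free coloring with `m` colors of the tree obtained by successively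
attaching new vertices to the vertices with the listed indices; index `0` is the vertex added
last. -/
def treeColorable (m : ℕ) : ℕ → (ℕ → ℕ → List ℕ) → List ℕ → Bool
  | _, _, [] => true
  | k, M, p :: ps => (List.range m).any fun c =>
      (List.range k).all (fun j => HasSingleton (c :: M p j)) &&
        treeColorable m (k + 1) (extendTable M p c) ps

/-- Every way of growing a tree (given by `ps`, with degrees `ds`) by at most `fuel` vertices
without exceeding degree `3` reaches a tree on `k` vertices that has a conflict-free coloring
with `k - 4` colors. -/
def growthColorable : ℕ → List ℕ → List ℕ → Bool
  | 0, _, ps => decide (6 ≤ ps.length) && treeColorable (ps.length - 3) 1 (fun _ _ => []) ps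
  | f + 1, ds, ps =>
      (decide (6 ≤ ps.length) && treeColorable (ps.length - 3) 1 (fun _ _ => []) ps) ||
      (List.range ds.length).all fun p => decide (3 ≤ ds.getD p 0) ||
        growthColorable f (1 :: ds.modify p (· + 1)) (ps ++ [p])

theorem growthColorable_seven : growthColorable 7 [0] [] = true := by
  decide +kernel

theorem treeColorable_four_star : ∀ i₁ < 4, ∀ i₂ < 5, ∀ i₃ < 6,
    treeColorable 4 1 (fun _ _ => []) [0, 1, 2, 3, i₁, i₂, i₃] = true := by
  decide +kernel

theorem treeColorable_three_star : ∀ i₁ < 3, ∀ i₂ < 4,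
    treeColorable 3 1 (fun _ _ => []) [0, 1, 2, i₁, i₂] = true := by
  decide +kernel

end Search

section Grow

variable {V : Type*} {G : SimpleGraph V}

/-- `G` has a coloring with `m` colors such that any two vertices of `S` are joined by a
conflict-free path inside `S`. -/
def ConflictFreeOn (G : SimpleGraph V) (S : Finset V) (m : ℕ) : Prop :=
  ∃ c : Sym2 V → ℕ, (∀ e, c e < m) ∧ ∀ u ∈ S, ∀ v ∈ S, u ≠ v → ∃ p : G.Walk u v,
    p.IsPath ∧ (∀ x ∈ p.support, x ∈ S) ∧
      ∃ e ∈ p.edges, ∀ e' ∈ p.edges, c e' = c e → e' = e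

theorem update_edge_eq [DecidableEq V] {c : Sym2 V → ℕ} {s w : V} {m : ℕ} {u v : V}
    (p : G.Walk u v) (hw : w ∉ p.support) {e : Sym2 V} (he : e ∈ p.edges) :
    Function.update c s(s, w) m e = c e := by
  apply Function.update_of_ne
  rintro rfl
  exact hw (p.snd_mem_support_of_mem_edges he)

theorem ConflictFreeOn.insert [DecidableEq V] {S : Finset V} {m : ℕ}
    (h : ConflictFreeOn G S m) {s w : V} (hs : s ∈ S) (hw : w ∉ S) (hsw : G.Adj s w) :
    ConflictFreeOn G (insert w S) (m + 1) := by
  obtain ⟨c, hc, hp⟩ := h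
  have key : ∀ u ∈ S, ∃ p : G.Walk w u, p.IsPath ∧ (∀ x ∈ p.support, x ∈ Insert.insert w S) ∧
      ∃ e ∈ p.edges, ∀ e' ∈ p.edges, Function.update c s(s, w) m e' =
        Function.update c s(s, w) m e → e' = e := by
    intro u hu
    obtain ⟨q, hq, hqS⟩ : ∃ q : G.Walk s u, q.IsPath ∧ ∀ x ∈ q.support, x ∈ S := by
      by_cases hsu : s = u
      · subst hsu
        exact ⟨.nil, .nil, by simpa using hs⟩
      · obtain ⟨q, hq, hqS, -⟩ := hp s hs u hu hsu
        exact ⟨q, hq, hqS⟩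
    have hwq : w ∉ q.support := fun h => hw (hqS _ h)
    refine ⟨.cons hsw.symm q, by simp [Walk.cons_isPath_iff, hq, hwq], ?_,
      s(s, w), by simp [Sym2.eq_swap], ?_⟩
    · intro x hx
      rw [Walk.support_cons, List.mem_cons] at hx
      rcases hx with rfl | hx
      · simp
      · exact Finset.mem_insert_of_mem (hqS _ hx)
    · intro e' he' h
      rw [Walk.edges_cons, List.mem_cons] at he'
      rcases he' with rfl | he'
      · exact Sym2.eq_swap
      · rw [update_edge_eq q hwq he', Function.update_self] at h
        exact absurd h (hc e').ne
  refine ⟨Function.update c s(s, w) m, ?_, ?_⟩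
  · intro e
    rw [Function.update_apply]
    split_ifs
    · omega
    · have := hc e
      omega
  · intro u hu v hv huv
    rw [Finset.mem_insert] at hu hv
    rcases hu with rfl | hu
    · rcases hv with rfl | hv
      · exact absurd rfl huv
      · exact key v hv
    · rcases hv with rfl | hv
      · obtain ⟨p, hp, hpS, e, he, h⟩ := key u hu
        exact ⟨p.reverse, hp.reverse, by simpa using hpS, e, by simpa using he,
          by simpa using h⟩
      · obtain ⟨p, hp, hpS, e, he, h⟩ := hp u hu v hv huv
        have hwp : w ∉ p.support := fun h => hw (hpS _ h)
        refine ⟨p, hp, fun x hx => Finset.mem_insert_of_mem (hpS x hx), e, he, ?_⟩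
        intro e' he' hee
        rw [update_edge_eq p hwp he', update_edge_eq p hwp he] at hee
        exact h e' he' hee

theorem exists_adj_boundary (hG : G.Connected) {S : Set V} {s w : V} (hs : s ∈ S) (hw : w ∉ S) :
    ∃ a ∈ S, ∃ b ∉ S, G.Adj a b := by
  obtain ⟨p⟩ := hG.preconnected s w
  obtain ⟨d, -, h1, h2⟩ := p.exists_boundary_dart S hs hw
  exact ⟨d.fst, h1, d.snd, h2, d.adj⟩

theorem ConflictFreeOn.univ [Fintype V] (hG : G.Connected) {S : Finset V} (hS : S.Nonempty)
    {m : ℕ} (h : ConflictFreeOn G S m) :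
    ConflictFreeOn G Finset.univ (m + (Fintype.card V - S.card)) := by
  classical
  induction hd : Fintype.card V - S.card generalizing S m with
  | zero =>
    have : S = Finset.univ := by
      rw [← Finset.card_eq_iff_eq_univ]
      have := S.card_le_univ
      omega
    subst this
    simpa using h
  | succ d ih =>
    obtain ⟨s, hs⟩ := hS
    obtain ⟨w, hw⟩ : ∃ w, w ∉ S := by
      by_contra! hcon
      rw [Finset.eq_univ_iff_forall.2 hcon] at hd
      simp at hd
    obtain ⟨a, ha, b, hb, hab⟩ := exists_adj_boundary hG (S := (S : Set V)) hs hw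
    have := ih ⟨b, by simp⟩ (h.insert ha hb hab) (by
      rw [Finset.card_insert_of_notMem hb]
      omega)
    rwa [show m + (d + 1) = m + 1 + d by omega]

theorem ConflictFreeOn.cfcNum_le [Fintype V] (hG : G.Connected) {S : Finset V}
    (hS : S.Nonempty) {m : ℕ} (h : ConflictFreeOn G S m) :
    cfcNum G ≤ m + (Fintype.card V - S.card) := by
  obtain ⟨c, hc, hp⟩ := h.univ hG hS
  refine Nat.sInf_le ⟨c, fun e _ => hc e, fun u v huv => ?_⟩
  obtain ⟨p, hp, -, h⟩ := hp u (Finset.mem_univ _) v (Finset.mem_univ _) huv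
  exact ⟨⟨p, hp⟩, h⟩

theorem exists_cfcNum_coloring [Fintype V] (hG : G.Connected) :
    ∃ c : Sym2 V → ℕ, (∀ e ∈ G.edgeSet, c e < cfcNum G) ∧ IsCFCColoring G c := by
  obtain ⟨v⟩ := hG.nonempty
  have h : ConflictFreeOn G {v} 1 := by
    refine ⟨fun _ => 0, by simp, ?_⟩
    simp only [Finset.mem_singleton]
    rintro _ rfl _ rfl h
    exact absurd rfl h
  obtain ⟨c, hc, hp⟩ := h.univ hG (by simp)
  refine Nat.sInf_mem (s := {k | ∃ c : Sym2 V → ℕ, (∀ e ∈ G.edgeSet, c e < k) ∧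
    IsCFCColoring G c}) ⟨_, c, fun e _ => hc e, fun u v huv => ?_⟩
  obtain ⟨p, hp, -, h⟩ := hp u (Finset.mem_univ _) v (Finset.mem_univ _) huv
  exact ⟨⟨p, hp⟩, h⟩

end Grow

section LowerBound

variable {V : Type*} {G : SimpleGraph V}

theorem mem_edges_of_isBridge {v z z' : V} (hz : G.IsBridge s(z, v)) (hz' : G.Adj z' v)
    (hne : z ≠ z') (p : G.Walk z z') : s(z, v) ∈ p.edges := by
  rw [isBridge_iff_forall_walk_mem_edges] at hz
  have := hz (p.append hz'.toWalk)
  have hv := hz'.ne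
  simp only [Walk.edges_append, List.mem_append, Walk.edges_cons, Walk.edges_nil,
    List.mem_singleton, Sym2.eq_iff] at this
  rcases this with h | ⟨rfl, -⟩ | ⟨h1, rfl⟩
  · exact h
  · exact absurd rfl hne
  · exact absurd rfl hv

theorem edges_eq_of_isBridge {v z z' : V} (hz : G.IsBridge s(z, v)) (hz' : G.IsBridge s(z', v))
    (hav : G.Adj z v) (hav' : G.Adj z' v)
    (hne : z ≠ z') (p : G.Walk z z') (hp : p.IsPath) : p.edges = [s(z, v), s(v, z')] := by
  have h1 := mem_edges_of_isBridge hz hav' hne p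
  have h2 := mem_edges_of_isBridge hz' hav hne.symm p.reverse
  rw [Walk.edges_reverse, List.mem_reverse] at h2
  cases p with
  | nil => exact absurd rfl hne
  | @cons _ a _ h q =>
    rw [Walk.cons_isPath_iff] at hp
    have hav : v = a := by
      rw [Walk.edges_cons, List.mem_cons, Sym2.congr_right] at h1
      rcases h1 with h1 | h1
      · exact h1
      · exact absurd (q.fst_mem_support_of_mem_edges h1) hp.2
    subst hav
    cases q with
    | nil => exact absurd rfl hav'.ne
    | @cons _ b _ h' r =>
      have hq := hp.1
      rw [Walk.cons_isPath_iff] at hq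
      have hb : b = z' := by
        rw [Walk.edges_cons, List.mem_cons, Walk.edges_cons, List.mem_cons] at h2
        rcases h2 with h2 | h2 | h2
        · rw [Sym2.congr_left] at h2
          exact absurd h2.symm hne
        · rw [Sym2.eq_swap, Sym2.congr_right] at h2
          exact h2.symm
        · exact absurd (r.snd_mem_support_of_mem_edges h2) hq.2
      subst hb
      rw [Walk.eq_nil_iff_nil.2 (Walk.isPath_iff_nil.1 hq.1)]
      rfl

theorem card_le_cfcNum_of_isBridge [Fintype V] (hG : G.Connected) {v : V} {B : Finset V}
    (hadj : ∀ z ∈ B, G.Adj z v) (hB : ∀ z ∈ B, G.IsBridge s(z, v)) : B.card ≤ cfcNum G := by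
  obtain ⟨c, hc, hp⟩ := exists_cfcNum_coloring hG
  rw [← Finset.card_range (cfcNum G)]
  refine Finset.card_le_card_of_injOn (fun z => c s(z, v)) ?_ ?_
  · intro z hz
    simpa using hc s(z, v) (hadj z hz)
  · intro z hz z' hz' hcc
    by_contra hne
    obtain ⟨p, e, he, h⟩ := hp z z' hne
    have hE := edges_eq_of_isBridge (hB z hz) (hB z' hz') (hadj z hz) (hadj z' hz') hne p.1 p.2
    rw [hE] at he h
    have hne' : s(z, v) ≠ s(z', v) := by
      rw [Ne, Sym2.congr_left]
      exact hne
    rw [Sym2.eq_swap (a := v)] at he h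
    simp only [List.mem_cons, List.not_mem_nil, or_false, forall_eq_or_imp, forall_eq] at he h
    rcases he with rfl | rfl
    · exact hne' (h.2 hcc.symm).symm
    · exact hne' (h.1 hcc)

end LowerBound

section Soundness

variable {V : Type*} {G : SimpleGraph V}

/-- The list `vs'` arises from `vs` by successively prepending new vertices, each adjacent to the
vertex whose index is listed in `ps`. -/
def GrowsTo (G : SimpleGraph V) : List V → List ℕ → List V → Prop
  | vs, [], vs' => vs' = vs
  | vs, p :: ps, vs' => ∃ u w, w ∉ vs ∧ vs[p]? = some u ∧ G.Adj u w ∧ GrowsTo G (w :: vs) ps vs'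

theorem GrowsTo.snoc {vs vs' : List V} {ps : List ℕ} (h : GrowsTo G vs ps vs') {p : ℕ} {u w : V}
    (hw : w ∉ vs') (hu : vs'[p]? = some u) (huw : G.Adj u w) :
    GrowsTo G vs (ps ++ [p]) (w :: vs') := by
  induction ps generalizing vs with
  | nil =>
    rw [GrowsTo] at h
    subst h
    exact ⟨u, w, hw, hu, huw, rfl⟩
  | cons q ps ih =>
    obtain ⟨a, b, h1, h2, h3, h4⟩ := h
    exact ⟨a, b, h1, h2, h3, ih h4⟩

theorem GrowsTo.length_eq {vs vs' : List V} {ps : List ℕ} (h : GrowsTo G vs ps vs') :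
    vs'.length = vs.length + ps.length := by
  induction ps generalizing vs with
  | nil => simp [show vs' = vs from h]
  | cons q ps ih =>
    obtain ⟨a, b, -, -, -, h4⟩ := h
    rw [ih h4]
    simp
    omega

theorem GrowsTo.nodup {vs vs' : List V} {ps : List ℕ} (h : GrowsTo G vs ps vs')
    (hvs : vs.Nodup) : vs'.Nodup := by
  induction ps generalizing vs with
  | nil => rwa [show vs' = vs from h]
  | cons q ps ih =>
    obtain ⟨a, b, h1, -, -, h4⟩ := h
    exact ih h4 (List.nodup_cons.2 ⟨h1, hvs⟩)

/-- The table `M` lists the colors, under `c`, of paths inside `vs` joining the vertices of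
`vs`. -/
def TableSpec (G : SimpleGraph V) (c : Sym2 V → ℕ) (vs : List V) (M : ℕ → ℕ → List ℕ) : Prop :=
  ∀ i j u v, vs[i]? = some u → vs[j]? = some v → ∃ p : G.Walk u v, p.IsPath ∧
    (∀ x ∈ p.support, x ∈ vs) ∧ (p.edges.map c).Perm (M i j) ∧
      (u ≠ v → HasSingleton (M i j) = true)

theorem exists_unique_color {c : Sym2 V → ℕ} {E : List (Sym2 V)} {l : List ℕ}
    (hl : (E.map c).Perm l) (h : HasSingleton l = true) :
    ∃ e ∈ E, ∀ e' ∈ E, c e' = c e → e' = e := by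
  rw [HasSingleton, List.any_eq_true] at h
  obtain ⟨x, hx, h⟩ := h
  rw [beq_iff_eq] at h
  rw [← hl.count_eq] at h
  rw [← hl.mem_iff, List.mem_map] at hx
  obtain ⟨e, he, rfl⟩ := hx
  refine ⟨e, he, fun e' he' hee => ?_⟩
  by_contra hne
  obtain ⟨A, B, rfl⟩ := List.append_of_mem he
  have he'' : e' ∈ A ++ B := by
    simp only [List.mem_append, List.mem_cons] at he' ⊢
    tauto
  have : c e ∈ (A ++ B).map c := List.mem_map.2 ⟨e', he'', hee⟩
  have := List.count_pos_iff.2 this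
  simp only [List.map_append, List.map_cons, List.count_append, List.count_cons_self] at h this
  omega

theorem TableSpec.extend [DecidableEq V] {c : Sym2 V → ℕ} {vs : List V} {M : ℕ → ℕ → List ℕ}
    (h : TableSpec G c vs M) {p a : ℕ} {u w : V} (hw : w ∉ vs) (hu : vs[p]? = some u)
    (huw : G.Adj u w)
    (ha : ∀ j < vs.length, HasSingleton (a :: M p j) = true) :
    TableSpec G (Function.update c s(u, w) a) (w :: vs) (extendTable M p a) := by
  have hmap : ∀ {x y : V} (q : G.Walk x y), w ∉ q.support →
      q.edges.map (Function.update c s(u, w) a) = q.edges.map c := fun q hq =>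
    List.map_congr_left fun e he => update_edge_eq q hq he
  have key : ∀ j v, vs[j]? = some v → ∃ q : G.Walk w v, q.IsPath ∧
      (∀ x ∈ q.support, x ∈ w :: vs) ∧
      (q.edges.map (Function.update c s(u, w) a)).Perm (a :: M p j) ∧
      HasSingleton (a :: M p j) = true := by
    intro j v hv
    obtain ⟨q, hq, hqS, hqM, -⟩ := h p j u v hu hv
    have hwq : w ∉ q.support := fun h => hw (hqS _ h)
    refine ⟨.cons huw.symm q, by simp [Walk.cons_isPath_iff, hq, hwq], ?_, ?_, ?_⟩
    · intro x hx
      rw [Walk.support_cons, List.mem_cons] at hx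
      rcases hx with rfl | hx
      · simp
      · exact List.mem_cons_of_mem _ (hqS _ hx)
    · rw [Walk.edges_cons, List.map_cons, hmap q hwq, Sym2.eq_swap, Function.update_self]
      exact hqM.cons _
    · exact ha j (List.getElem?_eq_some_iff.1 hv).1
  intro i j x y hx hy
  match i, j with
  | 0, 0 =>
    obtain rfl : w = x := by simpa using hx
    obtain rfl : w = y := by simpa using hy
    exact ⟨.nil, .nil, by simp, by simp [extendTable], fun h => absurd rfl h⟩
  | 0, j + 1 =>
    obtain rfl : w = x := by simpa using hx
    obtain ⟨q, h1, h2, h3, h4⟩ := key j y (by simpa using hy)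
    exact ⟨q, h1, h2, h3, fun _ => h4⟩
  | i + 1, 0 =>
    obtain rfl : w = y := by simpa using hy
    obtain ⟨q, h1, h2, h3, h4⟩ := key i x (by simpa using hx)
    refine ⟨q.reverse, h1.reverse, by simpa using h2, ?_, fun _ => h4⟩
    rw [Walk.edges_reverse, List.map_reverse]
    exact (List.reverse_perm _).trans h3
  | i + 1, j + 1 =>
    obtain ⟨q, h1, h2, h3, h4⟩ := h i j x y (by simpa using hx) (by simpa using hy)
    refine ⟨q, h1, fun x hx => List.mem_cons_of_mem _ (h2 x hx), ?_, h4⟩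
    rw [hmap q fun h => hw (h2 _ h)]
    exact h3

theorem TableSpec.conflictFreeOn [DecidableEq V] {c : Sym2 V → ℕ} {vs : List V}
    {M : ℕ → ℕ → List ℕ} (h : TableSpec G c vs M) {m : ℕ} (hc : ∀ e, c e < m) :
    ConflictFreeOn G vs.toFinset m := by
  refine ⟨c, hc, fun u hu v hv huv => ?_⟩
  rw [List.mem_toFinset, List.mem_iff_getElem?] at hu hv
  obtain ⟨i, hi⟩ := hu
  obtain ⟨j, hj⟩ := hv
  obtain ⟨p, h1, h2, h3, h4⟩ := h i j u v hi hj
  exact ⟨p, h1, by simpa using h2, exists_unique_color h3 (h4 huv)⟩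

theorem GrowsTo.conflictFreeOn [DecidableEq V] {vs vs' : List V} {ps : List ℕ}
    (h : GrowsTo G vs ps vs') {m : ℕ} {c : Sym2 V → ℕ} (hc : ∀ e, c e < m)
    {M : ℕ → ℕ → List ℕ} (hM : TableSpec G c vs M)
    (hps : treeColorable m vs.length M ps = true) :
    ConflictFreeOn G vs'.toFinset m := by
  induction ps generalizing vs c M with
  | nil =>
    obtain rfl : vs' = vs := h
    exact hM.conflictFreeOn hc
  | cons p ps ih =>
    obtain ⟨u, w, hw, hu, huw, h⟩ := h
    rw [treeColorable, List.any_eq_true] at hps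
    obtain ⟨a, ha, hps⟩ := hps
    rw [Bool.and_eq_true, List.all_eq_true] at hps
    refine ih h (c := Function.update c s(u, w) a) ?_
      (hM.extend hw hu huw fun j hj => hps.1 j (List.mem_range.2 hj)) hps.2
    intro e
    rw [Function.update_apply]
    split_ifs
    · exact List.mem_range.1 ha
    · exact hc e

theorem GrowsTo.cfcNum_le [Fintype V] (hG : G.Connected) {v : V} {vs : List V} {ps : List ℕ}
    (h : GrowsTo G [v] ps vs) {m : ℕ} (hm : 0 < m)
    (hps : treeColorable m 1 (fun _ _ => []) ps = true) :
    cfcNum G ≤ m + (Fintype.card V - (ps.length + 1)) := by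
  classical
  have hcf : ConflictFreeOn G vs.toFinset m := by
    refine h.conflictFreeOn (c := fun _ => 0) (fun _ => hm) (M := fun _ _ => []) ?_ hps
    intro i j x y hx hy
    obtain rfl : x = v := List.mem_singleton.1 (List.mem_of_getElem? hx)
    obtain rfl : y = x := List.mem_singleton.1 (List.mem_of_getElem? hy)
    exact ⟨.nil, .nil, by simp, by simp, fun h => absurd rfl h⟩
  have hcard : vs.toFinset.card = ps.length + 1 := by
    rw [List.toFinset_card_of_nodup (h.nodup (List.nodup_singleton v)), h.length_eq]
    simp [add_comm]
  have := hcf.cfcNum_le hG (Finset.card_pos.1 (by omega))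
  rwa [hcard] at this

end Soundness

section SmallDegree

variable {V : Type*} [Fintype V] {G : SimpleGraph V}

theorem cfcNum_le_of_growthColorable [DecidableRel G.Adj] (hG : G.Connected)
    (h8 : 8 ≤ Fintype.card V)
    (hdeg : ∀ v, G.degree v ≤ 3) {f : ℕ} {v : V} {ds ps : List ℕ} {vs : List V}
    (h : GrowsTo G [v] ps vs) (hf : f + ps.length = 7) (hds : ds.length = vs.length)
    (hd : ∀ i u, vs[i]? = some u → ∃ F : Finset V, F.card = ds.getD i 0 ∧
      ∀ y ∈ F, y ∈ vs ∧ G.Adj u y)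
    (hgrow : growthColorable f ds ps = true) :
    cfcNum G ≤ Fintype.card V - 4 := by
  classical
  have hlen := h.length_eq
  rw [List.length_singleton] at hlen
  have base : (decide (6 ≤ ps.length) && treeColorable (ps.length - 3) 1 (fun _ _ => []) ps) =
      true → cfcNum G ≤ Fintype.card V - 4 := by
    intro hb
    rw [Bool.and_eq_true, decide_eq_true_eq] at hb
    have := h.cfcNum_le hG (by omega) hb.2
    omega
  induction f generalizing ds ps vs with
  | zero => exact base (by simpa only [growthColorable] using hgrow)
  | succ f ih =>
    rw [growthColorable, Bool.or_eq_true] at hgrow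
    rcases hgrow with hb | hgrow
    · exact base hb
    obtain ⟨w, hw⟩ : ∃ w, w ∉ vs := by
      by_contra! hcon
      have := Finset.card_le_card (s := Finset.univ) (t := vs.toFinset)
        fun x _ => List.mem_toFinset.2 (hcon x)
      have := vs.toFinset_card_le
      rw [Finset.card_univ] at *
      omega
    have hv : vs[0]? ≠ none := by
      rw [Ne, List.getElem?_eq_none_iff]
      omega
    obtain ⟨s, hs⟩ := Option.ne_none_iff_exists'.1 hv
    obtain ⟨a, ha, b, hb, hab⟩ := exists_adj_boundary hG (S := {x | x ∈ vs})
      (List.mem_of_getElem? hs) hw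
    obtain ⟨p, hp⟩ := List.mem_iff_getElem?.1 ha
    have hplt := (List.getElem?_eq_some_iff.1 hp).1
    rw [List.all_eq_true] at hgrow
    have := hgrow p (List.mem_range.2 (by omega))
    rw [Bool.or_eq_true, decide_eq_true_eq] at this
    rcases this with h3 | hgrow
    · obtain ⟨F, hF, hFv⟩ := hd p a hp
      have hbF : b ∉ F := fun h => hb (hFv b h).1
      have : (insert b F).card ≤ G.degree a := by
        rw [← G.card_neighborFinset_eq_degree]
        refine Finset.card_le_card fun y hy => ?_
        rw [mem_neighborFinset]
        rcases Finset.mem_insert.1 hy with rfl | hy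
        · exact hab
        · exact (hFv y hy).2
      rw [Finset.card_insert_of_notMem hbF] at this
      have := hdeg a
      omega
    · have hsn := h.snoc hb hp hab
      refine ih hsn (by simp; omega) (by simp [hds]) ?_ hgrow hsn.length_eq ?_
      · intro i u hu
        match i with
        | 0 =>
          obtain rfl : b = u := by simpa using hu
          exact ⟨{a}, by simp, by simp [hab.symm, List.mem_of_getElem? hp]⟩
        | i + 1 =>
          rw [List.getElem?_cons_succ] at hu
          obtain ⟨F, hF, hFv⟩ := hd i u hu
          have hilt := (List.getElem?_eq_some_iff.1 hu).1
          by_cases hip : p = i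
          · subst hip
            obtain rfl : a = u := by simpa [hp] using hu
            have hbF : b ∉ F := fun h => hb (hFv b h).1
            refine ⟨insert b F, ?_, ?_⟩
            · rw [Finset.card_insert_of_notMem hbF, hF]
              simp [List.getD_eq_getElem?_getD, hds, hplt]
            · intro y hy
              rcases Finset.mem_insert.1 hy with rfl | hy
              · simp [hab]
              · simp [hFv y hy]
          · refine ⟨F, ?_, fun y hy => by simp [hFv y hy]⟩
            rw [hF]
            simp [List.getD_eq_getElem?_getD, hip]
      · intro hb
        rw [Bool.and_eq_true, decide_eq_true_eq] at hb
        have := hsn.cfcNum_le hG (by omega) hb.2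
        have hl := hsn.length_eq
        rw [List.length_singleton, List.length_cons] at hl
        omega

theorem cfcNum_le_of_degree_le_three [DecidableRel G.Adj] (hG : G.Connected)
    (h8 : 8 ≤ Fintype.card V) (hdeg : ∀ v, G.degree v ≤ 3) :
    cfcNum G ≤ Fintype.card V - 4 := by
  obtain ⟨v⟩ := hG.nonempty
  refine cfcNum_le_of_growthColorable hG h8 hdeg (f := 7) (v := v) (ds := [0]) (ps := [])
    (vs := [v]) rfl rfl rfl ?_ growthColorable_seven
  intro i u hu
  refine ⟨∅, ?_, by simp⟩
  cases i <;> simp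

end SmallDegree

section Star

variable {V : Type*} {G : SimpleGraph V}

theorem growsTo_star {v : V} {l : List V} (hl : (l ++ [v]).Nodup) (hadj : ∀ u ∈ l, G.Adj v u) :
    GrowsTo G [v] (List.range l.length) (l ++ [v]) := by
  induction l with
  | nil => rfl
  | cons a l ih =>
    rw [List.cons_append, List.nodup_cons] at hl
    rw [List.length_cons, List.range_succ]
    exact (ih hl.2 fun u hu => hadj u (by simp [hu])).snoc hl.1 (u := v) (by simp)
      (hadj a (by simp))

theorem exists_index_of_mem {l : List V} {u : V} (v : V) (hu : u ∈ l) :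
    ∃ i < l.length, (l ++ [v])[i]? = some u := by
  obtain ⟨i, hi⟩ := List.mem_iff_getElem?.1 hu
  have hlt := (List.getElem?_eq_some_iff.1 hi).1
  exact ⟨i, hlt, by rw [List.getElem?_append_left hlt, hi]⟩

theorem exists_star_list [DecidableEq V] {v : V} {N A : Finset V} {k : ℕ}
    (hN : ∀ y ∈ N, G.Adj v y) (hA : A.card ≤ k) (hk : k ≤ N.card) :
    ∃ l : List V, l.length = k ∧ (∀ u ∈ l, u ∈ N) ∧ (∀ u ∈ A, u ∈ N → u ∈ l) ∧
      GrowsTo G [v] (List.range k) (l ++ [v]) := by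
  obtain ⟨T, hAT, hTN, hT⟩ := Finset.exists_subsuperset_card_eq (s := A ∩ N) (t := N)
    Finset.inter_subset_right ((Finset.card_le_card Finset.inter_subset_left).trans hA) hk
  have hlen : T.toList.length = k := by rw [Finset.length_toList, hT]
  refine ⟨T.toList, hlen, fun u hu => hTN (Finset.mem_toList.1 hu),
    fun u hu huN => Finset.mem_toList.2 (hAT (Finset.mem_inter.2 ⟨hu, huN⟩)), ?_⟩
  rw [← hlen]
  refine growsTo_star ?_ fun u hu => hN u (hTN (Finset.mem_toList.1 hu))
  rw [List.nodup_append]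
  refine ⟨T.nodup_toList, by simp, ?_⟩
  rintro a ha b hb rfl
  rw [List.mem_singleton] at hb
  subst hb
  exact (hN a (hTN (Finset.mem_toList.1 ha))).ne rfl

variable [Fintype V]

theorem exists_notMem_of_card_lt {S : Finset V} (h : S.card < Fintype.card V) : ∃ w, w ∉ S := by
  by_contra! hcon
  rw [Finset.eq_univ_iff_forall.2 hcon] at h
  simp at h

theorem cfcNum_le_of_star_growth (hG : G.Connected) {v : V} {N : Finset V}
    (hN : ∀ y ∈ N, G.Adj v y) (h4 : 4 ≤ N.card) (hcard : N.card + 4 ≤ Fintype.card V)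
    (hgrow : ∀ S : Finset V, v ∈ S → N ⊆ S → (∃ w, w ∉ S) →
      ∃ u ∈ S, u ≠ v ∧ ∃ w ∉ S, G.Adj u w) :
    cfcNum G ≤ Fintype.card V - 4 := by
  classical
  have hc0 := Finset.card_insert_le v N
  obtain ⟨u₁, hu₁, hv₁, w₁, hw₁, h₁⟩ := hgrow (insert v N) (by simp) (by simp)
    (exists_notMem_of_card_lt (by omega))
  have hc1 := Finset.card_insert_le w₁ (insert v N)
  obtain ⟨u₂, hu₂, hv₂, w₂, hw₂, h₂⟩ := hgrow (insert w₁ (insert v N)) (by simp)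
    (by intro x hx; simp [hx]) (exists_notMem_of_card_lt (by omega))
  have hc2 := Finset.card_insert_le w₂ (insert w₁ (insert v N))
  obtain ⟨u₃, hu₃, hv₃, w₃, hw₃, h₃⟩ := hgrow (insert w₂ (insert w₁ (insert v N))) (by simp)
    (by intro x hx; simp [hx]) (exists_notMem_of_card_lt (by omega))
  obtain ⟨l, hl, hlN, hlA, hgr⟩ := exists_star_list hN
    (A := {u₁, u₂, u₃}) (Finset.card_le_three.trans (by norm_num)) h4
  simp only [Finset.mem_insert, hv₁, hv₂, hv₃, false_or, not_or] at hu₁ hu₂ hu₃ hw₁ hw₂ hw₃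
  have hw : ∀ w, w ∉ N → w ∉ l := fun w h h' => h (hlN w h')
  have hl₁ : u₁ ∈ l := hlA _ (by simp) hu₁
  have hl₂ : u₂ ∈ w₁ :: l := by
    rcases hu₂ with rfl | hu
    · simp
    · simp [hlA u₂ (by simp) hu]
  have hl₃ : u₃ ∈ w₂ :: w₁ :: l := by
    rcases hu₃ with rfl | rfl | hu
    · simp
    · simp
    · simp [hlA u₃ (by simp) hu]
  obtain ⟨i₁, hi₁, hx₁⟩ := exists_index_of_mem v hl₁
  obtain ⟨i₂, hi₂, hx₂⟩ := exists_index_of_mem v hl₂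
  obtain ⟨i₃, hi₃, hx₃⟩ := exists_index_of_mem v hl₃
  have hg₁ := hgr.snoc (w := w₁) (by simp [hw₁, hw]) hx₁ h₁
  have hg₂ := hg₁.snoc (w := w₂) (by simp [hw₂, hw]) hx₂ h₂
  have hg₃ := hg₂.snoc (w := w₃) (by simp [hw₃, hw]) hx₃ h₃
  simp only [List.length_cons] at hi₂ hi₃
  have := hg₃.cfcNum_le hG (m := 4) (by norm_num)
    (treeColorable_four_star i₁ (by omega) i₂ (by omega) i₃ (by omega))
  simp only [List.length_append, List.length_range, List.length_singleton] at this
  omega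

theorem exists_adj_boundary_of_neighborFinset_subset [DecidableRel G.Adj] (hG : G.Connected)
    {v : V} {S : Finset V} (hv : v ∈ S) (hS : G.neighborFinset v ⊆ S) (hw : ∃ w, w ∉ S) :
    ∃ u ∈ S, u ≠ v ∧ ∃ w ∉ S, G.Adj u w := by
  obtain ⟨w, hw⟩ := hw
  obtain ⟨a, ha, b, hb, hab⟩ := exists_adj_boundary hG (S := (S : Set V)) hv hw
  refine ⟨a, ha, ?_, b, hb, hab⟩
  rintro rfl
  exact hb (hS ((G.mem_neighborFinset _ _).2 hab))

theorem cfcNum_le_of_degree_mem_Icc [DecidableRel G.Adj] (hG : G.Connected) {v : V}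
    (h4 : 4 ≤ G.degree v) (hcard : G.degree v + 4 ≤ Fintype.card V) :
    cfcNum G ≤ Fintype.card V - 4 :=
  cfcNum_le_of_star_growth hG (N := G.neighborFinset v) (by simp) (by simpa using h4)
    (by simpa using hcard)
    fun _ hv hS hw => exists_adj_boundary_of_neighborFinset_subset hG hv hS hw

theorem cfcNum_le_of_walk [DecidableRel G.Adj] (hG : G.Connected) (h8 : 8 ≤ Fintype.card V)
    {v y z : V} (hdeg : G.degree v + 3 = Fintype.card V) (hy : G.Adj v y) (hz : G.Adj v z)
    (hyz : y ≠ z) (p : G.Walk y z) (hp : v ∉ p.support) :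
    cfcNum G ≤ Fintype.card V - 4 := by
  classical
  have hc : ((G.neighborFinset v).erase z).card = G.degree v - 1 := by
    rw [Finset.card_erase_of_mem (by simpa using hz), card_neighborFinset_eq_degree]
  refine cfcNum_le_of_star_growth hG (v := v) (N := (G.neighborFinset v).erase z)
    (by simp) (by omega) (by omega) fun S hv hS hw => ?_
  by_cases hzS : z ∈ S
  · refine exists_adj_boundary_of_neighborFinset_subset hG hv (fun x hx => ?_) hw
    by_cases hxz : x = z
    · rwa [hxz]
    · exact hS (Finset.mem_erase.2 ⟨hxz, hx⟩)
  · obtain ⟨d, hd, h1, h2⟩ := p.exists_boundary_dart (S : Set V)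
      (hS (by simp [hyz, hy])) hzS
    refine ⟨d.fst, h1, ?_, d.snd, h2, d.adj⟩
    rintro rfl
    exact hp (p.dart_fst_mem_support_of_mem_darts hd)

theorem cfcNum_le_card_sub_three [DecidableRel G.Adj] (hG : G.Connected)
    (h8 : 8 ≤ Fintype.card V) {v : V} (hdeg : G.degree v + 3 = Fintype.card V) :
    cfcNum G ≤ Fintype.card V - 3 := by
  classical
  have hgrow := fun S => exists_adj_boundary_of_neighborFinset_subset hG (v := v) (S := S)
  have hN : ∀ y ∈ G.neighborFinset v, G.Adj v y := by simp
  have hNc := G.card_neighborFinset_eq_degree v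
  set N := G.neighborFinset v
  have hc0 := Finset.card_insert_le v N
  obtain ⟨u₁, hu₁, hv₁, w₁, hw₁, h₁⟩ := hgrow (insert v N) (by simp) (by simp)
    (exists_notMem_of_card_lt (by omega))
  have hc1 := Finset.card_insert_le w₁ (insert v N)
  obtain ⟨u₂, hu₂, hv₂, w₂, hw₂, h₂⟩ := hgrow (insert w₁ (insert v N)) (by simp)
    (by intro x hx; simp [hx]) (exists_notMem_of_card_lt (by omega))
  obtain ⟨l, hl, hlN, hlA, hgr⟩ := exists_star_list (k := 3) hN
    (A := {u₁, u₂}) (Finset.card_le_two.trans (by norm_num)) (by omega)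
  simp only [Finset.mem_insert, hv₁, hv₂, false_or, not_or] at hu₁ hu₂ hw₁ hw₂
  have hw : ∀ w, w ∉ N → w ∉ l := fun w h h' => h (hlN w h')
  have hl₁ : u₁ ∈ l := hlA _ (by simp) hu₁
  have hl₂ : u₂ ∈ w₁ :: l := by
    rcases hu₂ with rfl | hu
    · simp
    · simp [hlA u₂ (by simp) hu]
  obtain ⟨i₁, hi₁, hx₁⟩ := exists_index_of_mem v hl₁
  obtain ⟨i₂, hi₂, hx₂⟩ := exists_index_of_mem v hl₂
  have hg₁ := hgr.snoc (w := w₁) (by simp [hw₁, hw]) hx₁ h₁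
  have hg₂ := hg₁.snoc (w := w₂) (by simp [hw₂, hw]) hx₂ h₂
  simp only [List.length_cons] at hi₂
  have := hg₂.cfcNum_le hG (m := 3) (by norm_num)
    (treeColorable_three_star i₁ (by omega) i₂ (by omega))
  simp only [List.length_append, List.length_range, List.length_singleton] at this
  omega

end Star

section ColoredGraph

/-- The color of the edge joining `i` and `j` in a list of colored edges. -/
def edgeColor {k : ℕ} (E : List (Fin k × Fin k × ℕ)) (i j : Fin k) : Option ℕ :=
  (E.find? fun e => (e.1 == i && e.2.1 == j) || (e.1 == j && e.2.1 == i)).map fun e => e.2.2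

/-- Search for a conflict-free path to `j` extending a path that ends in the given vertex, with
given lists of visited vertices and of used colors. -/
def hasConflictFreePath {k : ℕ} (E : List (Fin k × Fin k × ℕ)) (j : Fin k) :
    ℕ → Fin k → List (Fin k) → List ℕ → Bool
  | 0, a, _, cs => decide (a = j) && HasSingleton cs
  | f + 1, a, vis, cs => (decide (a = j) && HasSingleton cs) ||
      (List.finRange k).any fun b => decide (b ∉ vis) &&
        (edgeColor E b a).any fun c => hasConflictFreePath E j f b (b :: vis) (c :: cs)

/-- All pairs of distinct vertices of the colored graph are joined by a conflict-free path. -/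
def IsConflictFreeList {k : ℕ} (E : List (Fin k × Fin k × ℕ)) : Prop :=
  ∀ i j : Fin k, i ≠ j → hasConflictFreePath E j k i [i] [] = true

instance {k : ℕ} (E : List (Fin k × Fin k × ℕ)) : Decidable (IsConflictFreeList E) := by
  unfold IsConflictFreeList
  infer_instance

theorem edgeColor_comm {k : ℕ} (E : List (Fin k × Fin k × ℕ)) (i j : Fin k) :
    edgeColor E i j = edgeColor E j i := by
  unfold edgeColor
  congr 2
  funext e
  rw [Bool.or_comm]

theorem edgeColor_eq_some {k : ℕ} {E : List (Fin k × Fin k × ℕ)} {i j : Fin k} {c : ℕ}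
    (h : edgeColor E i j = some c) : (i, j, c) ∈ E ∨ (j, i, c) ∈ E := by
  rw [edgeColor, Option.map_eq_some_iff] at h
  obtain ⟨⟨a, b, d⟩, he, rfl⟩ := h
  have hm := List.mem_of_find?_eq_some he
  have hp := List.find?_some he
  simp only [Bool.or_eq_true, Bool.and_eq_true, beq_iff_eq] at hp
  rcases hp with ⟨rfl, rfl⟩ | ⟨rfl, rfl⟩
  · exact Or.inl hm
  · exact Or.inr hm

variable {V : Type*} {G : SimpleGraph V}

theorem exists_path_of_hasConflictFreePath {k : ℕ} {E : List (Fin k × Fin k × ℕ)}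
    {φ : Fin k → V} (hφ : Function.Injective φ) {C : Sym2 V → ℕ}
    (hadj : ∀ a b c, edgeColor E a b = some c → G.Adj (φ a) (φ b) ∧ C s(φ a, φ b) = c)
    {i j : Fin k} {f : ℕ} {a : Fin k} {vis : List (Fin k)} {cs : List ℕ}
    (p : G.Walk (φ a) (φ i)) (hp : p.IsPath) (hvis : p.support = vis.map φ)
    (hcs : p.edges.map C = cs) (h : hasConflictFreePath E j f a vis cs = true) :
    ∃ q : G.Walk (φ j) (φ i), q.IsPath ∧ (∀ x ∈ q.support, ∃ t, φ t = x) ∧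
      ∃ e ∈ q.edges, ∀ e' ∈ q.edges, C e' = C e → e' = e := by
  have base : ∀ {a : Fin k} {vis : List (Fin k)} {cs : List ℕ} (p : G.Walk (φ a) (φ i)),
      p.IsPath → p.support = vis.map φ → p.edges.map C = cs →
      (decide (a = j) && HasSingleton cs) = true →
      ∃ q : G.Walk (φ j) (φ i), q.IsPath ∧ (∀ x ∈ q.support, ∃ t, φ t = x) ∧
      ∃ e ∈ q.edges, ∀ e' ∈ q.edges, C e' = C e → e' = e := by
    intro a vis cs p hp hvis hcs hs
    rw [Bool.and_eq_true, decide_eq_true_eq] at hs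
    obtain ⟨rfl, hs⟩ := hs
    refine ⟨p, hp, fun x hx => ?_, exists_unique_color (List.Perm.of_eq hcs) hs⟩
    rw [hvis, List.mem_map] at hx
    exact hx.imp fun _ h => h.2
  induction f generalizing a vis cs with
  | zero => exact base p hp hvis hcs h
  | succ f ih =>
    rw [hasConflictFreePath, Bool.or_eq_true] at h
    rcases h with h | h
    · exact base p hp hvis hcs h
    · rw [List.any_eq_true] at h
      obtain ⟨b, -, h⟩ := h
      rw [Bool.and_eq_true, decide_eq_true_eq, Option.any_eq_true] at h
      obtain ⟨hb, c, hc, h⟩ := h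
      obtain ⟨hba, hC⟩ := hadj b a c hc
      refine ih (.cons hba p) ?_ ?_ ?_ h
      · rw [Walk.cons_isPath_iff, hvis, List.mem_map]
        exact ⟨hp, fun ⟨t, ht, htb⟩ => hb (hφ htb ▸ ht)⟩
      · simp [hvis]
      · simp [hcs, hC]

theorem cfcNum_le_of_coloredEdges [Fintype V] (hG : G.Connected) {k : ℕ} [NeZero k]
    {E : List (Fin k × Fin k × ℕ)} {φ : Fin k → V} (hφ : Function.Injective φ) {m : ℕ}
    (hE : IsConflictFreeList E) (hm : 0 < m) (hEm : ∀ e ∈ E, e.2.2 < m)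
    (hadj : ∀ e ∈ E, G.Adj (φ e.1) (φ e.2.1)) :
    cfcNum G ≤ m + (Fintype.card V - k) := by
  classical
  have hψ := Function.leftInverse_invFun hφ
  set ψ := Function.invFun φ
  set C : Sym2 V → ℕ := Sym2.lift ⟨fun a b => (edgeColor E (ψ a) (ψ b)).getD 0,
    fun a b => congrArg (fun o => o.getD 0) (edgeColor_comm E _ _)⟩ with hC
  have hadj' : ∀ a b c, edgeColor E a b = some c → G.Adj (φ a) (φ b) ∧ C s(φ a, φ b) = c := by
    intro a b c hc
    refine ⟨?_, ?_⟩
    · rcases edgeColor_eq_some hc with h | h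
      · exact hadj _ h
      · exact (hadj _ h).symm
    · rw [hC, Sym2.lift_mk]
      simp only [hψ a, hψ b, hc, Option.getD_some]
  have hcf : ConflictFreeOn G (Finset.univ.image φ) m := by
    refine ⟨C, ?_, ?_⟩
    · intro e
      induction e with | h a b => ?_
      show (edgeColor E (ψ a) (ψ b)).getD 0 < m
      rcases h : edgeColor E (ψ a) (ψ b) with _ | c
      · exact hm
      · rcases edgeColor_eq_some h with h | h
        · exact hEm _ h
        · exact hEm _ h
    · intro u hu v hv huv
      rw [Finset.mem_image] at hu hv
      obtain ⟨i, -, rfl⟩ := hu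
      obtain ⟨j, -, rfl⟩ := hv
      obtain ⟨q, h1, h2, h3⟩ := exists_path_of_hasConflictFreePath hφ hadj'
        (.nil : G.Walk (φ j) (φ j)) .nil (by simp) (by simp) (hE j i fun h => huv (h ▸ rfl))
      exact ⟨q, h1, by simpa using h2, h3⟩
  have hcard : (Finset.univ.image φ).card = k := by
    rw [Finset.card_image_of_injective _ hφ, Finset.card_univ, Fintype.card_fin]
  have := hcf.cfcNum_le hG (Finset.card_pos.1 (by rw [hcard]; exact Nat.pos_of_neZero k))
  rwa [hcard] at this

end ColoredGraph

section Structure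

variable {V : Type*} [Fintype V] {G : SimpleGraph V}

theorem exists_adj_of_not_isTree (hG : G.Connected) (hT : ¬ G.IsTree) (v : V) (par : V → V) :
    ∃ a b, G.Adj a b ∧ (a = v ∨ b ≠ par a) ∧ (b = v ∨ a ≠ par b) := by
  by_contra! hcon
  refine hT (isTree_iff_connected_and_card.2 ⟨hG, le_antisymm ?_ ?_⟩)
  · have hsub : G.edgeSet ⊆ (fun w => s(w, par w)) '' {v}ᶜ := by
      intro e he
      induction e with | h a b => ?_
      rw [mem_edgeSet] at he
      by_cases h : a = v ∨ b ≠ par a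
      · obtain ⟨h1, h2⟩ := hcon a b he h
        exact ⟨b, h1, by
          show s(b, par b) = s(a, b)
          rw [← h2, Sym2.eq_swap]⟩
      · push Not at h
        exact ⟨a, h.1, by
          show s(a, par a) = s(a, b)
          rw [← h.2]⟩
    have h1 := (Set.ncard_le_ncard hsub).trans (Set.ncard_image_le (Set.toFinite _))
    have h2 := Set.ncard_add_ncard_compl ({v} : Set V)
    rw [Set.ncard_singleton] at h2
    change G.edgeSet.ncard + 1 ≤ _
    omega
  · exact hG.card_vert_le_card_edgeSet_add_one

theorem exists_three_notMem {A : Finset V} (hA : A.card + 3 ≤ Fintype.card V) :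
    ∃ a b c, a ∉ A ∧ b ∉ A ∧ c ∉ A ∧ a ≠ b ∧ a ≠ c ∧ b ≠ c := by
  classical
  have : 2 < Aᶜ.card := by
    rw [Finset.card_compl]
    omega
  obtain ⟨a, ha, b, hb, c, hc, h⟩ := Finset.two_lt_card.1 this
  simp only [Finset.mem_compl] at ha hb hc
  exact ⟨a, b, c, ha, hb, hc, h⟩

theorem cfcNum_le_of_two_triangles (hG : G.Connected) (h8 : 8 ≤ Fintype.card V)
    {v x y z w l : V}
    (hnd : [v, x, y, z, w, l].Nodup)
    (hv : ∀ u ≠ v, G.Adj v u) (hxy : G.Adj x y) (hzw : G.Adj z w) :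
    cfcNum G ≤ Fintype.card V - 4 := by
  have := cfcNum_le_of_coloredEdges hG (k := 6) (m := 2)
    (E := [(0, 1, 0), (0, 2, 0), (0, 3, 0), (0, 4, 0), (0, 5, 1), (1, 2, 0), (3, 4, 1)])
    (φ := ![v, x, y, z, w, l])
    (by rw [← List.nodup_ofFn]; simpa [List.ofFn_succ] using hnd)
    (by decide +kernel) (by norm_num) (by decide) (by
      simp only [List.nodup_cons, List.mem_cons, not_or] at hnd
      simp [hxy, hzw, hv, hnd, ne_comm])
  omega

theorem cfcNum_le_of_fan (hG : G.Connected) (h8 : 8 ≤ Fintype.card V)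
    {v x y z l₁ l₂ l₃ : V}
    (hnd : [v, x, y, z, l₁, l₂, l₃].Nodup)
    (hv : ∀ u ≠ v, G.Adj v u) (hxy : G.Adj x y) (hyz : G.Adj y z) :
    cfcNum G ≤ Fintype.card V - 4 := by
  have := cfcNum_le_of_coloredEdges hG (k := 7) (m := 3)
    (E := [(0, 1, 0), (0, 2, 1), (0, 3, 2), (0, 4, 0), (0, 5, 1), (0, 6, 2), (1, 2, 0), (2, 3, 0)])
    (φ := ![v, x, y, z, l₁, l₂, l₃])
    (by rw [← List.nodup_ofFn]; simpa [List.ofFn_succ] using hnd)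
    (by decide +kernel) (by norm_num) (by decide) (by
      simp only [List.nodup_cons, List.mem_cons, not_or] at hnd
      simp [hxy, hyz, hv, hnd, ne_comm])
  omega

theorem cfcNum_le_of_triangle_of_pendant (hG : G.Connected) (h8 : 8 ≤ Fintype.card V)
    {v x p y z l₁ l₂ : V}
    (hnd : [v, x, p, y, z, l₁, l₂].Nodup)
    (hv : ∀ u, u ≠ v → u ≠ p → G.Adj v u) (hxp : G.Adj x p) (hyz : G.Adj y z) :
    cfcNum G ≤ Fintype.card V - 4 := by
  have := cfcNum_le_of_coloredEdges hG (k := 7) (m := 3)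
    (E := [(0, 1, 0), (1, 2, 1), (0, 3, 1), (0, 4, 2), (3, 4, 0), (0, 5, 1), (0, 6, 2)])
    (φ := ![v, x, p, y, z, l₁, l₂])
    (by rw [← List.nodup_ofFn]; simpa [List.ofFn_succ] using hnd)
    (by decide +kernel) (by norm_num) (by decide) (by
      simp only [List.nodup_cons, List.mem_cons, not_or] at hnd
      simp [hxp, hyz, hv, hnd, ne_comm])
  omega

theorem cfcNum_le_of_triangle_pendant (hG : G.Connected) (h8 : 8 ≤ Fintype.card V)
    {v x y p l₁ l₂ l₃ : V}
    (hnd : [v, x, y, p, l₁, l₂, l₃].Nodup)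
    (hv : ∀ u, u ≠ v → u ≠ p → G.Adj v u) (hxy : G.Adj x y) (hxp : G.Adj x p) :
    cfcNum G ≤ Fintype.card V - 4 := by
  have := cfcNum_le_of_coloredEdges hG (k := 7) (m := 3)
    (E := [(0, 1, 0), (0, 2, 1), (1, 2, 0), (1, 3, 2), (0, 4, 0), (0, 5, 1), (0, 6, 2)])
    (φ := ![v, x, y, p, l₁, l₂, l₃])
    (by rw [← List.nodup_ofFn]; simpa [List.ofFn_succ] using hnd)
    (by decide +kernel) (by norm_num) (by decide) (by
      simp only [List.nodup_cons, List.mem_cons, not_or] at hnd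
      simp [hxy, hxp, hv, hnd, ne_comm])
  omega

theorem cfcNum_le_of_four_cycle (hG : G.Connected) (h8 : 8 ≤ Fintype.card V)
    {v x y p l₁ l₂ l₃ : V}
    (hnd : [v, x, y, p, l₁, l₂, l₃].Nodup)
    (hv : ∀ u, u ≠ v → u ≠ p → G.Adj v u) (hxp : G.Adj x p) (hyp : G.Adj y p) :
    cfcNum G ≤ Fintype.card V - 4 := by
  have := cfcNum_le_of_coloredEdges hG (k := 7) (m := 3)
    (E := [(0, 1, 0), (0, 2, 1), (1, 3, 2), (2, 3, 2), (0, 4, 0), (0, 5, 1), (0, 6, 2)])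
    (φ := ![v, x, y, p, l₁, l₂, l₃])
    (by rw [← List.nodup_ofFn]; simpa [List.ofFn_succ] using hnd)
    (by decide +kernel) (by norm_num) (by decide) (by
      simp only [List.nodup_cons, List.mem_cons, not_or] at hnd
      simp [hyp, hxp, hv, hnd, ne_comm])
  omega

theorem cfcNum_le_of_triangle (hG : G.Connected) (h8 : 8 ≤ Fintype.card V)
    {v x y l₁ l₂ l₃ : V}
    (hnd : [v, x, y, l₁, l₂, l₃].Nodup)
    (hv : ∀ u ≠ v, G.Adj v u) (hxy : G.Adj x y) : cfcNum G ≤ Fintype.card V - 3 := by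
  have := cfcNum_le_of_coloredEdges hG (k := 6) (m := 3)
    (E := [(0, 1, 0), (1, 2, 1), (0, 2, 2), (0, 3, 0), (0, 4, 1), (0, 5, 2)])
    (φ := ![v, x, y, l₁, l₂, l₃])
    (by rw [← List.nodup_ofFn]; simpa [List.ofFn_succ] using hnd)
    (by decide +kernel) (by norm_num) (by decide) (by
      simp only [List.nodup_cons, List.mem_cons, not_or] at hnd
      simp [hxy, hv, hnd, ne_comm])
  omega

end Structure

section Classification

variable {V : Type*} {G : SimpleGraph V}

theorem isUnGraph_of_adj {v p q x : V} (hpv : p ≠ v) (hqv : q ≠ v) (hpq : p ≠ q)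
    (hp : ¬ G.Adj v p) (hq : ¬ G.Adj v q) (hv : ∀ u, u ≠ v → u ≠ p → u ≠ q → G.Adj v u)
    (hx : G.Adj v x) (hpx : G.Adj p x) (hqx : G.Adj q x) (hadj : G.Adj p q)
    (H1 : ∀ a b, G.Adj a b → G.Adj v a → ¬ G.Adj v b)
    (H2 : ∀ r, r ≠ v → ∀ a b, G.Adj r a → G.Adj r b → G.Adj v a → G.Adj v b → a = b) :
    IsUnGraph G := by
  have hxp := hpx.ne
  have hxv := hx.ne
  have hxq := hqx.ne'
  refine ⟨x, v, p, q, hxv.symm, hxp.symm, hxq, hpv.symm, hqv.symm, hpq, fun c d => ?_⟩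
  constructor
  · intro hcd
    have hdc := hcd.symm
    have := hcd.ne
    simp only [Sym2.eq_iff]
    by_cases hc : c = v
    · subst hc
      by_cases hd : d = x
      · tauto
      · refine Or.inr (Or.inr (Or.inr (Or.inr ⟨d, hd, hcd.ne', ?_, ?_, Or.inl ⟨rfl, rfl⟩⟩))) <;>
          rintro rfl <;> contradiction
    by_cases hd : d = v
    · subst hd
      by_cases hc : c = x
      · tauto
      · refine Or.inr (Or.inr (Or.inr (Or.inr ⟨c, hc, hcd.ne, ?_, ?_, Or.inr ⟨rfl, rfl⟩⟩))) <;>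
          rintro rfl <;> contradiction
    have hN : ∀ u ≠ v, u = p ∨ u = q ∨ G.Adj v u := by
      intro u hu
      have := hv u hu
      tauto
    rcases hN c hc with rfl | rfl | hvc <;> rcases hN d hd with rfl | rfl | hvd
    · contradiction
    · tauto
    · have := H2 c hc d x hcd hpx hvd hx
      tauto
    · tauto
    · contradiction
    · have := H2 c hc d x hcd hqx hvd hx
      tauto
    · have := H2 d hd c x hdc hpx hvc hx
      tauto
    · have := H2 d hd c x hdc hqx hvc hx
      tauto
    · exact absurd hvd (H1 c d hcd hvc)
  · rintro (h | h | h | h | ⟨z, h1, h2, h3, h4, h⟩) <;> rw [← mem_edgeSet, h, mem_edgeSet]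
    · exact hx.symm
    · exact hpx.symm
    · exact hqx.symm
    · exact hadj
    · exact hv z h2 h3 h4

variable [Fintype V]

theorem isStarPlusEdge_or_cfcNum_le (hG : G.Connected) (h8 : 8 ≤ Fintype.card V)
    (hT : ¬ G.IsTree) {v : V} (hv : ∀ u ≠ v, G.Adj v u) :
    IsStarPlusEdge G ∨ cfcNum G ≤ Fintype.card V - 4 := by
  classical
  obtain ⟨a, b, hab, h1, h2⟩ := exists_adj_of_not_isTree hG hT v fun _ => v
  have hav : a ≠ v := by rintro rfl; have := hab.ne; tauto
  have hbv : b ≠ v := by tauto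
  have fan : ∀ x y z, x ≠ v → y ≠ v → z ≠ v → x ≠ z → G.Adj x y → G.Adj y z →
      cfcNum G ≤ Fintype.card V - 4 := by
    intro x y z hx hy hz hxz hxy hyz
    obtain ⟨l₁, l₂, l₃, m₁, m₂, m₃, n₁, n₂, n₃⟩ := exists_three_notMem (A := {v, x, y, z})
      (by have := Finset.card_le_four (a := v) (b := x) (c := y) (d := z); omega)
    have := hxy.ne
    have := hyz.ne
    simp only [Finset.mem_insert, Finset.mem_singleton, not_or] at m₁ m₂ m₃
    exact cfcNum_le_of_fan hG h8 (v := v) (x := x) (y := y) (z := z) (l₁ := l₁) (l₂ := l₂)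
      (l₃ := l₃) (by simp; grind) hv hxy hyz
  by_cases h : ∃ c d, G.Adj c d ∧ c ≠ v ∧ d ≠ v ∧ s(c, d) ≠ s(a, b)
  · right
    obtain ⟨c, d, hcd, hc, hd, hne⟩ := h
    rw [Ne, Sym2.eq_iff] at hne
    by_cases e1 : c = a
    · subst e1
      exact fan b c d hbv hc hd (by grind) hab.symm hcd
    by_cases e2 : c = b
    · subst e2
      exact fan a c d hav hc hd (by grind) hab hcd
    by_cases e3 : d = a
    · subst e3
      exact fan b d c hbv hd hc (by grind) hab.symm hcd.symm
    by_cases e4 : d = b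
    · subst e4
      exact fan a d c hav hd hc (by grind) hab hcd.symm
    obtain ⟨l, -, -, m, -⟩ := exists_three_notMem (A := {v, a, b, c, d})
      (by have := Finset.card_le_five (a := v) (b := a) (c := b) (d := c) (e := d); omega)
    have := hab.ne
    have := hcd.ne
    simp only [Finset.mem_insert, Finset.mem_singleton, not_or] at m
    exact cfcNum_le_of_two_triangles hG h8 (v := v) (x := a) (y := b) (z := c) (w := d) (l := l)
      (by simp; grind) hv hab hcd
  · left
    push Not at h
    refine ⟨v, a, b, hav.symm, hbv.symm, hab.ne, fun c d => ⟨fun hcd => ?_, ?_⟩⟩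
    · by_cases hc : c = v
      · exact Or.inl ⟨Or.inl hc, hcd.ne⟩
      by_cases hd : d = v
      · exact Or.inl ⟨Or.inr hd, hcd.ne⟩
      exact Or.inr (h c d hcd hc hd)
    · rintro (⟨rfl | rfl, hne⟩ | h)
      · exact hv _ hne.symm
      · exact (hv _ hne).symm
      · rwa [← mem_edgeSet, h]

theorem cfcNum_le_of_one_nonneighbor (hG : G.Connected) (h8 : 8 ≤ Fintype.card V)
    (hT : ¬ G.IsTree) {v p : V} (hpv : p ≠ v) (hp : ¬ G.Adj v p)
    (hv : ∀ u, u ≠ v → u ≠ p → G.Adj v u) :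
    cfcNum G ≤ Fintype.card V - 4 := by
  classical
  obtain ⟨x, hxp⟩ : ∃ x, G.Adj x p := by
    obtain ⟨a, ha, b, hb, hab⟩ := exists_adj_boundary hG (S := {p}) rfl (w := v) hpv.symm
    rw [Set.mem_singleton_iff] at ha
    exact ⟨b, (ha ▸ hab).symm⟩
  have hxv : x ≠ v := by rintro rfl; exact hp hxp
  have := hxp.ne
  obtain ⟨a, b, hab, h1, h2⟩ := exists_adj_of_not_isTree hG hT v fun w => if w = p then x else v
  have hne := hab.ne
  have hav : a ≠ v := by rintro rfl; grind
  have hbv : b ≠ v := by rintro rfl; grind [hab.symm]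
  replace h1 := h1.resolve_left hav
  replace h2 := h2.resolve_left hbv
  have four : ∀ y, y ≠ v → y ≠ x → G.Adj y p → cfcNum G ≤ Fintype.card V - 4 := by
    intro y hyv hyx hyp
    obtain ⟨l₁, l₂, l₃, m₁, m₂, m₃, n₁, n₂, n₃⟩ := exists_three_notMem (A := {v, x, y, p})
      (by have := Finset.card_le_four (a := v) (b := x) (c := y) (d := p); omega)
    have := hyp.ne
    simp only [Finset.mem_insert, Finset.mem_singleton, not_or] at m₁ m₂ m₃
    exact cfcNum_le_of_four_cycle hG h8 (v := v) (x := x) (y := y) (p := p) (l₁ := l₁)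
      (l₂ := l₂) (l₃ := l₃) (by simp; grind) hv hxp hyp
  have pendant : ∀ y, y ≠ v → y ≠ p → G.Adj x y → cfcNum G ≤ Fintype.card V - 4 := by
    intro y hyv hyp hxy
    obtain ⟨l₁, l₂, l₃, m₁, m₂, m₃, n₁, n₂, n₃⟩ := exists_three_notMem (A := {v, x, y, p})
      (by have := Finset.card_le_four (a := v) (b := x) (c := y) (d := p); omega)
    have := hxy.ne
    simp only [Finset.mem_insert, Finset.mem_singleton, not_or] at m₁ m₂ m₃
    exact cfcNum_le_of_triangle_pendant hG h8 (v := v) (x := x) (y := y) (p := p) (l₁ := l₁)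
      (l₂ := l₂) (l₃ := l₃) (by simp; grind) hv hxy hxp
  by_cases ha : a = p
  · subst ha
    exact four b hbv (by simpa using h1) hab.symm
  by_cases hb : b = p
  · subst hb
    exact four a hav (by simpa using h2) hab
  by_cases hax : a = x
  · subst hax
    exact pendant b hbv hb hab
  by_cases hbx : b = x
  · subst hbx
    exact pendant a hav ha hab.symm
  obtain ⟨l₁, l₂, -, m₁, m₂, -, n₁, -⟩ := exists_three_notMem (A := {v, x, p, a, b})
    (by have := Finset.card_le_five (a := v) (b := x) (c := p) (d := a) (e := b); omega)
  simp only [Finset.mem_insert, Finset.mem_singleton, not_or] at m₁ m₂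
  exact cfcNum_le_of_triangle_of_pendant hG h8 (v := v) (x := x) (p := p) (y := a) (z := b)
    (l₁ := l₁) (l₂ := l₂) (by simp; grind) hv hxp hab

theorem isUnGraph_or_cfcNum_le_of_adj [DecidableRel G.Adj] (hG : G.Connected)
    (h8 : 8 ≤ Fintype.card V) (hT : ¬ G.IsTree) {v p q x y : V}
    (hdeg : G.degree v + 3 = Fintype.card V) (hpv : p ≠ v) (hqv : q ≠ v) (hpq : p ≠ q)
    (hp : ¬ G.Adj v p) (hq : ¬ G.Adj v q)
    (hv : ∀ u, u ≠ v → u ≠ p → u ≠ q → G.Adj v u)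
    (hpx : G.Adj p x) (hx : G.Adj v x) (hqy : G.Adj q y) :
    IsUnGraph G ∨ cfcNum G ≤ Fintype.card V - 4 := by
  classical
  by_contra! hcon
  obtain ⟨hU, hcf⟩ := hcon
  have hW : ∀ a b, G.Adj v a → G.Adj v b → a ≠ b → ∀ w : G.Walk a b, v ∈ w.support :=
    fun a b ha hb hab w => by_contra fun h =>
      hcf.not_ge (cfcNum_le_of_walk hG h8 hdeg ha hb hab w h)
  have H1 : ∀ a b, G.Adj a b → G.Adj v a → ¬ G.Adj v b := by
    intro a b hab ha hb
    have := hW a b ha hb hab.ne (.cons hab .nil)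
    simp [ha.ne, hb.ne] at this
  have H2 : ∀ r, r ≠ v → ∀ a b, G.Adj r a → G.Adj r b → G.Adj v a → G.Adj v b → a = b := by
    intro r hr a b hra hrb ha hb
    by_contra hab
    have := hW a b ha hb hab (.cons hra.symm (.cons hrb .nil))
    simp [ha.ne, hb.ne, hr.symm] at this
  have H3 : G.Adj p q → ∀ a b, G.Adj p a → G.Adj q b → G.Adj v a → G.Adj v b → a = b := by
    intro h a b hpa hqb ha hb
    by_contra hab
    have := hW a b ha hb hab (.cons hpa.symm (.cons h (.cons hqb .nil)))
    simp [ha.ne, hb.ne, hpv.symm, hqv.symm] at this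
  have hxp := hpx.ne
  have hxv := hx.ne
  have hxq : x ≠ q := by rintro rfl; exact hq hx
  have hyv : y ≠ v := by rintro rfl; exact hq hqy.symm
  have hyq := hqy.ne
  obtain ⟨a, b, hab, h1, h2⟩ := exists_adj_of_not_isTree hG hT v
    fun w => if w = p then x else if w = q then y else v
  have hne := hab.ne
  have hav : a ≠ v := by rintro rfl; grind
  have hbv : b ≠ v := by rintro rfl; grind [hab.symm]
  replace h1 := h1.resolve_left hav
  replace h2 := h2.resolve_left hbv
  obtain ⟨hadj, hqx⟩ : G.Adj p q ∧ G.Adj q x := by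
    have hba := hab.symm
    have hqp : y = p → G.Adj p q := fun h => h ▸ hqy.symm
    grind
  exact hU (isUnGraph_of_adj hpv hqv hpq hp hq hv hx hpx hqx hadj H1 H2)

theorem isUnGraph_or_cfcNum_le [DecidableRel G.Adj] (hG : G.Connected)
    (h8 : 8 ≤ Fintype.card V) (hT : ¬ G.IsTree) {v p q : V}
    (hdeg : G.degree v + 3 = Fintype.card V) (hpv : p ≠ v) (hqv : q ≠ v) (hpq : p ≠ q)
    (hp : ¬ G.Adj v p) (hq : ¬ G.Adj v q)
    (hv : ∀ u, u ≠ v → u ≠ p → u ≠ q → G.Adj v u) :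
    IsUnGraph G ∨ cfcNum G ≤ Fintype.card V - 4 := by
  have hnb : ∀ r ≠ v, ∃ x, G.Adj r x := by
    intro r hr
    obtain ⟨a, ha, b, hb, hab⟩ := exists_adj_boundary hG (S := {r}) rfl (w := v) hr.symm
    rw [Set.mem_singleton_iff] at ha
    exact ⟨b, ha ▸ hab⟩
  obtain ⟨r, hr, x, hx, hrx⟩ := exists_adj_boundary hG (S := {p, q}) (Or.inl rfl) (w := v)
    (by simp [hpv.symm, hqv.symm])
  simp only [Set.mem_insert_iff, Set.mem_singleton_iff, not_or] at hr hx
  have hxv : x ≠ v := by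
    rintro rfl
    rcases hr with rfl | rfl
    · exact hp hrx.symm
    · exact hq hrx.symm
  have hvx := hv x hxv hx.1 hx.2
  rcases hr with rfl | rfl
  · obtain ⟨y, hy⟩ := hnb q hqv
    exact isUnGraph_or_cfcNum_le_of_adj hG h8 hT hdeg hpv hqv hpq hp hq hv hrx hvx hy
  · obtain ⟨y, hy⟩ := hnb p hpv
    exact isUnGraph_or_cfcNum_le_of_adj hG h8 hT hdeg hqv hpv hpq.symm hq hp
      (fun u h1 h2 h3 => hv u h1 h3 h2) hrx hvx hy

theorem isTree_or_isStarPlusEdge_or_isUnGraph_or_cfcNum_le [DecidableRel G.Adj]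
    (hG : G.Connected) (h8 : 8 ≤ Fintype.card V) :
    (G.IsTree ∧ Fintype.card V - 3 ≤ G.maxDegree) ∨ IsStarPlusEdge G ∨ IsUnGraph G ∨
      cfcNum G ≤ Fintype.card V - 4 := by
  classical
  have := hG.nonempty
  obtain ⟨v, hmax⟩ := G.exists_maximal_degree_vertex
  by_cases h3 : G.maxDegree ≤ 3
  · exact Or.inr (Or.inr (Or.inr (cfcNum_le_of_degree_le_three hG h8
      fun u => (G.degree_le_maxDegree u).trans h3)))
  by_cases h4 : G.degree v + 4 ≤ Fintype.card V
  · exact Or.inr (Or.inr (Or.inr (cfcNum_le_of_degree_mem_Icc hG (by omega) h4)))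
  by_cases hT : G.IsTree
  · exact Or.inl ⟨hT, by omega⟩
  have hcard : ((G.neighborFinset v)ᶜ.erase v).card = Fintype.card V - 1 - G.degree v := by
    rw [Finset.card_erase_of_mem (by simp), Finset.card_compl, card_neighborFinset_eq_degree]
    omega
  have hmem : ∀ u, u ∈ (G.neighborFinset v)ᶜ.erase v ↔ u ≠ v ∧ ¬ G.Adj v u := by simp
  have hlt := G.degree_lt_card_verts v
  obtain h | h | h : G.degree v + 1 = Fintype.card V ∨ G.degree v + 2 = Fintype.card V ∨
    G.degree v + 3 = Fintype.card V := by omega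
  · rw [show Fintype.card V - 1 - G.degree v = 0 by omega, Finset.card_eq_zero] at hcard
    rw [hcard] at hmem
    simp only [Finset.notMem_empty, false_iff, not_and, not_not] at hmem
    have := isStarPlusEdge_or_cfcNum_le hG h8 hT hmem
    tauto
  · rw [show Fintype.card V - 1 - G.degree v = 1 by omega, Finset.card_eq_one] at hcard
    obtain ⟨p, hcard⟩ := hcard
    rw [hcard] at hmem
    simp only [Finset.mem_singleton] at hmem
    obtain ⟨hpv, hp⟩ := (hmem p).1 rfl
    exact Or.inr (Or.inr (Or.inr (cfcNum_le_of_one_nonneighbor hG h8 hT hpv hp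
      fun u h1 h2 => by_contra fun h3 => h2 ((hmem u).2 ⟨h1, h3⟩))))
  · rw [show Fintype.card V - 1 - G.degree v = 2 by omega, Finset.card_eq_two] at hcard
    obtain ⟨p, q, hpq, hcard⟩ := hcard
    rw [hcard] at hmem
    simp only [Finset.mem_insert, Finset.mem_singleton] at hmem
    obtain ⟨hpv, hp⟩ := (hmem p).1 (Or.inl rfl)
    obtain ⟨hqv, hq⟩ := (hmem q).1 (Or.inr rfl)
    have := isUnGraph_or_cfcNum_le hG h8 hT h hpv hqv hpq hp hq
      fun u h1 h2 h3 => by_contra fun h4 => not_or.2 ⟨h2, h3⟩ ((hmem u).2 ⟨h1, h4⟩)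
    tauto

end Classification

section Extremal

variable {V : Type*} {G : SimpleGraph V}

theorem isBridge_of_closed {z v : V} {A : Set V} (hz : z ∈ A) (hv : v ∉ A)
    (hA : ∀ a ∈ A, ∀ b ∉ A, G.Adj a b → s(a, b) = s(z, v)) : G.IsBridge s(z, v) := by
  rw [isBridge_iff]
  rintro ⟨p⟩
  obtain ⟨d, -, h1, h2⟩ := p.exists_boundary_dart A hz hv
  have := d.adj
  rw [deleteEdges_adj] at this
  exact this.2 (hA _ h1 _ h2 this.1)

variable [Fintype V]

theorem maxDegree_le_cfcNum [DecidableRel G.Adj] (hT : G.IsTree) : G.maxDegree ≤ cfcNum G := by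
  have := hT.connected.nonempty
  obtain ⟨v, hmax⟩ := G.exists_maximal_degree_vertex
  rw [hmax, ← card_neighborFinset_eq_degree]
  refine card_le_cfcNum_of_isBridge hT.connected (v := v) (fun z hz => ?_) fun z hz => ?_
  · exact ((mem_neighborFinset _ _ _).1 hz).symm
  · exact isAcyclic_iff_forall_adj_isBridge.1 hT.isAcyclic ((mem_neighborFinset _ _ _).1 hz).symm

theorem IsStarPlusEdge.cfcNum_eq (hG : G.Connected) (h8 : 8 ≤ Fintype.card V)
    (h : IsStarPlusEdge G) : cfcNum G = Fintype.card V - 3 := by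
  classical
  obtain ⟨v, x, y, hvx, hvy, hxy, h⟩ := h
  have hv : ∀ u ≠ v, G.Adj v u := fun u hu => (h _ _).2 (Or.inl ⟨Or.inl rfl, hu.symm⟩)
  refine le_antisymm ?_ ?_
  · obtain ⟨l₁, l₂, l₃, m₁, m₂, m₃, n₁, n₂, n₃⟩ := exists_three_notMem (A := {v, x, y})
      (by have := Finset.card_le_three (a := v) (b := x) (c := y); omega)
    simp only [Finset.mem_insert, Finset.mem_singleton, not_or] at m₁ m₂ m₃
    exact cfcNum_le_of_triangle hG h8 (v := v) (x := x) (y := y) (l₁ := l₁) (l₂ := l₂)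
      (l₃ := l₃) (by simp; grind) hv ((h _ _).2 (Or.inr rfl))
  · have hB : ({v, x, y}ᶜ : Finset V).card = Fintype.card V - 3 := by
      rw [Finset.card_compl, Finset.card_eq_three.2 ⟨v, x, y, hvx, hvy, hxy, rfl⟩]
    rw [← hB]
    refine card_le_cfcNum_of_isBridge hG (v := v) (fun z hz => ?_) fun z hz => ?_ <;>
      simp only [Finset.mem_compl, Finset.mem_insert, Finset.mem_singleton, not_or] at hz
    · exact (hv z hz.1).symm
    · refine isBridge_of_closed (A := {z}) rfl (Ne.symm hz.1) ?_
      rintro a rfl b - hab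
      have := (h _ _).1 hab
      rw [Sym2.eq_iff] at this ⊢
      grind

theorem IsUnGraph.cfcNum_eq (hG : G.Connected) (h8 : 8 ≤ Fintype.card V)
    (h : IsUnGraph G) : cfcNum G = Fintype.card V - 3 := by
  classical
  obtain ⟨u, w, x, y, huw, hux, huy, hwx, hwy, hxy, h⟩ := h
  simp only [Sym2.eq_iff] at h
  have hN : G.neighborFinset w = {w, x, y}ᶜ := by
    ext z
    rw [mem_neighborFinset, h]
    simp only [Finset.mem_compl, Finset.mem_insert, Finset.mem_singleton, not_or]
    constructor
    · grind
    · rintro ⟨h1, h2, h3⟩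
      by_cases hz : z = u
      · exact Or.inl (Or.inr ⟨trivial, hz⟩)
      · exact Or.inr (Or.inr (Or.inr (Or.inr ⟨z, hz, h1, h2, h3, Or.inl ⟨trivial, rfl⟩⟩)))
  have hB : (G.neighborFinset w).card = Fintype.card V - 3 := by
    rw [hN, Finset.card_compl, Finset.card_eq_three.2 ⟨w, x, y, hwx, hwy, hxy, rfl⟩]
  refine le_antisymm ?_ ?_
  · refine cfcNum_le_card_sub_three hG h8 (v := w) ?_
    rw [← card_neighborFinset_eq_degree, hB]
    omega
  · rw [← hB]
    refine card_le_cfcNum_of_isBridge hG (v := w) (fun z hz => ?_) fun z hz => ?_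
    · exact ((mem_neighborFinset _ _ _).1 hz).symm
    · rw [hN] at hz
      simp only [Finset.mem_compl, Finset.mem_insert, Finset.mem_singleton, not_or] at hz
      by_cases hzu : z = u
      · subst hzu
        refine isBridge_of_closed (A := {z, x, y}) (Or.inl rfl) (by simp; grind) ?_
        intro a ha b hb hab
        simp only [Set.mem_insert_iff, Set.mem_singleton_iff, not_or] at ha hb
        have := (h _ _).1 hab
        rw [Sym2.eq_iff]
        grind
      · refine isBridge_of_closed (A := {z}) rfl (Ne.symm hz.1) ?_
        rintro a rfl b - hab
        have := (h _ _).1 hab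
        rw [Sym2.eq_iff]
        grind

end Extremal
/-- For a connected graph G on n ≥ 8 vertices, cfc(G) = n − 3 iff G is a tree with
Δ(G) = n − 3, or G is K_{1,n−1}+e, or G is U_n. -/
theorem cfcNum_eq_card_sub_three_iff {V : Type*} [Fintype V] (G : SimpleGraph V)
    [DecidableRel G.Adj] (hG : G.Connected) (n : ℕ) (hn : Fintype.card V = n)
    (h8 : 8 ≤ n) :
    cfcNum G = n - 3 ↔
      (G.IsTree ∧ G.maxDegree = n - 3) ∨ IsStarPlusEdge G ∨ IsUnGraph G := by
  classical
  subst hn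
  constructor
  · intro h
    rcases isTree_or_isStarPlusEdge_or_isUnGraph_or_cfcNum_le hG h8 with ⟨hT, hm⟩ | hS | hU | hle
    · exact Or.inl ⟨hT, le_antisymm (h ▸ maxDegree_le_cfcNum hT) hm⟩
    · exact Or.inr (Or.inl hS)
    · exact Or.inr (Or.inr hU)
    · omega
  · rintro (⟨hT, hm⟩ | hS | hU)
    · refine le_antisymm ?_ (hm ▸ maxDegree_le_cfcNum hT)
      have := hG.nonempty
      obtain ⟨v, hmax⟩ := G.exists_maximal_degree_vertex
      exact cfcNum_le_card_sub_three hG h8 (v := v) (by omega)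
    · exact hS.cfcNum_eq hG h8
    · exact hU.cfcNum_eq hG h8
end

section
/- Let G be a connected noncomplete simple graph whose complement Ḡ is connected with diameter at least 3. Then cfc(G) = 2 if and only if every vertex of G is incident with at most two cut-edges of G. -/
open SimpleGraph

section

variable {V : Type*} {G : SimpleGraph V} {c : Sym2 V → ℕ} {u v : V} {S : Set V} {α β : ℕ}

/-- The vertices `x` and `y` are joined by a conflict-free path. -/
def ConflictFreeJoined (G : SimpleGraph V) (c : Sym2 V → ℕ) (x y : V) : Prop :=
  ∃ p : G.Path x y, ∃ e ∈ (p.1).edges, ∀ e' ∈ (p.1).edges, c e' = c e → e' = e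

namespace ConflictFreeJoined

theorem symm {x y : V} (h : ConflictFreeJoined G c x y) : ConflictFreeJoined G c y x := by
  obtain ⟨p, e, he, h⟩ := h
  refine ⟨p.reverse, e, by simpa using he, fun e' he' ↦ h e' (by simpa using he')⟩

theorem of_adj {x y : V} (h : G.Adj x y) : ConflictFreeJoined G c x y :=
  ⟨.singleton h, s(x, y), by simp [Path.singleton], by simp [Path.singleton]⟩

theorem of_two {x y z : V} (h₁ : G.Adj x y) (h₂ : G.Adj y z) (hxz : x ≠ z)
    (hc : c s(x, y) ≠ c s(y, z)) : ConflictFreeJoined G c x z := by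
  refine ⟨⟨.cons h₁ (.cons h₂ .nil), by simp [h₁.ne, h₂.ne, hxz]⟩, s(x, y), by simp, ?_⟩
  simpa using fun h ↦ absurd h.symm hc

theorem of_three {x y z w : V} (h₁ : G.Adj x y) (h₂ : G.Adj y z) (h₃ : G.Adj z w)
    (hxz : x ≠ z) (hxw : x ≠ w) (hyw : y ≠ w)
    (hc : (c s(x, y) ≠ c s(y, z) ∧ c s(x, y) ≠ c s(z, w)) ∨
      (c s(x, y) ≠ c s(y, z) ∧ c s(y, z) ≠ c s(z, w)) ∨
      (c s(x, y) ≠ c s(z, w) ∧ c s(y, z) ≠ c s(z, w))) : ConflictFreeJoined G c x w := by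
  refine ⟨⟨.cons h₁ (.cons h₂ (.cons h₃ .nil)),
    by simp [h₁.ne, h₂.ne, h₃.ne, hxz, hxw, hyw]⟩, ?_⟩
  simp only [Walk.edges_cons, Walk.edges_nil]
  rcases hc with hc | hc | hc
  · exact ⟨s(x, y), by simp, by grind⟩
  · exact ⟨s(y, z), by simp, by grind⟩
  · exact ⟨s(z, w), by simp, by grind⟩

theorem of_four {x y z w t : V} (h₁ : G.Adj x y) (h₂ : G.Adj y z) (h₃ : G.Adj z w)
    (h₄ : G.Adj w t) (hxz : x ≠ z) (hxw : x ≠ w) (hxt : x ≠ t) (hyw : y ≠ w) (hyt : y ≠ t)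
    (hzt : z ≠ t)
    (hc : (c s(y, z) ≠ c s(x, y) ∧ c s(z, w) ≠ c s(x, y) ∧ c s(w, t) ≠ c s(x, y)) ∨
      (c s(x, y) ≠ c s(y, z) ∧ c s(z, w) ≠ c s(y, z) ∧ c s(w, t) ≠ c s(y, z)) ∨
      (c s(x, y) ≠ c s(z, w) ∧ c s(y, z) ≠ c s(z, w) ∧ c s(w, t) ≠ c s(z, w))) :
    ConflictFreeJoined G c x t := by
  refine ⟨⟨.cons h₁ (.cons h₂ (.cons h₃ (.cons h₄ .nil))),
    by simp [h₁.ne, h₂.ne, h₃.ne, h₄.ne, hxz, hxw, hxt, hyw, hyt, hzt]⟩, ?_⟩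
  simp only [Walk.edges_cons, Walk.edges_nil]
  rcases hc with ⟨h, h', h''⟩ | ⟨h, h', h''⟩ | ⟨h, h', h''⟩
  · exact ⟨s(x, y), by simp, by simp [h, h', h'']⟩
  · exact ⟨s(y, z), by simp, by simp [h, h', h'']⟩
  · exact ⟨s(z, w), by simp, by simp [h, h', h'']⟩

end ConflictFreeJoined

/-- `x` is adjacent to `u` and is neither adjacent nor equal to `v`. -/
def IsPrivateNeighbor (G : SimpleGraph V) (u v x : V) : Prop :=
  G.Adj u x ∧ ¬ G.Adj v x ∧ x ≠ v

/-- The vertices of `S` have no neighbors other than `u` and `v`, each of `u` and `v` has at most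
one neighbor in `S`, and `u` and `v` have a common neighbor unless `S` is empty. -/
structure IsPendantSelection (G : SimpleGraph V) (u v : V) (S : Set V) : Prop where
  eq_left : ∀ x ∈ S, ∀ y ∈ S, G.Adj u x → G.Adj u y → x = y
  eq_right : ∀ x ∈ S, ∀ y ∈ S, G.Adj v x → G.Adj v y → x = y
  pendant : ∀ x ∈ S, ∀ w, G.Adj x w → w = u ∨ w = v
  exists_common : S.Nonempty → ∃ w, G.Adj u w ∧ G.Adj v w

/-- `u` and `v` have no common neighbor, `u a b v` is a path with `a, b ∈ S`, and apart from `a`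
and `b` the set `S` has at most one further vertex next to each of `u` and `v`, which is a leaf. -/
structure IsCrossSelection (G : SimpleGraph V) (u v : V) (S : Set V) (a b : V) : Prop where
  no_common : ∀ w, G.Adj u w → ¬ G.Adj v w
  left : IsPrivateNeighbor G u v a
  right : IsPrivateNeighbor G v u b
  adj : G.Adj a b
  left_mem : a ∈ S
  right_mem : b ∈ S
  eq_left : ∀ x ∈ S, ∀ y ∈ S, x ≠ a → y ≠ a → G.Adj u x → G.Adj u y → x = y
  eq_right : ∀ x ∈ S, ∀ y ∈ S, x ≠ b → y ≠ b → G.Adj v x → G.Adj v y → x = y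
  pendant : ∀ x ∈ S, x ≠ a → x ≠ b → ∀ w, G.Adj x w → w = u ∨ w = v

/-- The colors used around a dominating edge `uv`: the private neighbors in `S` are those joined
to their endpoint of `uv` by an edge of color `0`. -/
structure IsDominatingEdgeColoring (G : SimpleGraph V) (c : Sym2 V → ℕ) (u v : V) (S : Set V)
    (α β : ℕ) : Prop where
  adj : G.Adj u v
  dom : ∀ x, x ≠ u → x ≠ v → G.Adj u x ∨ G.Adj v x
  color_edge : c s(u, v) = 0
  sum : α + β = 1
  left_mem : ∀ x, IsPrivateNeighbor G u v x → x ∈ S → c s(u, x) = 0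
  left_notMem : ∀ x, IsPrivateNeighbor G u v x → x ∉ S → c s(u, x) = 1
  right_mem : ∀ x, IsPrivateNeighbor G v u x → x ∈ S → c s(v, x) = 0
  right_notMem : ∀ x, IsPrivateNeighbor G v u x → x ∉ S → c s(v, x) = 1
  common_left : ∀ x, G.Adj u x → G.Adj v x → c s(u, x) = α
  common_right : ∀ x, G.Adj u x → G.Adj v x → c s(v, x) = β
  cross : ∀ x y, IsPrivateNeighbor G u v x → IsPrivateNeighbor G v u y → c s(x, y) = 1
  inner_left : ∀ x y, G.Adj u x → G.Adj u y → x ≠ v → y ≠ v → c s(x, y) = 0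
  inner_right : ∀ x y, G.Adj v x → G.Adj v y → x ≠ u → y ≠ u → c s(x, y) = 0
  exists_left : ∀ x y, IsPrivateNeighbor G u v x → IsPrivateNeighbor G u v y → x ≠ y → x ∉ S →
    y ∉ S → (∃ w, w ≠ u ∧ G.Adj x w) ∨ ∃ w, w ≠ u ∧ G.Adj y w
  exists_right : ∀ x y, IsPrivateNeighbor G v u x → IsPrivateNeighbor G v u y → x ≠ y → x ∉ S →
    y ∉ S → (∃ w, w ≠ v ∧ G.Adj x w) ∨ ∃ w, w ≠ v ∧ G.Adj y w
  selection : IsPendantSelection G u v S ∨ ∃ a b, IsCrossSelection G u v S a b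

theorem IsPendantSelection.swap (h : IsPendantSelection G u v S) : IsPendantSelection G v u S where
  eq_left := h.eq_right
  eq_right := h.eq_left
  pendant x hx w hw := (h.pendant x hx w hw).symm
  exists_common hS := (h.exists_common hS).imp fun _ ↦ And.symm

theorem IsCrossSelection.swap {a b : V} (h : IsCrossSelection G u v S a b) :
    IsCrossSelection G v u S b a where
  no_common w hv hu := h.no_common w hu hv
  left := h.right
  right := h.left
  adj := h.adj.symm
  left_mem := h.right_mem
  right_mem := h.left_mem
  eq_left := h.eq_right
  eq_right := h.eq_left
  pendant x hx hb ha w hw := (h.pendant x hx ha hb w hw).symm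

namespace IsDominatingEdgeColoring

theorem swap (h : IsDominatingEdgeColoring G c u v S α β) :
    IsDominatingEdgeColoring G c v u S β α where
  adj := h.adj.symm
  dom x hv hu := (h.dom x hu hv).symm
  color_edge := by rw [Sym2.eq_swap, h.color_edge]
  sum := by rw [add_comm, h.sum]
  left_mem := h.right_mem
  left_notMem := h.right_notMem
  right_mem := h.left_mem
  right_notMem := h.left_notMem
  common_left x hv hu := h.common_right x hu hv
  common_right x hv hu := h.common_left x hu hv
  cross x y hx hy := by rw [Sym2.eq_swap, h.cross y x hy hx]
  inner_left := h.inner_right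
  inner_right := h.inner_left
  exists_left := h.exists_right
  exists_right := h.exists_left
  selection := h.selection.imp (·.swap) fun ⟨a, b, hab⟩ ↦ ⟨b, a, hab.swap⟩

theorem joined_endpoint_private (h : IsDominatingEdgeColoring G c u v S α β) {b : V}
    (hb : IsPrivateNeighbor G v u b) : ConflictFreeJoined G c u b := by
  by_cases hS : b ∈ S
  · have hvb := h.right_mem b hb hS
    rcases h.selection with hs | ⟨a₀, b₀, hs⟩
    · obtain ⟨w, huw, hvw⟩ := hs.exists_common ⟨b, hS⟩
      have h₁ := h.common_left w huw hvw
      have h₂ := h.common_right w huw hvw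
      have h₃ := h.sum
      rw [Sym2.eq_swap] at h₂
      refine .of_three huw hvw.symm hb.1 h.adj.ne hb.2.2.symm ?_ (by omega)
      rintro rfl
      exact hb.2.1 huw
    · have h₁ := h.left_mem a₀ hs.left hs.left_mem
      have h₂ := h.cross a₀ b₀ hs.left hs.right
      have h₃ := h.right_mem b₀ hs.right hs.right_mem
      rw [Sym2.eq_swap] at h₃
      by_cases hbb : b = b₀
      · subst hbb
        exact .of_two hs.left.1 hs.adj hs.right.2.2.symm (by omega)
      · refine .of_four hs.left.1 hs.adj hs.right.1.symm hb.1 hs.right.2.2.symm h.adj.ne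
          hb.2.2.symm hs.left.2.2 ?_ (Ne.symm hbb) (by omega)
        rintro rfl
        exact hb.2.1 hs.left.1
  · have := h.right_notMem b hb hS
    have := h.color_edge
    exact .of_two h.adj hb.1 hb.2.2.symm (by omega)

theorem joined_private_private (h : IsDominatingEdgeColoring G c u v S α β) {a b : V}
    (ha : IsPrivateNeighbor G u v a) (hb : IsPrivateNeighbor G v u b) :
    ConflictFreeJoined G c a b := by
  have hab : a ≠ b := by rintro rfl; exact hb.2.1 ha.1
  by_cases hadj : G.Adj a b
  · exact .of_adj hadj
  have h₀ := h.color_edge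
  by_cases hS : a ∈ S ∧ b ∈ S
  · have hua := h.left_mem a ha hS.1
    have hvb := h.right_mem b hb hS.2
    rw [Sym2.eq_swap] at hua
    rcases h.selection with hs | ⟨a₀, b₀, hs⟩
    · obtain ⟨w, huw, hvw⟩ := hs.exists_common ⟨a, hS.1⟩
      have h₁ := h.common_left w huw hvw
      have h₂ := h.common_right w huw hvw
      have h₃ := h.sum
      rw [Sym2.eq_swap] at h₂
      have haw : a ≠ w := by rintro rfl; exact ha.2.1 hvw
      have hwb : w ≠ b := by rintro rfl; exact hb.2.1 huw
      refine .of_four ha.1.symm huw hvw.symm hb.1 haw ha.2.2 hab h.adj.ne hb.2.2.symm hwb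
        (by omega)
    · have h₁ := h.left_mem a₀ hs.left hs.left_mem
      have h₂ := h.cross a₀ b₀ hs.left hs.right
      have h₃ := h.right_mem b₀ hs.right hs.right_mem
      rw [Sym2.eq_swap] at h₃
      have hab₀ : a ≠ b₀ := by rintro rfl; exact hs.right.2.1 ha.1
      have hba₀ : a₀ ≠ b := by rintro rfl; exact hb.2.1 hs.left.1
      by_cases haa : a = a₀
      · subst haa
        have hbb : b₀ ≠ b := by rintro rfl; exact hadj hs.adj
        exact .of_three hs.adj hs.right.1.symm hb.1 hs.left.2.2 hab hbb (by omega)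
      by_cases hbb : b = b₀
      · subst hbb
        exact .of_three ha.1.symm hs.left.1 hs.adj haa hab hs.right.2.2.symm (by omega)
      refine ⟨⟨.cons ha.1.symm (.cons hs.left.1 (.cons hs.adj (.cons hs.right.1.symm
        (.cons hb.1 .nil)))), ?_⟩, s(a₀, b₀), by simp, ?_⟩
      · simp [ha.1.ne', hs.left.1.ne, hs.adj.ne, hs.right.1.ne', hb.1.ne, haa, hab₀, ha.2.2, hab,
          hs.right.2.2.symm, h.adj.ne, hb.2.2.symm, hs.left.2.2, hba₀, Ne.symm hbb]
      · simp [hua, h₁, h₂, h₃, hvb]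
  · refine .of_three ha.1.symm h.adj hb.1 ha.2.2 hab hb.2.2.symm ?_
    have h₁ := h.left_mem a ha
    have h₂ := h.left_notMem a ha
    have h₃ := h.right_mem b hb
    have h₄ := h.right_notMem b hb
    rw [Sym2.eq_swap] at h₁ h₂
    by_cases a ∈ S <;> by_cases b ∈ S <;> simp_all

theorem joined_of_exists (h : IsDominatingEdgeColoring G c u v S α β) {a a' w : V}
    (ha : IsPrivateNeighbor G u v a) (ha' : IsPrivateNeighbor G u v a') (hne : a ≠ a')
    (hS : a ∉ S) (hS' : a' ∉ S) (hw : w ≠ u) (haw : G.Adj a w) :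
    ConflictFreeJoined G c a a' := by
  by_cases hadj : G.Adj a a'
  · exact .of_adj hadj
  have hwa' : w ≠ a' := by rintro rfl; exact hadj haw
  have hwv : w ≠ v := by rintro rfl; exact ha.2.1 haw.symm
  have h₀ := h.color_edge
  have h₁ := h.left_notMem a' ha' hS'
  by_cases huw : G.Adj u w
  · have h₂ := h.inner_left a w ha.1 huw ha.2.2 hwv
    exact .of_three haw huw.symm ha'.1 ha.1.ne' hne hwa' (by omega)
  have hpw : IsPrivateNeighbor G v u w := ⟨(h.dom w hw hwv).resolve_left huw, huw, hw⟩
  have h₂ := h.cross a w ha hpw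
  have hstd (hwS : w ∉ S) : ConflictFreeJoined G c a a' := by
    have h₃ := h.right_notMem w hpw hwS
    rw [Sym2.eq_swap] at h₀ h₃
    exact .of_four haw hpw.1.symm h.adj.symm ha'.1 ha.2.2 ha.1.ne' hne hw hwa' ha'.2.2.symm
      (by omega)
  rcases h.selection with hs | ⟨a₀, b₀, hs⟩
  · refine hstd fun hwS ↦ ?_
    rcases hs.pendant w hwS a haw.symm with rfl | rfl
    exacts [ha.1.ne rfl, ha.2.2 rfl]
  · by_cases hwb : w = b₀
    · subst hwb
      have h₃ := h.left_mem a₀ hs.left hs.left_mem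
      have h₄ := h.cross a₀ w hs.left hs.right
      rw [Sym2.eq_swap] at h₃ h₄
      have haa₀ : a ≠ a₀ := by rintro rfl; exact hS hs.left_mem
      have ha₀a' : a₀ ≠ a' := by rintro rfl; exact hS' hs.left_mem
      exact .of_four haw hs.adj.symm hs.left.1.symm ha'.1 haa₀ ha.1.ne' hne hw hwa' ha₀a'
        (by omega)
    · refine hstd fun hwS ↦ ?_
      have hwa₀ : w ≠ a₀ := by rintro rfl; exact huw hs.left.1
      rcases hs.pendant w hwS hwa₀ hwb a haw.symm with rfl | rfl
      exacts [ha.1.ne rfl, ha.2.2 rfl]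

theorem joined_of_mem_cross (h : IsDominatingEdgeColoring G c u v S α β) {a₀ b₀ a : V}
    (hs : IsCrossSelection G u v S a₀ b₀) (ha : IsPrivateNeighbor G u v a) (hne : a₀ ≠ a)
    (hS : a ∈ S) : ConflictFreeJoined G c a₀ a := by
  have h₀ := h.color_edge
  have h₁ := h.left_mem a ha hS
  have h₂ := h.cross a₀ b₀ hs.left hs.right
  have h₃ := h.right_mem b₀ hs.right hs.right_mem
  rw [Sym2.eq_swap] at h₀ h₃
  have hba : b₀ ≠ a := by rintro rfl; exact hs.right.2.1 ha.1
  exact .of_four hs.adj hs.right.1.symm h.adj.symm ha.1 hs.left.2.2 hs.left.1.ne' hne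
    hs.right.2.2 hba ha.2.2.symm (by omega)

theorem joined_private_same (h : IsDominatingEdgeColoring G c u v S α β) {a a' : V}
    (ha : IsPrivateNeighbor G u v a) (ha' : IsPrivateNeighbor G u v a') (hne : a ≠ a') :
    ConflictFreeJoined G c a a' := by
  have h₁ := h.left_mem a ha
  have h₂ := h.left_notMem a ha
  have h₃ := h.left_mem a' ha'
  have h₄ := h.left_notMem a' ha'
  by_cases hS : a ∈ S <;> by_cases hS' : a' ∈ S
  · rcases h.selection with hs | ⟨a₀, b₀, hs⟩
    · exact absurd (hs.eq_left a hS a' hS' ha.1 ha'.1) hne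
    · by_cases haa : a = a₀
      · subst haa
        exact h.joined_of_mem_cross hs ha' hne hS'
      by_cases haa' : a' = a₀
      · subst haa'
        exact (h.joined_of_mem_cross hs ha (Ne.symm hne) hS).symm
      exact absurd (hs.eq_left a hS a' hS' haa haa' ha.1 ha'.1) hne
  · rw [Sym2.eq_swap] at h₁
    exact .of_two ha.1.symm ha'.1 hne (by simp_all)
  · rw [Sym2.eq_swap] at h₂
    exact .of_two ha.1.symm ha'.1 hne (by simp_all)
  · rcases h.exists_left a a' ha ha' hne hS hS' with ⟨w, hw, haw⟩ | ⟨w, hw, haw⟩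
    · exact h.joined_of_exists ha ha' hne hS hS' hw haw
    · exact (h.joined_of_exists ha' ha hne.symm hS' hS hw haw).symm

theorem joined_private_common (h : IsDominatingEdgeColoring G c u v S α β) {a w : V}
    (ha : IsPrivateNeighbor G u v a) (hu : G.Adj u w) (hv : G.Adj v w) :
    ConflictFreeJoined G c a w := by
  have h₀ := h.color_edge
  have h₁ := h.left_mem a ha
  have h₂ := h.left_notMem a ha
  rw [Sym2.eq_swap] at h₁ h₂
  have h₃ := h.common_left w hu hv
  have h₄ := h.common_right w hu hv
  have h₅ := h.sum
  have hne : a ≠ w := by rintro rfl; exact ha.2.1 hv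
  by_cases hc : c s(a, u) = c s(u, w)
  · refine .of_three ha.1.symm h.adj hv ha.2.2 hne hu.ne ?_
    by_cases hS : a ∈ S
    · have := h₁ hS
      omega
    · have := h₂ hS
      omega
  · exact .of_two ha.1.symm hu hne hc

theorem joined_common_common (h : IsDominatingEdgeColoring G c u v S α β) {w w' : V}
    (hu : G.Adj u w) (hv : G.Adj v w) (hu' : G.Adj u w') (hv' : G.Adj v w') (hne : w ≠ w') :
    ConflictFreeJoined G c w w' := by
  have h₀ := h.color_edge
  have h₁ := h.common_left w hu hv
  have h₂ := h.common_right w' hu' hv'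
  have h₃ := h.sum
  rw [Sym2.eq_swap] at h₁
  exact .of_three hu.symm h.adj hv' hv.ne' hne hu'.ne (by omega)

theorem isCFCColoring (h : IsDominatingEdgeColoring G c u v S α β) : IsCFCColoring G c := by
  have hcases (x : V) : x = u ∨ x = v ∨ IsPrivateNeighbor G u v x ∨ IsPrivateNeighbor G v u x ∨
      (G.Adj u x ∧ G.Adj v x) := by
    have := h.dom x
    unfold IsPrivateNeighbor
    tauto
  intro x y hne
  change ConflictFreeJoined G c x y
  rcases hcases x with rfl | rfl | hx | hx | hx <;> rcases hcases y with rfl | rfl | hy | hy | hy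
  · exact absurd rfl hne
  · exact .of_adj h.adj
  · exact .of_adj hy.1
  · exact h.joined_endpoint_private hy
  · exact .of_adj hy.1
  · exact .of_adj h.adj.symm
  · exact absurd rfl hne
  · exact h.swap.joined_endpoint_private hy
  · exact .of_adj hy.1
  · exact .of_adj hy.2
  · exact .of_adj hx.1.symm
  · exact (h.swap.joined_endpoint_private hx).symm
  · exact h.joined_private_same hx hy hne
  · exact h.joined_private_private hx hy
  · exact h.joined_private_common hx hy.1 hy.2
  · exact (h.joined_endpoint_private hx).symm
  · exact .of_adj hx.1.symm
  · exact (h.joined_private_private hy hx).symm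
  · exact h.swap.joined_private_same hx hy hne
  · exact h.swap.joined_private_common hx hy.2 hy.1
  · exact .of_adj hx.1.symm
  · exact .of_adj hx.2.symm
  · exact (h.joined_private_common hy hx.1 hx.2).symm
  · exact (h.swap.joined_private_common hy hx.2 hx.1).symm
  · exact h.joined_common_common hx.1 hx.2 hy.1 hy.2 hne

end IsDominatingEdgeColoring

open Classical in
/-- A coloring with colors `0` and `1` adapted to a dominating edge `uv`. -/
noncomputable def dominatingEdgeColoring (G : SimpleGraph V) (u v : V) (S : Set V)
    (e : Sym2 V) : ℕ :=
  if e = s(u, v) ∨ (∃ x ∈ S, e = s(u, x) ∨ e = s(v, x)) ∨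
    (∃ x y, e = s(x, y) ∧ G.Adj u x ∧ G.Adj u y) ∨
    (∃ x y, e = s(x, y) ∧ G.Adj v x ∧ G.Adj v y ∧ x ≠ u ∧ y ≠ u) then 0 else 1

theorem isDominatingEdgeColoring_dominatingEdgeColoring (adj : G.Adj u v)
    (dom : ∀ x, x ≠ u → x ≠ v → G.Adj u x ∨ G.Adj v x)
    (hS : ∀ x ∈ S, G.Adj u x → ¬ G.Adj v x)
    (exists_left : ∀ x y, IsPrivateNeighbor G u v x → IsPrivateNeighbor G u v y → x ≠ y → x ∉ S →
      y ∉ S → (∃ w, w ≠ u ∧ G.Adj x w) ∨ ∃ w, w ≠ u ∧ G.Adj y w)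
    (exists_right : ∀ x y, IsPrivateNeighbor G v u x → IsPrivateNeighbor G v u y → x ≠ y → x ∉ S →
      y ∉ S → (∃ w, w ≠ v ∧ G.Adj x w) ∨ ∃ w, w ≠ v ∧ G.Adj y w)
    (selection : IsPendantSelection G u v S ∨ ∃ a b, IsCrossSelection G u v S a b) :
    IsDominatingEdgeColoring G (dominatingEdgeColoring G u v S) u v S 1 0 where
  adj := adj
  dom := dom
  color_edge := if_pos (.inl rfl)
  sum := rfl
  left_mem x hx hxS := if_pos (.inr (.inl ⟨x, hxS, .inl rfl⟩))
  left_notMem x hx hxS := by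
    have := adj.ne
    obtain ⟨h1, h2, h3⟩ := hx
    have := G.irrefl (v := u)
    refine if_neg ?_
    rintro (h | ⟨y, hy, h | h⟩ | ⟨y, z, h, hy, hz⟩ | ⟨y, z, h, hy, hz, hyu, hzu⟩) <;>
      rw [Sym2.eq_iff] at h <;> grind
  right_mem x hx hxS := if_pos (.inr (.inl ⟨x, hxS, .inr rfl⟩))
  right_notMem x hx hxS := by
    have := adj.ne
    obtain ⟨h1, h2, h3⟩ := hx
    have := G.irrefl (v := v)
    refine if_neg ?_
    rintro (h | ⟨y, hy, h | h⟩ | ⟨y, z, h, hy, hz⟩ | ⟨y, z, h, hy, hz, hyu, hzu⟩) <;>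
      rw [Sym2.eq_iff] at h <;> grind
  common_left x hu hv := by
    have := adj.ne
    have h1 := hv.ne'
    have h2 : x ∉ S := fun h ↦ hS x h hu hv
    have := G.irrefl (v := u)
    refine if_neg ?_
    rintro (h | ⟨y, hy, h | h⟩ | ⟨y, z, h, hy, hz⟩ | ⟨y, z, h, hy, hz, hyu, hzu⟩) <;>
      rw [Sym2.eq_iff] at h <;> grind
  common_right x hu hv := if_pos (.inr (.inr (.inl ⟨v, x, rfl, adj, hu⟩)))
  cross x y hx hy := by
    have h1 := hx.1.ne'
    have h2 := hy.1.ne'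
    obtain ⟨h3, h4, h5⟩ := hx
    obtain ⟨h6, h7, h8⟩ := hy
    refine if_neg ?_
    rintro (h | ⟨y, hy, h | h⟩ | ⟨y, z, h, hy, hz⟩ | ⟨y, z, h, hy, hz, hyu, hzu⟩) <;>
      rw [Sym2.eq_iff] at h <;> rcases h with ⟨rfl, rfl⟩ | ⟨rfl, rfl⟩ <;> simp_all
  inner_left x y hx hy _ _ := if_pos (.inr (.inr (.inl ⟨x, y, rfl, hx, hy⟩)))
  inner_right x y hx hy hxu hyu := if_pos (.inr (.inr (.inr ⟨x, y, rfl, hx, hy, hxu, hyu⟩)))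
  exists_left := exists_left
  exists_right := exists_right
  selection := selection

theorem isBridge_of_forall_adj_eq {x : V} (hne : x ≠ u) (h : ∀ w, G.Adj x w → w = u) :
    G.IsBridge s(u, x) := by
  rw [Sym2.eq_swap, isBridge_iff]
  rintro ⟨p⟩
  cases p with
  | nil => exact hne rfl
  | cons hadj _ =>
    rw [deleteEdges_adj] at hadj
    obtain rfl := h _ hadj.1
    exact hadj.2 rfl

theorem isBridge_of_no_cross (hne : u ≠ v) (hcommon : ∀ w, G.Adj u w → ¬ G.Adj v w)
    (hdom : ∀ x, x ≠ u → x ≠ v → G.Adj u x ∨ G.Adj v x)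
    (hcross : ∀ x y, IsPrivateNeighbor G u v x → IsPrivateNeighbor G v u y → ¬ G.Adj x y) :
    G.IsBridge s(u, v) := by
  rw [isBridge_iff]
  rintro ⟨p⟩
  suffices h : ∀ x y, (G.deleteEdges {s(u, v)}).Walk x y →
      (x = u ∨ G.Adj u x ∧ x ≠ v) → (y = u ∨ G.Adj u y ∧ y ≠ v) by
    rcases h u v p (.inl rfl) with h | h
    exacts [hne h.symm, h.2 rfl]
  intro x y q
  induction q with
  | nil => exact id
  | @cons x y z hadj q ih =>
    rw [deleteEdges_adj] at hadj
    intro hx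
    refine ih ?_
    by_contra! hy
    rcases hx with rfl | hx
    · have := hy.2 hadj.1
      subst this
      exact hadj.2 rfl
    · by_cases hyv : y = v
      · subst hyv
        exact hcommon x hx.1 hadj.1.symm
      · have huy : ¬ G.Adj u y := fun h ↦ hyv (hy.2 h)
        exact hcross x y ⟨hx.1, hcommon x hx.1, hx.2⟩
          ⟨(hdom y hy.1 hyv).resolve_left huy, huy, hy.1⟩ hadj.1

theorem exists_subsingleton_diff_subsingleton {T : Set V} [Finite V] (hT : T.ncard ≤ 2) :
    ∃ s ⊆ T, s.Subsingleton ∧ (T \ s).Subsingleton := by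
  rcases T.eq_empty_or_nonempty with rfl | ⟨x, hx⟩
  · exact ⟨∅, by simp⟩
  · refine ⟨{x}, by simpa using hx, by simp, ?_⟩
    have := Set.ncard_sdiff_singleton_of_mem hx
    intro a ha b hb
    exact (Set.ncard_le_one).mp (by omega) a ha b hb

/-- The leaves adjacent to `u`. -/
def leavesAt (G : SimpleGraph V) (u : V) : Set V :=
  {x | G.Adj u x ∧ ∀ w, G.Adj x w → w = u}

theorem ncard_leavesAt_le [Finite V] :
    (leavesAt G u).ncard ≤ {e : Sym2 V | G.IsBridge e ∧ u ∈ e}.ncard := by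
  refine Set.ncard_le_ncard_of_injOn (fun x ↦ s(u, x)) ?_ ?_
  · exact fun x hx ↦ ⟨isBridge_of_forall_adj_eq hx.1.ne' hx.2, by simp⟩
  · exact fun x _ y _ h ↦ Sym2.congr_right.mp h

theorem exists_adj_ne_of_isBridge [Finite V] (hbr : {e : Sym2 V | G.IsBridge e ∧ u ∈ e}.ncard ≤ 2)
    (huv : G.IsBridge s(u, v)) {x y : V} (hx : IsPrivateNeighbor G u v x)
    (hy : IsPrivateNeighbor G u v y) (hne : x ≠ y) :
    (∃ w, w ≠ u ∧ G.Adj x w) ∨ ∃ w, w ≠ u ∧ G.Adj y w := by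
  by_contra! h
  have hlt : 2 < {e : Sym2 V | G.IsBridge e ∧ u ∈ e}.ncard := by
    rw [Set.two_lt_ncard_iff]
    refine ⟨s(u, v), s(u, x), s(u, y), ⟨huv, by simp⟩,
      ⟨isBridge_of_forall_adj_eq hx.1.ne' fun w hw ↦ ?_, by simp⟩,
      ⟨isBridge_of_forall_adj_eq hy.1.ne' fun w hw ↦ ?_, by simp⟩, ?_, ?_, ?_⟩
    · by_contra hw'
      exact h.1 w hw' hw
    · by_contra hw'
      exact h.2 w hw' hw
    · exact fun h ↦ hx.2.2 (Sym2.congr_right.mp h).symm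
    · exact fun h ↦ hy.2.2 (Sym2.congr_right.mp h).symm
    · exact fun h ↦ hne (Sym2.congr_right.mp h)
  omega

theorem exists_adj_ne_of_subsingleton {s : Set V} (hs : (leavesAt G u \ s).Subsingleton)
    (hsS : s ⊆ S) (x y : V) (hx : IsPrivateNeighbor G u v x) (hy : IsPrivateNeighbor G u v y)
    (hne : x ≠ y) (hxS : x ∉ S) (hyS : y ∉ S) :
    (∃ w, w ≠ u ∧ G.Adj x w) ∨ ∃ w, w ≠ u ∧ G.Adj y w := by
  by_contra! h
  refine hne (hs ⟨⟨hx.1, fun w hw ↦ ?_⟩, fun h ↦ hxS (hsS h)⟩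
    ⟨⟨hy.1, fun w hw ↦ ?_⟩, fun h ↦ hyS (hsS h)⟩)
  · by_contra hw'
    exact h.1 w hw' hw
  · by_contra hw'
    exact h.2 w hw' hw

theorem exists_isDominatingEdgeColoring [Finite V] (adj : G.Adj u v)
    (dom : ∀ x, x ≠ u → x ≠ v → G.Adj u x ∨ G.Adj v x)
    (hbr : ∀ v : V, {e : Sym2 V | G.IsBridge e ∧ v ∈ e}.ncard ≤ 2) :
    ∃ S, IsDominatingEdgeColoring G (dominatingEdgeColoring G u v S) u v S 1 0 := by
  obtain ⟨s, hsL, hs, hs'⟩ := exists_subsingleton_diff_subsingleton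
    (ncard_leavesAt_le.trans (hbr u))
  obtain ⟨t, htL, ht, ht'⟩ := exists_subsingleton_diff_subsingleton
    (ncard_leavesAt_le.trans (hbr v))
  have hsv (x) (hx : x ∈ s) : ¬ G.Adj v x := fun h ↦ by
    exact adj.ne ((hsL hx).2 v h.symm).symm
  have htu (x) (hx : x ∈ t) : ¬ G.Adj u x := fun h ↦ by
    exact adj.ne ((htL hx).2 u h.symm)
  by_cases hcommon : ∃ w, G.Adj u w ∧ G.Adj v w
  · refine ⟨s ∪ t, isDominatingEdgeColoring_dominatingEdgeColoring adj dom ?_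
      (exists_adj_ne_of_subsingleton hs' Set.subset_union_left)
      (exists_adj_ne_of_subsingleton ht' Set.subset_union_right) (.inl ⟨?_, ?_, ?_, ?_⟩)⟩
    · rintro x (hx | hx) hu
      exacts [hsv x hx, absurd hu (htu x hx)]
    · rintro x (hx | hx) y (hy | hy) hux huy
      exacts [hs hx hy, absurd huy (htu y hy), absurd hux (htu x hx), absurd hux (htu x hx)]
    · rintro x (hx | hx) y (hy | hy) hvx hvy
      exacts [absurd hvx (hsv x hx), absurd hvx (hsv x hx), absurd hvy (hsv y hy), ht hx hy]
    · rintro x (hx | hx) w hw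
      exacts [.inl ((hsL hx).2 w hw), .inr ((htL hx).2 w hw)]
    · exact fun _ ↦ hcommon
  push Not at hcommon
  by_cases hcross : ∃ a b, IsPrivateNeighbor G u v a ∧ IsPrivateNeighbor G v u b ∧ G.Adj a b
  · obtain ⟨a, b, ha, hb, hab⟩ := hcross
    refine ⟨{a, b} ∪ (s ∪ t), isDominatingEdgeColoring_dominatingEdgeColoring adj dom
      (fun x _ ↦ hcommon x)
      (exists_adj_ne_of_subsingleton hs' (Set.subset_union_left.trans Set.subset_union_right))
      (exists_adj_ne_of_subsingleton ht' (Set.subset_union_right.trans Set.subset_union_right))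
      (.inr ⟨a, b, hcommon, ha, hb, hab, by simp, by simp, ?_, ?_, ?_⟩)⟩
    · have hmem (x) (hx : x ∈ {a, b} ∪ (s ∪ t)) (hxa : x ≠ a) (hux : G.Adj u x) : x ∈ s := by
        rcases hx with (rfl | rfl) | hx | hx
        exacts [absurd rfl hxa, absurd hux hb.2.1, hx, absurd hux (htu x hx)]
      exact fun x hx y hy hxa hya hux huy ↦ hs (hmem x hx hxa hux) (hmem y hy hya huy)
    · have hmem (x) (hx : x ∈ {a, b} ∪ (s ∪ t)) (hxb : x ≠ b) (hvx : G.Adj v x) : x ∈ t := by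
        rcases hx with (rfl | rfl) | hx | hx
        exacts [absurd hvx ha.2.1, absurd rfl hxb, absurd hvx (hsv x hx), hx]
      exact fun x hx y hy hxb hyb hvx hvy ↦ ht (hmem x hx hxb hvx) (hmem y hy hyb hvy)
    · rintro x ((rfl | rfl) | hx | hx) hxa hxb w hw
      exacts [absurd rfl hxa, absurd rfl hxb, .inl ((hsL hx).2 w hw), .inr ((htL hx).2 w hw)]
  · push Not at hcross
    have huv := isBridge_of_no_cross adj.ne hcommon dom hcross
    refine ⟨∅, isDominatingEdgeColoring_dominatingEdgeColoring adj dom (by simp)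
      (fun x y hx hy hne _ _ ↦ exists_adj_ne_of_isBridge (hbr u) huv hx hy hne)
      (fun x y hx hy hne _ _ ↦ exists_adj_ne_of_isBridge (hbr v) (Sym2.eq_swap ▸ huv) hx hy hne)
      (.inl ⟨by simp, by simp, by simp, by simp⟩)⟩

theorem IsCFCColoring.ne_of_isBridge (hc : IsCFCColoring G c) (hG : G.Connected) {a b : V}
    (ha : G.IsBridge s(v, a)) (hb : G.IsBridge s(v, b)) (hab : a ≠ b) :
    c s(v, a) ≠ c s(v, b) := by
  intro heq
  obtain ⟨⟨p, hp⟩, e, he, huniq⟩ := hc a b hab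
  have hva := ha.reachable_iff_adj.mp (hG v a)
  have hvb := hb.reachable_iff_adj.mp (hG v b)
  have hpa : s(a, v) ∈ p.edges := by
    have := isBridge_iff_forall_walk_mem_edges.mp ha (.cons hvb p.reverse)
    simpa [hab, hvb.ne, hvb.ne', hva.ne, hva.ne', Sym2.eq_swap (a := v) (b := a)] using this
  have hpb : s(v, b) ∈ p.edges := by
    have := isBridge_iff_forall_walk_mem_edges.mp hb (.cons hva p)
    simpa [hab.symm, hvb.ne, hvb.ne', hva.ne, hva.ne'] using this
  have hsnd := hp.eq_snd_of_mem_edges hpa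
  cases p with
  | nil => simp at hpa
  | cons h q =>
    rw [Walk.snd_cons] at hsnd
    subst hsnd
    have hq := hp.of_cons
    have hqb : s(v, b) ∈ q.edges := by simpa [hab.symm, hva.ne, hva.ne'] using hpb
    have hsnd := hq.eq_snd_of_mem_edges hqb
    cases q with
    | nil => simp at hqb
    | cons h' r =>
      rw [Walk.snd_cons] at hsnd
      subst hsnd
      obtain rfl := Walk.eq_nil_iff_nil.mpr (Walk.isPath_iff_nil.mp hq.of_cons)
      have hcol : c s(a, v) = c s(v, b) := by rw [Sym2.eq_swap, heq]
      simp only [Walk.edges_cons, Walk.edges_nil, List.mem_cons, List.not_mem_nil, or_false]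
        at he huniq
      have hne : s(a, v) ≠ s(v, b) := by simp [hva.ne', hab]
      rcases he with rfl | rfl
      · exact hne (huniq _ (.inr rfl) hcol.symm).symm
      · exact hne (huniq _ (.inl rfl) hcol)

theorem IsCFCColoring.ncard_bridges_le (hc : IsCFCColoring G c) (hG : G.Connected)
    [Finite V] (hc2 : ∀ e ∈ G.edgeSet, c e < 2) (v : V) :
    {e : Sym2 V | G.IsBridge e ∧ v ∈ e}.ncard ≤ 2 := by
  by_contra! h
  obtain ⟨e₁, e₂, e₃, ⟨h₁, hv₁⟩, ⟨h₂, hv₂⟩, ⟨h₃, hv₃⟩, h₁₂, h₁₃, h₂₃⟩ := (Set.two_lt_ncard_iff).mp h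
  obtain ⟨x₁, rfl⟩ := hv₁
  obtain ⟨x₂, rfl⟩ := hv₂
  obtain ⟨x₃, rfl⟩ := hv₃
  have := hc2 s(v, x₁) (h₁.reachable_iff_adj.mp (hG v x₁))
  have := hc2 s(v, x₂) (h₂.reachable_iff_adj.mp (hG v x₂))
  have := hc2 s(v, x₃) (h₃.reachable_iff_adj.mp (hG v x₃))
  have := hc.ne_of_isBridge hG h₁ h₂ (by rintro rfl; exact h₁₂ rfl)
  have := hc.ne_of_isBridge hG h₁ h₃ (by rintro rfl; exact h₁₃ rfl)
  have := hc.ne_of_isBridge hG h₂ h₃ (by rintro rfl; exact h₂₃ rfl)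
  omega

theorem IsCFCColoring.eq_top_of_forall_eq (hc : IsCFCColoring G c)
    (h1 : ∀ e ∈ G.edgeSet, c e < 1) : G = ⊤ := by
  rw [eq_top_iff]
  intro x y hxy
  obtain ⟨⟨p, hp⟩, e, he, huniq⟩ := hc x y hxy
  have hall : ∀ e' ∈ p.edges, e' = e := fun e' he' ↦ huniq e' he' <| by
    have := h1 _ (p.edges_subset_edgeSet he)
    have := h1 _ (p.edges_subset_edgeSet he')
    omega
  have hnodup := hp.isTrail.edges_nodup
  cases p with
  | nil => exact absurd rfl hxy
  | cons h q =>
    cases q with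
    | nil => exact h
    | cons h' r =>
      simp only [Walk.edges_cons, List.nodup_cons, List.mem_cons, not_or] at hnodup
      exact absurd ((hall _ (by simp)).trans (hall _ (by simp)).symm) hnodup.1.1

theorem exists_dominating_edge [Finite V] (hGc : Gᶜ.Connected) (hdiam : 3 ≤ Gᶜ.diam) :
    ∃ u v, G.Adj u v ∧ ∀ x, x ≠ u → x ≠ v → G.Adj u x ∨ G.Adj v x := by
  have := hGc.nonempty
  obtain ⟨u, v, huv⟩ := Gᶜ.exists_dist_eq_diam
  have hne : u ≠ v := by
    rintro rfl
    rw [dist_self] at huv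
    omega
  refine ⟨u, v, ?_, fun x hxu hxv ↦ ?_⟩
  · by_contra h
    have h' : Gᶜ.Adj u v := ⟨hne, h⟩
    have := dist_le h'.toWalk
    simp at this
    omega
  · by_contra! h
    have h₁ : Gᶜ.Adj u x := ⟨hxu.symm, h.1⟩
    have h₂ : Gᶜ.Adj x v := ⟨hxv, fun h' ↦ h.2 h'.symm⟩
    have := dist_le (.cons h₁ (.cons h₂ .nil))
    simp at this
    omega

end

/-- For a connected noncomplete graph G whose complement is connected with diameter
at least 3: cfc(G) = 2 iff every vertex of G is incident with at most two cut-edges. -/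
theorem cfcNum_eq_two_iff_cutEdges {V : Type*} [Fintype V] (G : SimpleGraph V)
    (hG : G.Connected) (hne : G ≠ ⊤) (hGc : Gᶜ.Connected) (hdiam : 3 ≤ Gᶜ.diam) :
    cfcNum G = 2 ↔ ∀ v : V, {e : Sym2 V | G.IsBridge e ∧ v ∈ e}.ncard ≤ 2 := by
  constructor
  · intro h v
    obtain ⟨c, hc2, hc⟩ := Nat.sInf_mem (Nat.nonempty_of_pos_sInf (by
      rw [cfcNum] at h
      omega : 0 < sInf {k | ∃ c : Sym2 V → ℕ, (∀ e ∈ G.edgeSet, c e < k) ∧ IsCFCColoring G c}))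
    rw [← cfcNum, h] at hc2
    exact hc.ncard_bridges_le hG hc2 v
  · intro hbr
    obtain ⟨u, v, adj, dom⟩ := exists_dominating_edge hGc hdiam
    obtain ⟨S, hS⟩ := exists_isDominatingEdgeColoring adj dom hbr
    refine le_antisymm (Nat.sInf_le ⟨_, fun e _ ↦ ?_, hS.isCFCColoring⟩)
      (le_csInf ⟨2, _, fun e _ ↦ ?_, hS.isCFCColoring⟩ ?_)
    · unfold dominatingEdgeColoring
      split_ifs <;> omega
    · unfold dominatingEdgeColoring
      split_ifs <;> omega
    · rintro k ⟨c, hck, hc⟩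
      by_contra! hk
      exact hne (hc.eq_top_of_forall_eq fun e he ↦ by have := hck e he; omega)
end

section
/- Let G be a simple graph on n ≥ 4 vertices such that both G and its complement Ḡ are connected and both have edge-connectivity 1 (i.e., each of G and Ḡ has a cut-edge). Then at least one of G and Ḡ has conflict-free connection number 2, i.e., cfc(G) = 2 or cfc(Ḡ) = 2. -/
open SimpleGraph

section ConflictFree

variable {V : Type*} {G : SimpleGraph V} {c : Sym2 V → ℕ} {u v w t : V}

/-- The vertices `u` and `v` are joined by a conflict-free path. -/
def HasCFPath (G : SimpleGraph V) (c : Sym2 V → ℕ) (u v : V) : Prop :=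
  ∃ p : G.Path u v, ∃ e ∈ (p.1).edges, ∀ e' ∈ (p.1).edges, c e' = c e → e' = e

theorem HasCFPath.symm (h : HasCFPath G c u v) : HasCFPath G c v u := by
  obtain ⟨p, e, he, h⟩ := h
  exact ⟨p.reverse, e, by simpa using he, fun e' he' => h e' (by simpa using he')⟩

theorem hasCFPath_of_adj (h : G.Adj u v) : HasCFPath G c u v :=
  ⟨Path.singleton h, s(u, v), by simp [Path.singleton], by simp [Path.singleton]⟩

theorem hasCFPath_of_adj_adj (h₁ : G.Adj u w) (h₂ : G.Adj w v) (huv : u ≠ v)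
    (hc : c s(u, w) ≠ c s(w, v)) : HasCFPath G c u v :=
  ⟨⟨.cons h₁ (.cons h₂ .nil), by simp [Walk.isPath_def, h₁.ne, h₂.ne, huv]⟩,
    s(u, w), by simp, by simp [hc.symm]⟩

theorem hasCFPath_of_first_unique (h₁ : G.Adj u w) (h₂ : G.Adj w t) (h₃ : G.Adj t v)
    (hut : u ≠ t) (huv : u ≠ v) (hwv : w ≠ v)
    (hc₁ : c s(w, t) ≠ c s(u, w)) (hc₂ : c s(t, v) ≠ c s(u, w)) : HasCFPath G c u v :=
  ⟨⟨.cons h₁ (.cons h₂ (.cons h₃ .nil)),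
    by simp [Walk.isPath_def, h₁.ne, h₂.ne, h₃.ne, huv, hut, hwv]⟩,
    s(u, w), by simp, by simp [hc₁, hc₂]⟩

theorem hasCFPath_of_middle_unique (h₁ : G.Adj u w) (h₂ : G.Adj w t) (h₃ : G.Adj t v)
    (hut : u ≠ t) (huv : u ≠ v) (hwv : w ≠ v)
    (hc₁ : c s(u, w) ≠ c s(w, t)) (hc₂ : c s(t, v) ≠ c s(w, t)) : HasCFPath G c u v :=
  ⟨⟨.cons h₁ (.cons h₂ (.cons h₃ .nil)),
    by simp [Walk.isPath_def, h₁.ne, h₂.ne, h₃.ne, huv, hut, hwv]⟩,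
    s(w, t), by simp, by simp [hc₁, hc₂]⟩

theorem cfcNum_eq_two_of_coloring (huv : u ≠ v) (hna : ¬G.Adj u v)
    (hlt : ∀ e, c e < 2) (hc : IsCFCColoring G c) : cfcNum G = 2 := by
  refine le_antisymm (Nat.sInf_le ⟨c, fun e _ => hlt e, hc⟩)
    (le_csInf ⟨2, c, fun e _ => hlt e, hc⟩ ?_)
  rintro k ⟨d, hd, hcf⟩
  by_contra! hk
  have hd0 : ∀ e ∈ G.edgeSet, d e = 0 := fun e he => by have := hd e he; omega
  obtain ⟨⟨p, hp⟩, e, he, h⟩ := hcf u v huv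
  have hall : ∀ e' ∈ p.edges, e' = e := fun e' he' => h e' he' <| by
    rw [hd0 _ (p.edges_subset_edgeSet he'), hd0 _ (p.edges_subset_edgeSet he)]
  cases p with
  | nil => exact huv rfl
  | cons h₁ q =>
    cases q with
    | nil => exact hna h₁
    | cons h₂ r =>
      have hnd := hp.isTrail.edges_nodup
      have e₁ := hall _ (List.mem_cons_self)
      have e₂ := hall _ (List.mem_cons_of_mem _ List.mem_cons_self)
      simp only [Walk.edges_cons, List.nodup_cons] at hnd
      exact hnd.1 (List.mem_cons.2 (.inl (e₁.trans e₂.symm)))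

/-- If every vertex other than `x`, `y`, `z` has a neighbor besides `z`, then giving the edges
at `z` a color of their own is a conflict-free connection coloring. -/
theorem cfcNum_eq_two_of_leaf {x y z : V} (hx : ∀ v, G.Adj x v ↔ v = y)
    (hzx : z ≠ x) (hzy : z ≠ y) (hz : ∀ v, v ≠ x → v ≠ z → G.Adj z v)
    (hnb : ∀ a, a ≠ x → a ≠ y → a ≠ z → ∃ g, g ≠ z ∧ G.Adj a g) : cfcNum G = 2 := by
  classical
  have hxy : G.Adj x y := (hx y).2 rfl
  have hzy' : G.Adj z y := hz y hxy.ne' hzy.symm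
  refine cfcNum_eq_two_of_coloring (c := fun e => if z ∈ e then 1 else 0) hzx.symm
    (by simp [hx, hzy]) (fun e => by split_ifs <;> omega) ?_
  have hfromx : ∀ v, v ≠ x → HasCFPath G (fun e => if z ∈ e then 1 else 0) x v := by
    intro v hv
    by_cases hvy : v = y
    · subst hvy; exact hasCFPath_of_adj hxy
    by_cases hvz : v = z
    · subst hvz
      exact hasCFPath_of_adj_adj hxy hzy'.symm hv.symm (by simp [hzx, hzy])
    · exact hasCFPath_of_first_unique hxy hzy'.symm (hz v hv hvz) hzx.symm hv.symm
        (Ne.symm hvy) (by simp [hzx, hzy]) (by simp [hzx, hzy])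
  have hfar : ∀ u v, u ≠ v → ¬G.Adj u v → u ≠ x → v ≠ x → u ≠ z → v ≠ z → u ≠ y →
      HasCFPath G (fun e => if z ∈ e then 1 else 0) u v := by
    intro u v huv hna hux hvx huz hvz huy
    obtain ⟨g, hgz, hug⟩ := hnb u hux huy huz
    have hgx : g ≠ x := by
      rintro rfl
      exact huy ((hx u).1 hug.symm)
    have hgv : g ≠ v := by
      rintro rfl
      exact hna hug
    exact hasCFPath_of_first_unique hug (hz g hgx hgz).symm (hz v hvx hvz) huz huv hgv
      (by simp [huz.symm, hgz.symm]) (by simp [huz.symm, hgz.symm])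
  intro u v huv
  change HasCFPath G _ u v
  by_cases hux : u = x
  · subst hux; exact hfromx v huv.symm
  by_cases hvx : v = x
  · subst hvx; exact (hfromx u huv).symm
  by_cases hna : G.Adj u v
  · exact hasCFPath_of_adj hna
  have huz : u ≠ z := by
    rintro rfl
    exact hna (hz v hvx huv.symm)
  have hvz : v ≠ z := by
    rintro rfl
    exact hna (hz u hux huv).symm
  by_cases huy : u = y
  · exact (hfar v u huv.symm (fun h => hna h.symm) hvx hux hvz huz
      (fun h => huv (huy.trans h.symm))).symm
  · exact hfar u v huv hna hux hvx huz hvz huy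

/-- If `z` is a leaf at `x`, the vertex `x` misses only `y`, and some `a` misses only `z`, then
giving the edges at `x` other than `xz` a color of their own is a conflict-free connection
coloring. -/
theorem cfcNum_eq_two_of_leaf_of_hub {x y z a : V} (hzx : G.Adj z x) (hxy : x ≠ y)
    (hnxy : ¬G.Adj x y) (hx : ∀ v, v ≠ x → v ≠ y → G.Adj x v)
    (haz : a ≠ z) (hay : a ≠ y) (hzy : z ≠ y)
    (ha : ∀ v, v ≠ a → v ≠ z → G.Adj a v) : cfcNum G = 2 := by
  classical
  refine cfcNum_eq_two_of_coloring (c := fun e => if x ∈ e ∧ z ∉ e then 1 else 0) hxy hnxy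
    (fun e => by split_ifs <;> omega) ?_
  have hax : a ≠ x := by
    rintro rfl
    exact hnxy (ha y hxy.symm hzy.symm)
  have hya : G.Adj y a := (ha y hay.symm hzy.symm).symm
  have hxa : G.Adj x a := hx a hax hay
  have hfromz : ∀ v, v ≠ z → HasCFPath G (fun e => if x ∈ e ∧ z ∉ e then 1 else 0) z v := by
    intro v hv
    by_cases hvx : v = x
    · subst hvx; exact hasCFPath_of_adj hzx
    by_cases hvy : v = y
    · subst hvy
      exact hasCFPath_of_middle_unique hzx hxa hya.symm haz.symm hv.symm hxy
        (by simp [hzx.ne, haz.symm]) (by simp [hzx.ne, haz.symm, hax.symm, hxy])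
    · exact hasCFPath_of_adj_adj hzx (hx v hvx hvy) hv.symm (by simp [hzx.ne, hv.symm])
  have hfar : ∀ u v, u ≠ v → ¬G.Adj u v → u ≠ x → v ≠ y → u ≠ z → v ≠ z →
      HasCFPath G (fun e => if x ∈ e ∧ z ∉ e then 1 else 0) u v := by
    intro u v huv hna hux hvy huz hvz
    have hua : u ≠ a := by
      rintro rfl
      exact hna (ha v huv.symm hvz)
    have hva : v ≠ a := by
      rintro rfl
      exact hna (ha u huv huz).symm
    by_cases hvx : v = x
    · subst hvx
      exact hasCFPath_of_adj_adj (ha u hua huz).symm hxa.symm huv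
        (by simp [huv.symm, hax.symm, haz.symm, hzx.ne])
    · exact hasCFPath_of_first_unique (ha u hua huz).symm hxa.symm (hx v hvx hvy) hux huv
        hva.symm (by simp [Ne.symm hux, hax.symm, haz.symm, hzx.ne])
        (by simp [Ne.symm hux, hax.symm, hzx.ne, hvz.symm])
  intro u v huv
  change HasCFPath G _ u v
  by_cases huz : u = z
  · subst huz; exact hfromz v huv.symm
  by_cases hvz : v = z
  · subst hvz; exact (hfromz u huv).symm
  by_cases hna : G.Adj u v
  · exact hasCFPath_of_adj hna
  by_cases h : u ≠ x ∧ v ≠ y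
  · exact hfar u v huv hna h.1 h.2 huz hvz
  · refine (hfar v u huv.symm (fun h => hna h.symm) ?_ ?_ hvz huz).symm
    · rintro rfl
      exact hna (hx u huv fun _ => h ⟨huv, hxy⟩).symm
    · rintro rfl
      exact h ⟨hxy.symm, huv.symm⟩

theorem cfcNum_eq_two_or_compl_of_leaf {x y z : V} (hx : ∀ v, G.Adj x v ↔ v = y)
    (hzx : z ≠ x) (hzy : z ≠ y) (hz : ∀ v, v ≠ x → v ≠ z → G.Adj z v) :
    cfcNum G = 2 ∨ cfcNum Gᶜ = 2 := by
  by_cases hnb : ∀ a, a ≠ x → a ≠ y → a ≠ z → ∃ g, g ≠ z ∧ G.Adj a g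
  · exact .inl (cfcNum_eq_two_of_leaf hx hzx hzy hz hnb)
  · push Not at hnb
    obtain ⟨a, hax, hay, haz, ha⟩ := hnb
    have hxy : G.Adj x y := (hx y).2 rfl
    refine .inr (cfcNum_eq_two_of_leaf_of_hub (x := x) (y := y) (z := z) (a := a) ?_ hxy.ne
      ?_ ?_ haz hay hzy ?_)
    · simp [compl_adj, hzx, G.adj_comm z, hx, hzy]
    · simp [compl_adj, hxy]
    · intro v hvx hvy
      simp [compl_adj, hx, hvy, hvx.symm]
    · intro v hva hvz
      exact (compl_adj _ _ _).2 ⟨hva.symm, ha v hvz⟩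

/-- If no vertex of `G` is a leaf, the side of `x` after removing a bridge `xy` contains two
vertices besides `x`. -/
theorem exists_pair_reachable_of_no_leaf (hl : ¬∃ x y, ∀ v, G.Adj x v ↔ v = y) {x y : V}
    (hxy : G.Adj x y) :
    ∃ a b, a ≠ b ∧ a ≠ x ∧ b ≠ x ∧ (G.deleteEdges {s(x, y)}).Reachable x a ∧
      (G.deleteEdges {s(x, y)}).Reachable x b := by
  have hother : ∀ u v, G.Adj u v → ∃ w, G.Adj u w ∧ w ≠ v := by
    intro u v huv
    by_contra! h
    exact hl ⟨u, v, fun w => ⟨h w, fun hw => hw ▸ huv⟩⟩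
  obtain ⟨a, hxa, hay⟩ := hother x y hxy
  obtain ⟨b, hab, hbx⟩ := hother a x hxa.symm
  have h₁ : (G.deleteEdges {s(x, y)}).Adj x a := by
    simp [hxa, hay, hxy.ne]
  have h₂ : (G.deleteEdges {s(x, y)}).Adj a b := by
    simp [hab, hxa.ne', hay]
  exact ⟨a, b, hab.ne, hxa.ne', hbx, h₁.reachable, h₁.reachable.trans h₂.reachable⟩

theorem exists_leaf_of_isBridge_of_isBridge_compl (hG : G.Connected)
    (hb : ∃ e : Sym2 V, G.IsBridge e) (hbc : ∃ e : Sym2 V, Gᶜ.IsBridge e) :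
    ∃ x y, ∀ v, G.Adj x v ↔ v = y := by
  by_contra hl
  obtain ⟨⟨x, y⟩, hxy⟩ := hb
  obtain ⟨⟨u, v⟩, huv⟩ := hbc
  have hadj : G.Adj x y := hxy.reachable_iff_adj.1 (hG x y)
  replace hxy : ¬(G.deleteEdges {s(x, y)}).Reachable x y := hxy
  replace huv : ¬(Gᶜ.deleteEdges {s(u, v)}).Reachable u v := huv
  obtain ⟨a, b, hab, hax, hbx, ha, hb⟩ := exists_pair_reachable_of_no_leaf hl hadj
  obtain ⟨a', b', hab', hay, hby, ha', hb'⟩ := exists_pair_reachable_of_no_leaf hl hadj.symm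
  rw [Sym2.eq_swap] at ha' hb'
  set H := G.deleteEdges {s(x, y)}
  have hcross : ∀ p q, H.Reachable x p → ¬H.Reachable x q → (p ≠ x ∨ q ≠ y) → Gᶜ.Adj p q := by
    intro p q hp hq hpq
    refine (compl_adj _ _ _).2 ⟨fun h => hq (h ▸ hp), fun h => hq (hp.trans ?_)⟩
    refine Adj.reachable (deleteEdges_adj.2 ⟨h, fun he => ?_⟩)
    rcases Sym2.eq_iff.1 (Set.mem_singleton_iff.1 he) with ⟨h₁, h₂⟩ | ⟨h₁, -⟩
    · exact hpq.elim (· h₁) (· h₂)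
    · exact hxy (h₁ ▸ hp)
  have hleft : ∀ p, ∃ q, H.Reachable x q ∧ q ≠ x ∧ q ≠ p := fun p => by
    by_cases h : a = p
    · exact ⟨b, hb, hbx, h ▸ hab.symm⟩
    · exact ⟨a, ha, hax, h⟩
  have hright : ∀ p, ∃ q, ¬H.Reachable x q ∧ q ≠ y ∧ q ≠ p := fun p => by
    by_cases h : a' = p
    · exact ⟨b', fun h' => hxy (h'.trans hb'.symm), hby, h ▸ hab'.symm⟩
    · exact ⟨a', fun h' => hxy (h'.trans ha'.symm), hay, h⟩
  have hne : u ≠ v := by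
    rintro rfl
    exact huv .rfl
  have hstep : ∀ {p q}, Gᶜ.Adj p q → (p ≠ u ∧ p ≠ v ∨ q ≠ u ∧ q ≠ v) →
      (Gᶜ.deleteEdges {s(u, v)}).Reachable p q := fun h h' =>
    Adj.reachable (deleteEdges_adj.2 ⟨h, fun he => by
      rcases Sym2.eq_iff.1 (Set.mem_singleton_iff.1 he) with ⟨h₁, h₂⟩ | ⟨h₁, h₂⟩
      · exact h'.elim (·.1 h₁) (·.2 h₂)
      · exact h'.elim (·.2 h₁) (·.1 h₂)⟩)
  obtain ⟨p, hp, hpx, hpu⟩ := hleft u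
  obtain ⟨p', hp', hpx', hpv'⟩ := hleft v
  obtain ⟨q, hq, hqy, hqu⟩ := hright u
  obtain ⟨q', hq', hqy', hqv'⟩ := hright v
  by_cases hu : H.Reachable x u <;> by_cases hv : H.Reachable x v
  · have hqv : q ≠ v := fun h => hq (h ▸ hv)
    exact huv ((hstep (hcross u q hu hq (.inr hqy)) (.inr ⟨hqu, hqv⟩)).trans
      (hstep (hcross v q hv hq (.inr hqy)).symm (.inl ⟨hqu, hqv⟩)))
  · have hpv : p ≠ v := fun h => hv (h ▸ hp)
    have hqu' : q' ≠ u := fun h => hq' (h ▸ hu)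
    exact huv ((hstep (hcross u q' hu hq' (.inr hqy')) (.inr ⟨hqu', hqv'⟩)).trans
      ((hstep (hcross p q' hp hq' (.inl hpx)).symm (.inr ⟨hpu, hpv⟩)).trans
        (hstep (hcross p v hp hv (.inl hpx)) (.inl ⟨hpu, hpv⟩))))
  · have hpu' : p' ≠ u := fun h => hu (h ▸ hp')
    have hqv : q ≠ v := fun h => hq (h ▸ hv)
    exact huv ((hstep (hcross p' u hp' hu (.inl hpx')).symm (.inr ⟨hpu', hpv'⟩)).trans
      ((hstep (hcross p' q hp' hq (.inl hpx')) (.inr ⟨hqu, hqv⟩)).trans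
        (hstep (hcross v q hv hq (.inr hqy)).symm (.inl ⟨hqu, hqv⟩))))
  · have hpv : p ≠ v := fun h => hv (h ▸ hp)
    exact huv ((hstep (hcross p u hp hu (.inl hpx)).symm (.inr ⟨hpu, hpv⟩)).trans
      (hstep (hcross p v hp hv (.inl hpx)) (.inl ⟨hpu, hpv⟩)))

end ConflictFree

/-- If G and its complement are both connected on n ≥ 4 vertices and both have a
cut-edge, then cfc(G) = 2 or cfc(Ḡ) = 2. -/
theorem cfcNum_eq_two_or_compl {V : Type*} [Fintype V] (G : SimpleGraph V)
    (n : ℕ) (hn : Fintype.card V = n) (h4 : 4 ≤ n)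
    (hG : G.Connected) (hGc : Gᶜ.Connected)
    (hb : ∃ e : Sym2 V, G.IsBridge e) (hbc : ∃ e : Sym2 V, Gᶜ.IsBridge e) :
    cfcNum G = 2 ∨ cfcNum Gᶜ = 2 := by
  classical
  obtain ⟨x, y, hx⟩ := exists_leaf_of_isBridge_of_isBridge_compl hG hb hbc
  obtain ⟨z, w, hz⟩ := exists_leaf_of_isBridge_of_isBridge_compl hGc hbc (by rwa [compl_compl])
  have hxy : G.Adj x y := (hx y).2 rfl
  have hzx : z ≠ x := by
    rintro rfl
    have hsub : (Finset.univ : Finset V) ⊆ {z, y, w} := by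
      intro v _
      have h₁ := hx v
      have h₂ := hz v
      rw [compl_adj] at h₂
      simp only [Finset.mem_insert, Finset.mem_singleton]
      tauto
    have h₁ := Finset.card_le_card hsub
    have h₂ := Finset.card_le_three (a := z) (b := y) (c := w)
    rw [Finset.card_univ] at h₁
    omega
  by_cases hzy : z = y
  · subst hzy
    have hwx : x ≠ w := fun h => ((compl_adj _ _ _).1 ((hz x).2 h)).2 hxy.symm
    have key := cfcNum_eq_two_or_compl_of_leaf (G := Gᶜ) hz hxy.ne hwx
      (fun v hvz hvx => (compl_adj _ _ _).2 ⟨hvx.symm, fun h => hvz ((hx v).1 h)⟩)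
    rw [compl_compl] at key
    exact key.symm
  · have hxw : x = w := (hz x).1 ((compl_adj _ _ _).2
      ⟨hzx, fun h => hzy ((hx z).1 h.symm)⟩)
    refine cfcNum_eq_two_or_compl_of_leaf hx hzx hzy fun v hvx hvz => ?_
    by_contra h
    exact hvx (((hz v).1 ((compl_adj _ _ _).2 ⟨Ne.symm hvz, h⟩)).trans hxw.symm)
end

section
/- Let G be a simple graph on n ≥ 5 vertices such that both G and its complement Ḡ are 2-edge-connected (connected with no cut-edge) and both are connected. Then cfc(G) + cfc(Ḡ) = 4 and cfc(G) · cfc(Ḡ) = 4. -/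
open SimpleGraph

namespace SimpleGraph

open Classical in
/-- There is a path from `u` to `v` in `G` that stays inside the vertex set `A` and uses exactly
`k` edges of `S`. -/
def PathIn {V : Type*} (G : SimpleGraph V) (S : Set (Sym2 V)) (A : Set V) (k : ℕ) (u v : V) :
    Prop :=
  ∃ p : G.Walk u v, p.IsPath ∧ (∀ x ∈ p.support, x ∈ A) ∧ p.edges.countP (· ∈ S) = k

namespace PathIn

variable {V : Type*} {G : SimpleGraph V} {S : Set (Sym2 V)} {A B : Set V} {k l : ℕ} {u v w x : V}

theorem refl (hu : u ∈ A) : G.PathIn S A 0 u u :=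
  ⟨.nil, .nil, by simpa using hu, by simp⟩

theorem symm (h : G.PathIn S A k u v) : G.PathIn S A k v u := by
  obtain ⟨p, hp, hA, hk⟩ := h
  exact ⟨p.reverse, hp.reverse, by simpa using hA, by simpa using hk⟩

theorem mono (hAB : A ⊆ B) (h : G.PathIn S A k u v) : G.PathIn S B k u v := by
  obtain ⟨p, hp, hA, hk⟩ := h
  exact ⟨p, hp, fun x hx => hAB (hA x hx), hk⟩

theorem of_walk (p : G.Walk u v) (hp : ∀ x ∈ p.support, x ∈ A) (hS : ∀ e ∈ p.edges, e ∉ S) :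
    G.PathIn S A 0 u v := by
  classical
  refine ⟨p.bypass, p.bypass_isPath, fun x hx => hp x (p.support_bypass_subset_support hx), ?_⟩
  rw [List.countP_eq_zero]
  intro e he
  simpa using hS e (p.edges_bypass_subset_edges he)

/-- Changing the distinguished edges away from the inside of `A` does not affect paths in `A`. -/
theorem congr_edges {T : Set (Sym2 V)} (hST : ∀ a ∈ A, ∀ b ∈ A, s(a, b) ∈ S ↔ s(a, b) ∈ T)
    (h : G.PathIn S A k u v) : G.PathIn T A k u v := by
  classical
  obtain ⟨p, hp, hA, hk⟩ := h
  refine ⟨p, hp, hA, hk ▸ ?_⟩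
  refine List.countP_congr fun e he => ?_
  induction e with
  | _ a b =>
    simpa using (hST a (hA a (p.fst_mem_support_of_mem_edges he)) b
      (hA b (p.snd_mem_support_of_mem_edges he))).symm

/-- Two paths inside disjoint vertex sets can be joined along an edge. -/
theorem join (hAB : Disjoint A B) (h₁ : G.PathIn S A k u v) (hvw : G.Adj v w)
    (h₂ : G.PathIn S B l w x) :
    (s(v, w) ∈ S → G.PathIn S (A ∪ B) (k + l + 1) u x) ∧
      (s(v, w) ∉ S → G.PathIn S (A ∪ B) (k + l) u x) := by
  obtain ⟨p, hp, hA, hk⟩ := h₁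
  obtain ⟨q, hq, hB, hl⟩ := h₂
  have hd : ∀ y ∈ p.support, y ∉ q.support := fun y hy hy' =>
    Set.disjoint_left.1 hAB (hA y hy) (hB y hy')
  have hpath : (p.append (.cons hvw q)).IsPath := by
    rw [Walk.isPath_def, Walk.support_append, Walk.support_cons, List.tail_cons]
    exact List.nodup_append.2 ⟨hp.support_nodup, hq.support_nodup,
      fun a ha b hb hab => hd a ha (hab ▸ hb)⟩
  have hsupp : ∀ y ∈ (p.append (.cons hvw q)).support, y ∈ A ∪ B := by
    intro y hy
    rw [Walk.support_append, Walk.support_cons, List.tail_cons, List.mem_append] at hy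
    exact hy.imp (hA y) (hB y)
  constructor <;> intro hS <;> refine ⟨_, hpath, hsupp, ?_⟩ <;>
    simp [Walk.edges_append, hS, hk, hl, add_assoc]

end PathIn

variable {V : Type*} {G : SimpleGraph V}

/-- A path visiting two distinct vertices splits into disjoint pieces, one from its start to one
of them and one from the other to its end. -/
theorem Walk.IsPath.exists_disjoint_pathIn {S : Set (Sym2 V)} {z a : V} {q : G.Walk z a}
    (hq : q.IsPath) (hS : ∀ e ∈ q.edges, e ∉ S) {u v : V} (hu : u ∈ q.support)
    (hv : v ∈ q.support) (huv : u ≠ v) :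
    ∃ A B : Set V, Disjoint A B ∧ A ⊆ {x | x ∈ q.support} ∧ B ⊆ {x | x ∈ q.support} ∧
      (G.PathIn S A 0 z u ∧ G.PathIn S B 0 v a ∨ G.PathIn S A 0 z v ∧ G.PathIn S B 0 u a) := by
  classical
  induction q with
  | nil => simp_all
  | @cons z y a h q ih =>
    rw [Walk.cons_isPath_iff] at hq
    have hS' : ∀ e ∈ q.edges, e ∉ S := fun e he => hS e (by simp [he])
    have hzy : s(z, y) ∉ S := hS _ (by simp)
    have hdrop : ∀ w ∈ q.support, G.PathIn S {x | x ∈ q.support} 0 w a := fun w hw =>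
      .of_walk (q.dropUntil w hw) (fun x hx => q.support_dropUntil_subset_support hw hx)
        fun e he => hS' e (q.edges_dropUntil_subset_edges hw he)
    have hdisj : Disjoint {z} {x | x ∈ q.support} := Set.disjoint_singleton_left.2 hq.2
    have hsub : {x | x ∈ q.support} ⊆ {x | x ∈ (Walk.cons h q).support} := fun x hx => by
      simp_all
    have hz : ({z} : Set V) ⊆ {x | x ∈ (Walk.cons h q).support} := by simp
    rw [Walk.support_cons, List.mem_cons] at hu hv
    rcases hu with rfl | hu
    · have hv := hv.resolve_left huv.symm
      exact ⟨{u}, {x | x ∈ q.support}, hdisj, hz, hsub, .inl ⟨.refl rfl, hdrop v hv⟩⟩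
    rcases hv with rfl | hv
    · exact ⟨{v}, {x | x ∈ q.support}, hdisj, hz, hsub, .inr ⟨.refl rfl, hdrop u hu⟩⟩
    obtain ⟨A, B, hAB, hA, hB, hp⟩ := ih hq.1 hS' hu hv
    have hzA : Disjoint {z} A := hdisj.mono_right hA
    have hzB : Disjoint {z} B := hdisj.mono_right hB
    refine ⟨{z} ∪ A, B, hzB.union_left hAB, Set.union_subset hz (hA.trans hsub), hB.trans hsub,
      hp.imp (And.imp_left fun hp => ?_) (And.imp_left fun hp => ?_)⟩ <;>
    exact (PathIn.join hzA (.refl rfl) h hp).2 hzy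

/-- Prefix of a walk before it first enters `W`, shortened to a path. -/
theorem Walk.exists_isPath_disjoint_adj {W : Set V} {z w : V} (p : G.Walk z w) (hz : z ∉ W)
    (hw : w ∈ W) : ∃ (a b : V) (q : G.Walk z a), q.IsPath ∧ (∀ x ∈ q.support, x ∉ W) ∧
      b ∈ W ∧ G.Adj a b := by
  classical
  suffices ∃ (a b : V) (q : G.Walk z a), (∀ x ∈ q.support, x ∉ W) ∧ b ∈ W ∧ G.Adj a b by
    obtain ⟨a, b, q, hq, hb, hab⟩ := this
    exact ⟨a, b, q.bypass, q.bypass_isPath,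
      fun x hx => hq x (q.support_bypass_subset_support hx), hb, hab⟩
  induction p with
  | nil => exact absurd hw hz
  | @cons z y w h p ih =>
    by_cases hy : y ∈ W
    · exact ⟨z, y, .nil, by simpa using hz, hy, h⟩
    · obtain ⟨a, b, q, hq, hb, hab⟩ := ih hy hw
      exact ⟨a, b, .cons h q, by simpa using ⟨hz, hq⟩, hb, hab⟩

/-- The edges of `S` lie inside `W`, and any two distinct vertices of `W` are joined inside `W`
both by a path avoiding `S` and by a path using exactly one edge of `S`. -/
structure IsMarking (G : SimpleGraph V) (S : Set (Sym2 V)) (W : Set V) : Prop where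
  mem_of_mem : ∀ e ∈ S, ∀ x ∈ e, x ∈ W
  zero : ∀ u ∈ W, ∀ v ∈ W, u ≠ v → G.PathIn S W 0 u v
  one : ∀ u ∈ W, ∀ v ∈ W, u ≠ v → G.PathIn S W 1 u v

/-- Attaching an ear with distinct ends preserves markings. -/
theorem IsMarking.openEar {S : Set (Sym2 V)} {W : Set V} (h : G.IsMarking S W) {z a w b : V}
    {q : G.Walk z a} (hq : q.IsPath) (hqW : ∀ x ∈ q.support, x ∉ W) (hw : w ∈ W) (hb : b ∈ W)
    (hwz : G.Adj w z) (hab : G.Adj a b) (hwb : w ≠ b) :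
    G.IsMarking S (W ∪ {x | x ∈ q.support}) := by
  classical
  have hout : ∀ e : Sym2 V, ∀ x ∈ e, x ∉ W → e ∉ S := fun e x hx hxW he =>
    hxW (h.mem_of_mem e he x hx)
  have hdisj : Disjoint {x | x ∈ q.support} W := Set.disjoint_left.2 hqW
  have hqS : ∀ e ∈ q.edges, e ∉ S := fun e he => by
    induction e with
    | _ c d => exact hout _ c (by simp) (hqW c (q.fst_mem_support_of_mem_edges he))
  have hzw : s(z, w) ∉ S := hout _ z (by simp) (hqW z q.start_mem_support)
  have haS : s(a, b) ∉ S := hout _ a (by simp) (hqW a q.end_mem_support)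
  have htake : ∀ u ∈ q.support, G.PathIn S {x | x ∈ q.support} 0 u z := fun u hu =>
    (PathIn.of_walk (q.takeUntil u hu) (fun x hx => q.support_takeUntil_subset_support hu hx)
      fun e he => hqS e (q.edges_takeUntil_subset_edges hu he)).symm
  have hdrop : ∀ u ∈ q.support, G.PathIn S {x | x ∈ q.support} 0 u a := fun u hu =>
    .of_walk (q.dropUntil u hu) (fun x hx => q.support_dropUntil_subset_support hu hx)
      fun e he => hqS e (q.edges_dropUntil_subset_edges hu he)
  have hmixed : ∀ k, (∀ u ∈ W, ∀ v ∈ W, u ≠ v → G.PathIn S W k u v) →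
      ∀ u ∈ q.support, ∀ v ∈ W, G.PathIn S (W ∪ {x | x ∈ q.support}) k u v := by
    intro k hk u hu v hv
    rw [Set.union_comm]
    by_cases hvw : w = v
    · simpa using (PathIn.join hdisj (hdrop u hu) hab (hk b hb v hv (hvw ▸ hwb.symm))).2 haS
    · simpa using (PathIn.join hdisj (htake u hu) hwz.symm (hk w hw v hv hvw)).2 hzw
  have hcross : ∀ A B : Set V, Disjoint A B → A ⊆ {x | x ∈ q.support} →
      B ⊆ {x | x ∈ q.support} → ∀ u v, G.PathIn S A 0 z u → G.PathIn S B 0 v a →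
      G.PathIn S (W ∪ {x | x ∈ q.support}) 1 u v := by
    intro A B hAB hA hB u v hzu hva
    have h₁ := (PathIn.join (hdisj.mono_left hA) hzu.symm hwz.symm (h.one w hw b hb hwb)).2 hzw
    have h₂ := (PathIn.join (hAB.union_left (hdisj.symm.mono_right hB)) h₁ hab.symm hva.symm).2
      (Sym2.eq_swap ▸ haS)
    exact h₂.mono (by grind)
  refine ⟨fun e he x hx => .inl (h.mem_of_mem e he x hx), ?_, ?_⟩
  · rintro u (hu | hu) v (hv | hv) huv
    · exact (h.zero u hu v hv huv).mono Set.subset_union_left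
    · exact (hmixed 0 h.zero v hv u hu).symm
    · exact hmixed 0 h.zero u hu v hv
    · refine (PathIn.of_walk ((q.takeUntil u hu).reverse.append (q.takeUntil v hv)) ?_ ?_).mono
        Set.subset_union_right
      · grind [Walk.mem_support_append_iff, Walk.support_reverse,
          Walk.support_takeUntil_subset_support]
      · grind [Walk.edges_append, Walk.edges_reverse, Walk.edges_takeUntil_subset_edges]
  · rintro u (hu | hu) v (hv | hv) huv
    · exact (h.one u hu v hv huv).mono Set.subset_union_left
    · exact (hmixed 1 h.one v hv u hu).symm
    · exact hmixed 1 h.one u hu v hv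
    · obtain ⟨A, B, hAB, hA, hB, ⟨h₁, h₂⟩ | ⟨h₁, h₂⟩⟩ := hq.exists_disjoint_pathIn hqS hu hv huv
      · exact hcross A B hAB hA hB u v h₁ h₂
      · exact (hcross A B hAB hA hB v u h₁ h₂).symm

/-- Attaching a cycle at one vertex, with one new distinguished edge, preserves markings. -/
theorem IsMarking.closedEar {S : Set (Sym2 V)} {W : Set V} (h : G.IsMarking S W) {z a w : V}
    {q : G.Walk z a} (hq : q.IsPath) (hqW : ∀ x ∈ q.support, x ∉ W) (hw : w ∈ W)
    (hwz : G.Adj w z) (haw : G.Adj a w) (hza : z ≠ a) :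
    G.IsMarking (insert s(z, w) S) (W ∪ {x | x ∈ q.support}) := by
  classical
  set T := insert s(z, w) S with hT
  have hzW : z ∉ W := hqW z q.start_mem_support
  have hout : ∀ e : Sym2 V, ∀ x ∈ e, x ∉ W → e ∉ S := fun e x hx hxW he =>
    hxW (h.mem_of_mem e he x hx)
  have hdisj : Disjoint {x | x ∈ q.support} W := Set.disjoint_left.2 hqW
  have hqS : ∀ e ∈ q.edges, e ∉ T := fun e he => by
    induction e with
    | _ c d =>
      have hc := hqW c (q.fst_mem_support_of_mem_edges he)
      have hd := hqW d (q.snd_mem_support_of_mem_edges he)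
      rintro (heq | hmem)
      · rcases Sym2.eq_iff.1 heq with ⟨_, rfl⟩ | ⟨rfl, _⟩ <;> contradiction
      · exact hout _ c (by simp) hc hmem
  have hzw : s(z, w) ∈ T := Set.mem_insert _ _
  have haS : s(a, w) ∉ T := by
    rintro (heq | hmem)
    · rcases Sym2.eq_iff.1 heq with ⟨h', _⟩ | ⟨_, h'⟩
      · exact hza h'.symm
      · exact hzW (h' ▸ hw)
    · exact hout _ a (by simp) (hqW a q.end_mem_support) hmem
  have hST : ∀ c ∈ W, ∀ d ∈ W, s(c, d) ∈ S ↔ s(c, d) ∈ T := fun c hc d hd => by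
    refine ⟨Set.mem_insert_of_mem _, fun hm => hm.resolve_left fun heq => ?_⟩
    rcases Sym2.eq_iff.1 heq with ⟨rfl, _⟩ | ⟨_, rfl⟩ <;> contradiction
  have hzero : ∀ v ∈ W, G.PathIn T W 0 w v := fun v hv => by
    by_cases hwv : w = v
    · exact hwv ▸ .refl hw
    · exact (h.zero w hw v hv hwv).congr_edges hST
  have htake : ∀ u ∈ q.support, G.PathIn T {x | x ∈ q.support} 0 u z := fun u hu =>
    (PathIn.of_walk (q.takeUntil u hu) (fun x hx => q.support_takeUntil_subset_support hu hx)
      fun e he => hqS e (q.edges_takeUntil_subset_edges hu he)).symm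
  have hdrop : ∀ u ∈ q.support, G.PathIn T {x | x ∈ q.support} 0 u a := fun u hu =>
    .of_walk (q.dropUntil u hu) (fun x hx => q.support_dropUntil_subset_support hu hx)
      fun e he => hqS e (q.edges_dropUntil_subset_edges hu he)
  have hmixed₀ : ∀ u ∈ q.support, ∀ v ∈ W, G.PathIn T (W ∪ {x | x ∈ q.support}) 0 u v := by
    intro u hu v hv
    rw [Set.union_comm]
    exact (PathIn.join hdisj (hdrop u hu) haw (hzero v hv)).2 haS
  have hmixed₁ : ∀ u ∈ q.support, ∀ v ∈ W, G.PathIn T (W ∪ {x | x ∈ q.support}) 1 u v := by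
    intro u hu v hv
    rw [Set.union_comm]
    exact (PathIn.join hdisj (htake u hu) hwz.symm (hzero v hv)).1 hzw
  have hcross : ∀ A B : Set V, Disjoint A B → A ⊆ {x | x ∈ q.support} →
      B ⊆ {x | x ∈ q.support} → ∀ u v, G.PathIn T A 0 z u → G.PathIn T B 0 v a →
      G.PathIn T (W ∪ {x | x ∈ q.support}) 1 u v := by
    intro A B hAB hA hB u v hzu hva
    have h₁ := (PathIn.join (hdisj.mono_left hA) hzu.symm hwz.symm (hzero w hw)).1 hzw
    have h₂ := (PathIn.join (hAB.union_left (hdisj.symm.mono_right hB)) h₁ haw.symm hva.symm).2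
      (Sym2.eq_swap ▸ haS)
    exact h₂.mono (by grind)
  refine ⟨?_, ?_, ?_⟩
  · rintro e (rfl | he) x hx
    · rcases Sym2.mem_iff.1 hx with rfl | rfl
      · exact .inr q.start_mem_support
      · exact .inl hw
    · exact .inl (h.mem_of_mem e he x hx)
  · rintro u (hu | hu) v (hv | hv) huv
    · exact ((h.zero u hu v hv huv).congr_edges hST).mono Set.subset_union_left
    · exact (hmixed₀ v hv u hu).symm
    · exact hmixed₀ u hu v hv
    · refine (PathIn.of_walk ((q.takeUntil u hu).reverse.append (q.takeUntil v hv)) ?_ ?_).mono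
        Set.subset_union_right
      · grind [Walk.mem_support_append_iff, Walk.support_reverse,
          Walk.support_takeUntil_subset_support]
      · grind [Walk.edges_append, Walk.edges_reverse, Walk.edges_takeUntil_subset_edges]
  · rintro u (hu | hu) v (hv | hv) huv
    · exact ((h.one u hu v hv huv).congr_edges hST).mono Set.subset_union_left
    · exact (hmixed₁ v hv u hu).symm
    · exact hmixed₁ u hu v hv
    · obtain ⟨A, B, hAB, hA, hB, ⟨h₁, h₂⟩ | ⟨h₁, h₂⟩⟩ := hq.exists_disjoint_pathIn hqS hu hv huv
      · exact hcross A B hAB hA hB u v h₁ h₂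
      · exact (hcross A B hAB hA hB v u h₁ h₂).symm

/-- A finite connected bridgeless graph has a marking of its whole vertex set. -/
theorem Connected.exists_isMarking_univ [Finite V] (hG : G.Connected)
    (hb : ∀ e, ¬ G.IsBridge e) : ∃ S, G.IsMarking S Set.univ := by
  obtain ⟨v₀⟩ := hG.nonempty
  have hne : {W : Set V | v₀ ∈ W ∧ ∃ S, G.IsMarking S W}.Nonempty := by
    refine ⟨{v₀}, rfl, ∅, by simp, ?_, ?_⟩ <;>
    · rintro u rfl v rfl huv
      exact absurd rfl huv
  obtain ⟨W, ⟨hv₀, S, hS⟩, hmax⟩ := (Set.toFinite _).exists_maximal hne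
  by_cases hW : W = Set.univ
  · exact ⟨S, hW ▸ hS⟩
  exfalso
  obtain ⟨x, hx⟩ := (Set.ne_univ_iff_exists_notMem W).1 hW
  obtain ⟨p⟩ := hG.preconnected v₀ x
  obtain ⟨⟨⟨w, z⟩, hwz⟩, -, hw, hz⟩ := p.exists_boundary_dart W hv₀ hx
  dsimp only at hw hz hwz
  have hreach : (G.deleteEdges {s(w, z)}).Reachable w z := by
    simpa [isBridge_iff] using hb s(w, z)
  obtain ⟨r⟩ := hreach.symm
  obtain ⟨a, b, q, hq, hqW, hbW, hab⟩ := r.exists_isPath_disjoint_adj hz hw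
  rw [deleteEdges_adj] at hab
  have hle : G.deleteEdges {s(w, z)} ≤ G := deleteEdges_le _
  have hq' : (q.mapLe hle).IsPath := hq.mapLe hle
  have hqW' : ∀ x ∈ (q.mapLe hle).support, x ∉ W := by simpa using hqW
  have hmem : z ∈ W ∪ {x | x ∈ (q.mapLe hle).support} := .inr (Walk.start_mem_support _)
  refine hz (hmax ⟨.inl hv₀, ?_⟩ Set.subset_union_left hmem)
  by_cases hwb : w = b
  · subst hwb
    refine ⟨_, hS.closedEar hq' hqW' hw hwz hab.1 ?_⟩
    rintro rfl
    exact hab.2 Sym2.eq_swap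
  · exact ⟨_, hS.openEar hq' hqW' hw hbW hwz hab.1 hwb⟩

open Classical in
/-- The indicator of a marking of all vertices is a conflict-free coloring. -/
theorem IsMarking.isCFCColoring {S : Set (Sym2 V)} (h : G.IsMarking S Set.univ) :
    IsCFCColoring G (fun e => if e ∈ S then 1 else 0) := by
  intro u v huv
  obtain ⟨p, hp, -, hk⟩ := h.one u trivial v trivial huv
  rw [List.countP_eq_length_filter, List.length_eq_one_iff] at hk
  obtain ⟨e, he⟩ := hk
  have hmem : ∀ e', e' ∈ p.edges ∧ e' ∈ S ↔ e' = e := fun e' => by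
    simpa using congrArg (e' ∈ ·) he
  refine ⟨⟨p, hp⟩, e, ((hmem e).2 rfl).1, fun e' he' hc => (hmem e').1 ⟨he', ?_⟩⟩
  by_contra hS
  simp [((hmem e).2 rfl).2, hS] at hc

end SimpleGraph

/-- A single color is conflict-free only on complete graphs. -/
theorem IsCFCColoring.eq_top_of_forall_lt {V : Type*} {G : SimpleGraph V} {c : Sym2 V → ℕ}
    {k : ℕ} (h : IsCFCColoring G c) (hc : ∀ e ∈ G.edgeSet, c e < k) (hk : k < 2) : G = ⊤ := by
  ext u v
  refine ⟨fun h => h.ne, fun huv => ?_⟩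
  obtain ⟨⟨p, hp⟩, e, he, huniq⟩ := h u v huv
  have hall : ∀ e' ∈ p.edges, e' = e := fun e' he' => huniq e' he' (by
    have h₁ := hc e (p.edges_subset_edgeSet he)
    have h₂ := hc e' (p.edges_subset_edgeSet he')
    omega)
  have hlen : p.edges.length ≤ 1 := by
    by_contra! hlt
    have := hp.isTrail.edges_nodup.getElem_inj_iff (i := 0) (j := 1) (hi := by omega)
      (hj := by omega)
    simp [hall _ (List.getElem_mem _)] at this
  cases p with
  | nil => exact absurd rfl huv
  | cons hadj q =>
    cases q with
    | nil => exact hadj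
    | cons _ _ => simp at hlen

/-- A finite connected bridgeless non-complete graph has conflict-free connection number two. -/
theorem cfcNum_eq_two {V : Type*} [Finite V] {G : SimpleGraph V} (hG : G.Connected)
    (hb : ∀ e, ¬ G.IsBridge e) (hne : G ≠ ⊤) : cfcNum G = 2 := by
  classical
  obtain ⟨S, hS⟩ := hG.exists_isMarking_univ hb
  have hmem : 2 ∈ {k | ∃ c : Sym2 V → ℕ, (∀ e ∈ G.edgeSet, c e < k) ∧ IsCFCColoring G c} :=
    ⟨_, fun e _ => by split_ifs <;> omega, hS.isCFCColoring⟩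
  refine le_antisymm (Nat.sInf_le hmem) (le_csInf ⟨2, hmem⟩ ?_)
  rintro k ⟨c, hck, hc⟩
  by_contra! hk
  exact hne (hc.eq_top_of_forall_lt hck hk)

/-- If G and its complement are both 2-edge-connected on n ≥ 5 vertices, then
cfc(G) + cfc(Ḡ) = 4 and cfc(G) · cfc(Ḡ) = 4. -/
theorem cfcNum_add_mul_compl_of_twoEdgeConnected {V : Type*} [Fintype V]
    (G : SimpleGraph V) (n : ℕ) (hn : Fintype.card V = n) (h5 : 5 ≤ n)
    (hG : G.Connected) (hGb : ∀ e : Sym2 V, ¬ G.IsBridge e)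
    (hGc : Gᶜ.Connected) (hGcb : ∀ e : Sym2 V, ¬ Gᶜ.IsBridge e) :
    cfcNum G + cfcNum Gᶜ = 4 ∧ cfcNum G * cfcNum Gᶜ = 4 := by
  have : Nontrivial V := Fintype.one_lt_card_iff_nontrivial.1 (by omega)
  have hne : G ≠ ⊤ := by
    rintro rfl
    rw [compl_top] at hGc
    exact not_connected_bot hGc
  have hne' : Gᶜ ≠ ⊤ := fun h => by
    rw [compl_eq_top.1 h] at hG
    exact not_connected_bot hG
  simp [cfcNum_eq_two hG hGb hne, cfcNum_eq_two hGc hGcb hne']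
end

section
/- Let G be a 2-edge-connected simple graph on n ≥ 5 vertices whose complement Ḡ is connected with edge-connectivity 1 (i.e., Ḡ has a cut-edge). Then 4 ≤ cfc(G) + cfc(Ḡ) ≤ n and 4 ≤ cfc(G) · cfc(Ḡ) ≤ 2(n − 2). Moreover, cfc(G) + cfc(Ḡ) = n if and only if Ḡ is isomorphic to the path P_5, and cfc(G) · cfc(Ḡ) = 2(n − 2) if and only if Ḡ is isomorphic to the path P_5. -/
open SimpleGraph

namespace SimpleGraph

variable {V : Type*} {G H T : SimpleGraph V}

lemma cfcNum_le {k : ℕ} {c : Sym2 V → ℕ} (hk : ∀ e ∈ G.edgeSet, c e < k)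
    (hc : IsCFCColoring G c) : cfcNum G ≤ k :=
  Nat.sInf_le ⟨c, hk, hc⟩

/-- A non-complete graph that has some conflict-free coloring needs at least two colors. -/
lemma two_le_cfcNum {k : ℕ} {c : Sym2 V → ℕ} (hk : ∀ e ∈ G.edgeSet, c e < k)
    (hc : IsCFCColoring G c) {u v : V} (huv : u ≠ v) (hadj : ¬ G.Adj u v) : 2 ≤ cfcNum G := by
  obtain ⟨c', hk', hc'⟩ := Nat.sInf_mem (s := {k | ∃ c : Sym2 V → ℕ,
    (∀ e ∈ G.edgeSet, c e < k) ∧ IsCFCColoring G c}) ⟨k, c, hk, hc⟩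
  change ∀ e ∈ G.edgeSet, c' e < cfcNum G at hk'
  by_contra! hlt
  obtain ⟨⟨p, hp⟩, e, he, h⟩ := hc' u v huv
  have hall : ∀ e' ∈ p.edges, e' = e := fun e' he' ↦ h e' he' <| by
    have h1 := hk' e' (p.edges_subset_edgeSet he')
    have h2 := hk' e (p.edges_subset_edgeSet he)
    omega
  cases p with
  | nil => exact huv rfl
  | cons h1 q =>
    cases q with
    | nil => exact hadj h1
    | cons h2 q =>
      have hn := hp.isTrail.edges_nodup
      simp only [Walk.edges_cons, List.nodup_cons, List.mem_cons] at hn hall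
      exact hn.1 (Or.inl ((hall _ (Or.inl rfl)).trans (hall _ (Or.inr (Or.inl rfl))).symm))

lemma exists_isCFCColoring_of_iso {W : Type*} {K : SimpleGraph W} (f : G ≃g K) {k : ℕ}
    (h : ∃ c : Sym2 W → ℕ, (∀ e ∈ K.edgeSet, c e < k) ∧ IsCFCColoring K c) :
    ∃ c : Sym2 V → ℕ, (∀ e ∈ G.edgeSet, c e < k) ∧ IsCFCColoring G c := by
  obtain ⟨c, hk, hc⟩ := h
  have hinv : ∀ e : Sym2 W, Sym2.map f (Sym2.map f.symm e) = e := by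
    rintro ⟨a, b⟩
    simp
  refine ⟨fun e ↦ c (e.map f), ?_, fun u v huv ↦ ?_⟩
  · rintro ⟨a, b⟩ h
    exact hk _ (f.map_adj_iff.2 h)
  · obtain ⟨⟨p, hp⟩, e, he, h⟩ := hc (f u) (f v) (by simpa using huv)
    refine ⟨⟨(p.map f.symm.toHom).copy (by simp) (by simp), ?_⟩, e.map f.symm, ?_, ?_⟩
    · simpa using hp.map f.symm.injective
    · simpa using ⟨e, he, rfl⟩
    · simp only [Walk.edges_copy, Walk.edges_map, List.mem_map]
      rintro _ ⟨d, hd, rfl⟩ hcd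
      refine congrArg (Sym2.map f.symm) (h d hd ?_)
      rw [hinv] at hcd
      exact (congrArg c (hinv d)).symm.trans hcd

lemma cfcNum_congr {W : Type*} {K : SimpleGraph W} (f : G ≃g K) : cfcNum G = cfcNum K :=
  congrArg sInf (Set.ext fun _ ↦
    ⟨exists_isCFCColoring_of_iso f.symm, exists_isCFCColoring_of_iso f⟩)

/-- A coloring of a connected graph is conflict-free when repeated colors only occur on edges of
distinct parts of a vertex labelling, each such edge lying inside its part; it suffices to check
this on a connected spanning subgraph. -/
lemma isCFCColoring_of_labelling (hT : T.Connected) (hTH : T ≤ H) {c : Sym2 V → ℕ} (L : V → ℕ)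
    (hL : ∀ a b a' b', T.Adj a b → T.Adj a' b' → c s(a, b) = c s(a', b') →
      s(a, b) = s(a', b') ∨ (L a = L b ∧ L a ≠ L a')) : IsCFCColoring H c := by
  intro u v huv
  obtain ⟨p, hp⟩ := (hT u v).exists_isPath
  refine ⟨⟨p.mapLe hTH, hp.mapLe hTH⟩, ?_⟩
  simp only [Walk.edges_mapLe_eq_edges]
  by_contra! hcon
  have hconst : ∀ a b, s(a, b) ∈ p.edges → L a = L b := by
    intro a b hab
    obtain ⟨e', he', hce, hne⟩ := hcon _ hab
    induction e' with | h a' b' =>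
    rcases hL a b a' b' (p.adj_of_mem_edges hab) (p.adj_of_mem_edges he') hce.symm with h | h
    · exact absurd h.symm hne
    · exact h.1
  have hsupp : ∀ {u v : V} (p : T.Walk u v), (∀ a b, s(a, b) ∈ p.edges → L a = L b) →
      ∀ z ∈ p.support, L z = L u := by
    intro u v p hconst
    induction p with
    | nil => simp
    | cons h q ih =>
      intro z hz
      rw [Walk.support_cons, List.mem_cons] at hz
      rcases hz with rfl | hz
      · rfl
      · exact (ih (fun a b hab ↦ hconst a b (by simp [hab])) z hz).trans
          (hconst _ _ (by simp)).symm
  cases p with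
  | nil => exact huv rfl
  | @cons _ w _ h q =>
    obtain ⟨e', he', hce, hne⟩ := hcon s(u, w) (by simp)
    induction e' with | h a' b' =>
    rcases hL u w a' b' h (Walk.adj_of_mem_edges _ he') hce.symm with h' | h'
    · exact hne h'.symm
    · exact h'.2 (hsupp _ hconst a' (Walk.fst_mem_support_of_mem_edges _ he')).symm

lemma exists_lt_injOn {α : Type*} {k : ℕ} (E : Finset α) (hk : 0 < k) (hE : E.card ≤ k) :
    ∃ φ : α → ℕ, (∀ e, φ e < k) ∧ Set.InjOn φ E := by
  classical
  refine ⟨fun e ↦ if h : e ∈ E then (E.equivFin ⟨e, h⟩ : ℕ) else 0, fun e ↦ ?_, ?_⟩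
  · dsimp only
    split_ifs
    · exact (Fin.is_lt _).trans_le hE
    · exact hk
  · intro a ha b hb hab
    simp only [Finset.mem_coe] at ha hb
    simpa [ha, hb, Fin.val_inj] using hab

/-- Colorings that identify two of the edges of a spanning tree with other edges. -/
lemma exists_isCFCColoring_of_isTree [Fintype V] (hT : T.IsTree) (hTH : T ≤ H)
    (hcard : 4 ≤ Fintype.card V) {e f : Sym2 V} (he : e ∈ T.edgeSet) (hf : f ∈ T.edgeSet)
    (hef : e ≠ f) (r : Sym2 V → Sym2 V)
    (hr : ∀ d ∈ T.edgeSet, r d ∈ T.edgeSet ∧ r d ≠ e ∧ r d ≠ f) (L : V → ℕ)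
    (hL : ∀ a b a' b', T.Adj a b → T.Adj a' b' → r s(a, b) = r s(a', b') →
      s(a, b) = s(a', b') ∨ (L a = L b ∧ L a ≠ L a')) :
    ∃ c : Sym2 V → ℕ, (∀ d ∈ H.edgeSet, c d < Fintype.card V - 3) ∧ IsCFCColoring H c := by
  classical
  have hE : ((T.edgeFinset.erase e).erase f).card ≤ Fintype.card V - 3 := by
    rw [Finset.card_erase_of_mem (by simp [hef.symm, hf]), Finset.card_erase_of_mem (by simp [he])]
    have := hT.card_edgeFinset
    omega
  obtain ⟨φ, hφ, hinj⟩ := exists_lt_injOn _ (by omega) hE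
  refine ⟨φ ∘ r, fun d _ ↦ hφ _, isCFCColoring_of_labelling hT.connected hTH L ?_⟩
  intro a b a' b' h h' hc
  refine hL a b a' b' h h' (hinj ?_ ?_ hc)
  · have := hr s(a, b) h
    simp_all
  · have := hr s(a', b') h'
    simp_all

lemma Connected.exists_adj_boundary (hG : G.Connected) (P : V → Prop) {a b : V} (ha : P a)
    (hb : ¬ P b) : ∃ u v, G.Adj u v ∧ P u ∧ ¬ P v := by
  obtain ⟨p⟩ := hG a b
  obtain ⟨d, -, h1, h2⟩ := p.exists_boundary_dart {v | P v} ha hb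
  exact ⟨d.fst, d.snd, d.adj, h1, h2⟩

lemma Connected.exists_path_four (hG : G.Connected)
    (hD : ∀ v, ∃ a b, a ≠ b ∧ a ≠ v ∧ b ≠ v ∧ ¬ G.Adj v a ∧ ¬ G.Adj v b) :
    ∃ a b c d, [a, b, c, d].Nodup ∧ G.Adj a b ∧ G.Adj b c ∧ G.Adj c d := by
  have far : ∀ v, ∃ b z, G.Adj v b ∧ G.Adj b z ∧ z ≠ v ∧ ¬ G.Adj v z := by
    intro v
    obtain ⟨a, -, -, ha, -, hva, -⟩ := hD v
    obtain ⟨b, z, hbz, hb, hz⟩ := hG.exists_adj_boundary (fun w ↦ w = v ∨ G.Adj v w)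
      (Or.inl rfl) (by tauto : ¬ (a = v ∨ G.Adj v a))
    grind
  obtain ⟨v⟩ := hG.nonempty
  obtain ⟨a, u, hva, hau, huv, hvu⟩ := far v
  obtain ⟨b, z, hab, hbz, hza, haz⟩ := far a
  by_cases hbv : b = v
  · subst hbv
    refine ⟨z, b, a, u, ?_, hbz.symm, hva, hau⟩
    have := hva.ne; have := hau.ne; have := hbz.ne
    simp
    grind
  · refine ⟨z, b, a, v, ?_, hbz.symm, hab.symm, hva.symm⟩
    have := hva.ne; have := hab.ne; have := hbz.ne; have := hva.symm
    simp
    grind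

/-- Two vertex-disjoint paths on three vertices. -/
def HasTwoPathThree (G : SimpleGraph V) : Prop :=
  ∃ a b c a' b' c', [a, b, c, a', b', c'].Nodup ∧
    G.Adj a b ∧ G.Adj b c ∧ G.Adj a' b' ∧ G.Adj b' c'

lemma Connected.exists_path_five_or (hG : G.Connected)
    (hD : ∀ v, ∃ a b, a ≠ b ∧ a ≠ v ∧ b ≠ v ∧ ¬ G.Adj v a ∧ ¬ G.Adj v b) :
    (∃ a b c d e, [a, b, c, d, e].Nodup ∧ G.Adj a b ∧ G.Adj b c ∧ G.Adj c d ∧ G.Adj d e) ∨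
      HasTwoPathThree G := by
  obtain ⟨a, b, c, d, hn, hab, hbc, hcd⟩ := hG.exists_path_four hD
  rw [or_iff_not_imp_left]
  intro hno
  have hno' : ∀ a b c d e, [a, b, c, d, e].Nodup → G.Adj a b → G.Adj b c → G.Adj c d →
      ¬ G.Adj d e := by
    intro a b c d e h1 h2 h3 h4 h5
    exact hno ⟨a, b, c, d, e, h1, h2, h3, h4, h5⟩
  clear hno
  simp only [List.nodup_cons, List.mem_cons, List.not_mem_nil, List.nodup_nil, not_or, or_false,
    not_false_eq_true, and_true] at hn hno'
  have hfar : ∀ w, w ≠ a → w ≠ b → w ≠ c → w ≠ d → G.Adj b w ∨ G.Adj c w := by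
    intro w ha hb hc hd
    by_contra hw
    obtain ⟨p, q, hpq, hp, hq⟩ := hG.exists_adj_boundary
      (fun w ↦ w = a ∨ w = b ∨ w = c ∨ w = d ∨ G.Adj b w ∨ G.Adj c w) (Or.inl rfl)
      (by tauto : ¬ (w = a ∨ w = b ∨ w = c ∨ w = d ∨ G.Adj b w ∨ G.Adj c w))
    have hqp := hpq.symm
    have h1 := hab.symm
    have h2 := hbc.symm
    have h3 := hcd.symm
    rcases hp with rfl | rfl | rfl | rfl | hp | hp
    · have := hno' q p b c d
      grind
    · grind
    · grind
    · have := hno' a b c p q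
      grind
    · have := hno' q p b c d
      have := hp.symm
      grind [SimpleGraph.irrefl]
    · have := hno' a b c p q
      have := hno' q p c b a
      have := hp.symm
      grind [SimpleGraph.irrefl]
  obtain ⟨w, hwn, hbw⟩ : ∃ w, w ∉ [a, b, c, d] ∧ G.Adj b w := by
    by_contra! h
    obtain ⟨y, z, hyz, hyc, hzc, hy, hz⟩ := hD c
    simp only [List.mem_cons, List.not_mem_nil, not_or, or_false] at h
    have key : ∀ x, x ≠ c → ¬ G.Adj c x → x = a := by
      intro x hxc hx
      by_contra hxa
      have hxb : x ≠ b := by rintro rfl; exact hx hbc.symm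
      have hxd : x ≠ d := by rintro rfl; exact hx hcd
      exact (hfar x hxa hxb hxc hxd).elim (h x ⟨hxa, hxb, hxc, hxd⟩) hx
    exact hyz ((key y hyc hy).trans (key z hzc hz).symm)
  obtain ⟨w', hwn', hcw⟩ : ∃ w, w ∉ [a, b, c, d] ∧ G.Adj c w := by
    by_contra! h
    obtain ⟨y, z, hyz, hyb, hzb, hy, hz⟩ := hD b
    simp only [List.mem_cons, List.not_mem_nil, not_or, or_false] at h
    have key : ∀ x, x ≠ b → ¬ G.Adj b x → x = d := by
      intro x hxb hx
      by_contra hxd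
      have hxa : x ≠ a := by rintro rfl; exact hx hab.symm
      have hxc : x ≠ c := by rintro rfl; exact hx hbc
      exact (hfar x hxa hxb hxc hxd).elim hx (h x ⟨hxa, hxb, hxc, hxd⟩)
    exact hyz ((key y hyb hy).trans (key z hzb hz).symm)
  simp only [List.mem_cons, List.not_mem_nil, not_or, or_false] at hwn hwn'
  by_cases hww : w = w'
  · subst hww
    have := hno' a b w c d
    have := hcw.symm
    grind
  · exact ⟨a, b, w, d, c, w', by simp; grind, hab, hbw, hcd.symm, hcw⟩

lemma Connected.exists_matching_three_or [Fintype V] (hG : G.Connected)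
    (hcard : 6 ≤ Fintype.card V) {a b c d e : V} (hn : [a, b, c, d, e].Nodup)
    (hab : G.Adj a b) (hbc : G.Adj b c) (hcd : G.Adj c d) (hde : G.Adj d e) :
    (∃ p p' q q' r r', [p, p', q, q', r, r'].Nodup ∧ G.Adj p p' ∧ G.Adj q q' ∧ G.Adj r r') ∨
      HasTwoPathThree G := by
  classical
  obtain ⟨w, hw⟩ : ∃ w, w ∉ ({a, b, c, d, e} : Finset V) := by
    by_contra! h
    have h1 := Finset.card_le_card (fun x _ ↦ h x : Finset.univ ⊆ ({a, b, c, d, e} : Finset V))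
    have h2 := Finset.card_le_five (a := a) (b := b) (c := c) (d := d) (e := e)
    rw [Finset.card_univ] at h1
    omega
  obtain ⟨p, q, hpq, hp, hq⟩ := hG.exists_adj_boundary (· ∈ ({a, b, c, d, e} : Finset V))
    (by simp : a ∈ _) hw
  simp only [List.nodup_cons, List.mem_cons, List.not_mem_nil, List.nodup_nil, not_or, or_false,
    not_false_eq_true, and_true, Finset.mem_insert, Finset.mem_singleton] at hn hp hq
  rcases hp with rfl | rfl | rfl | rfl | rfl
  · exact Or.inl ⟨p, q, b, c, d, e, by simp; grind, hpq, hbc, hde⟩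
  · exact Or.inr ⟨a, p, q, c, d, e, by simp; grind, hab, hpq, hcd, hde⟩
  · exact Or.inl ⟨a, b, p, q, d, e, by simp; grind, hab, hpq, hde⟩
  · exact Or.inr ⟨a, b, c, q, p, e, by simp; grind, hab, hbc, hpq.symm, hde⟩
  · exact Or.inl ⟨a, b, c, d, p, q, by simp; grind, hab, hcd, hpq⟩

lemma exists_isCFCColoring_of_matching_three [Fintype V] (hT : T.IsTree) (hTH : T ≤ H)
    (hcard : 4 ≤ Fintype.card V) {p p' q q' r r' : V} (hn : [p, p', q, q', r, r'].Nodup)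
    (hp : T.Adj p p') (hq : T.Adj q q') (hr : T.Adj r r') :
    ∃ c : Sym2 V → ℕ, (∀ d ∈ H.edgeSet, c d < Fintype.card V - 3) ∧ IsCFCColoring H c := by
  classical
  simp only [List.nodup_cons, List.mem_cons, List.not_mem_nil, List.nodup_nil, not_or, or_false,
    not_false_eq_true, and_true] at hn
  refine exists_isCFCColoring_of_isTree hT hTH hcard (e := s(q, q')) (f := s(r, r')) hq hr
    (by simp; grind) (fun e ↦ if e = s(q, q') ∨ e = s(r, r') then s(p, p') else e) ?_
    (fun v ↦ if v = p ∨ v = p' then 0 else if v = q ∨ v = q' then 1 else 2) ?_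
  · intro d hd
    split_ifs with h
    · exact ⟨hp, by simp; grind, by simp; grind⟩
    · exact ⟨hd, by tauto, by tauto⟩
  · intro a b a' b' h h' hrr
    rw [or_iff_not_imp_left]
    intro hne
    have hcases : (s(a, b) = s(p, p') ∨ s(a, b) = s(q, q') ∨ s(a, b) = s(r, r')) ∧
        (s(a', b') = s(p, p') ∨ s(a', b') = s(q, q') ∨ s(a', b') = s(r, r')) := by
      generalize s(a, b) = x at *
      generalize s(a', b') = y at *
      grind
    obtain ⟨h1, h2⟩ := hcases
    clear hrr h h' hp hq hr
    rcases h1 with h1 | h1 | h1 <;> rcases h2 with h2 | h2 | h2 <;>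
      first
      | exact absurd (h1.trans h2.symm) hne
      | (rw [Sym2.eq_iff] at h1 h2; clear hne; grind)

lemma HasTwoPathThree.exists_isCFCColoring [Fintype V] (h : HasTwoPathThree T) (hT : T.IsTree)
    (hTH : T ≤ H) (hcard : 4 ≤ Fintype.card V) :
    ∃ c : Sym2 V → ℕ, (∀ d ∈ H.edgeSet, c d < Fintype.card V - 3) ∧ IsCFCColoring H c := by
  classical
  obtain ⟨u, v, w, u', v', w', hn, huv, hvw, huv', hvw'⟩ := h
  simp only [List.nodup_cons, List.mem_cons, List.not_mem_nil, List.nodup_nil, not_or, or_false,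
    not_false_eq_true, and_true] at hn
  refine exists_isCFCColoring_of_isTree hT hTH hcard (e := s(u', v')) (f := s(v', w')) huv' hvw'
    (by simp; grind)
    (fun e ↦ if e = s(u', v') then s(u, v) else if e = s(v', w') then s(v, w) else e) ?_
    (fun x ↦ if x = u ∨ x = v ∨ x = w then 0 else 1) ?_
  · intro d hd
    split_ifs with h h
    · exact ⟨huv, by simp; grind, by simp; grind⟩
    · exact ⟨hvw, by simp; grind, by simp; grind⟩
    · exact ⟨hd, by tauto, by tauto⟩
  · intro a b a' b' h h' hrr
    rw [or_iff_not_imp_left]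
    intro hne
    have hcases : (s(a, b) = s(u, v) ∧ s(a', b') = s(u', v')) ∨
        (s(a, b) = s(u', v') ∧ s(a', b') = s(u, v)) ∨
        (s(a, b) = s(v, w) ∧ s(a', b') = s(v', w')) ∨
        (s(a, b) = s(v', w') ∧ s(a', b') = s(v, w)) := by
      have hdist : s(u, v) ≠ s(v, w) := by simp; grind
      generalize s(a, b) = x at *
      generalize s(a', b') = y at *
      grind
    clear hrr h h' huv hvw huv' hvw'
    rcases hcases with ⟨h1, h2⟩ | ⟨h1, h2⟩ | ⟨h1, h2⟩ | ⟨h1, h2⟩ <;>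
      (rw [Sym2.eq_iff] at h1 h2; clear hne; grind)

/-- The vertices `u` and `v` are joined by a path with exactly one edge in `F`. -/
def JoinedOnceThrough (G : SimpleGraph V) (F : Set (Sym2 V)) (u v : V) : Prop :=
  ∃ p : G.Walk u v, p.IsPath ∧ ∃ e ∈ p.edges, e ∈ F ∧ ∀ e' ∈ p.edges, e' ∈ F → e' = e

lemma JoinedOnceThrough.symm {F : Set (Sym2 V)} {u v : V} (h : G.JoinedOnceThrough F u v) :
    G.JoinedOnceThrough F v u := by
  obtain ⟨p, hp, e, he, h⟩ := h
  exact ⟨p.reverse, hp.reverse, e, by simpa using he, by simpa using h⟩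

lemma joinedOnceThrough_two {F : Set (Sym2 V)} {u a v : V} (hn : [u, a, v].Nodup)
    (h1 : G.Adj u a) (h2 : G.Adj a v) {e : Sym2 V} (he : e ∈ [s(u, a), s(a, v)]) (heF : e ∈ F)
    (h : ∀ e' ∈ [s(u, a), s(a, v)], e' ∈ F → e' = e) : G.JoinedOnceThrough F u v :=
  ⟨.cons h1 (.cons h2 .nil), by simpa [Walk.isPath_def] using hn, e, by simpa using he, heF,
    by simpa using h⟩

lemma joinedOnceThrough_three {F : Set (Sym2 V)} {u a b v : V} (hn : [u, a, b, v].Nodup)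
    (h1 : G.Adj u a) (h2 : G.Adj a b) (h3 : G.Adj b v) {e : Sym2 V}
    (he : e ∈ [s(u, a), s(a, b), s(b, v)]) (heF : e ∈ F)
    (h : ∀ e' ∈ [s(u, a), s(a, b), s(b, v)], e' ∈ F → e' = e) : G.JoinedOnceThrough F u v :=
  ⟨.cons h1 (.cons h2 (.cons h3 .nil)), by simpa [Walk.isPath_def] using hn, e,
    by simpa using he, heF, by simpa using h⟩

lemma joinedOnceThrough_four {F : Set (Sym2 V)} {u a b d v : V} (hn : [u, a, b, d, v].Nodup)
    (h1 : G.Adj u a) (h2 : G.Adj a b) (h3 : G.Adj b d) (h4 : G.Adj d v) {e : Sym2 V}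
    (he : e ∈ [s(u, a), s(a, b), s(b, d), s(d, v)]) (heF : e ∈ F)
    (h : ∀ e' ∈ [s(u, a), s(a, b), s(b, d), s(d, v)], e' ∈ F → e' = e) :
    G.JoinedOnceThrough F u v :=
  ⟨.cons h1 (.cons h2 (.cons h3 (.cons h4 .nil))), by simpa [Walk.isPath_def] using hn, e,
    by simpa using he, heF, by simpa using h⟩

lemma exists_isCFCColoring_two (F : Set (Sym2 V))
    (hF : ∀ u v, u ≠ v → ¬ G.Adj u v → G.JoinedOnceThrough F u v) :
    ∃ c : Sym2 V → ℕ, (∀ e ∈ G.edgeSet, c e < 2) ∧ IsCFCColoring G c := by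
  classical
  refine ⟨fun e ↦ if e ∈ F then 1 else 0, fun e _ ↦ by dsimp only; split_ifs <;> simp, fun u v huv ↦ ?_⟩
  by_cases hadj : G.Adj u v
  · exact ⟨Path.singleton hadj, s(u, v), by simp [Path.singleton], by simp [Path.singleton]⟩
  · obtain ⟨p, hp, e, he, heF, h⟩ := hF u v huv hadj
    refine ⟨⟨p, hp⟩, e, he, fun e' he' hc ↦ h e' he' ?_⟩
    by_contra h'
    simp [heF, h'] at hc

/-- If two parts are completely joined except for one missing edge `xy`, then non-adjacent vertices
of the part of `x` are joined by a path through an edge `ab` avoiding `x` and `y`. -/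
lemma joinedOnceThrough_of_same_part {A : V → Prop} {x y a b : V} (hy : ¬ A y)
    (hadj : ∀ u v, A u → ¬ A v → ¬ (u = x ∧ v = y) → G.Adj u v)
    (ha : A a) (hax : a ≠ x) (hb : ¬ A b) (hby : b ≠ y) {u v : V} (hu : A u) (hv : A v)
    (huv : u ≠ v) : G.JoinedOnceThrough {s(a, b)} u v := by
  have hne : ∀ {c d}, A c → ¬ A d → c ≠ d := fun h1 h2 h ↦ h2 (h ▸ h1)
  have hab : G.Adj a b := hadj a b ha hb (by tauto)
  have hab' : ∀ c, A c → G.Adj c b := fun c hc ↦ hadj c b hc hb (by tauto)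
  have from_a : ∀ v, A v → a ≠ v → G.JoinedOnceThrough {s(a, b)} a v := fun v hv hav ↦
    joinedOnceThrough_two (e := s(a, b)) (a := b) (by simp; grind) hab (hab' v hv).symm (by simp)
      rfl (fun _ _ h ↦ h)
  have of_ne_x : ∀ u v, A u → A v → u ≠ v → a ≠ u → a ≠ v → u ≠ x →
      G.JoinedOnceThrough {s(a, b)} u v := fun u v hu hv huv hau hav hux ↦
    joinedOnceThrough_four (e := s(a, b)) (a := y) (b := a) (d := b) (by simp; grind)
      (hadj u y hu hy (by tauto)) (hadj a y ha hy (by tauto)).symm hab (hab' v hv).symm (by simp)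
      rfl (fun _ _ h ↦ h)
  by_cases hau : a = u
  · subst hau
    exact from_a v hv huv
  by_cases hav : a = v
  · subst hav
    exact (from_a u hu hau).symm
  by_cases hux : u = x
  · exact (of_ne_x v u hv hu huv.symm hav hau (by rw [← hux]; exact huv.symm)).symm
  · exact of_ne_x u v hu hv huv hau hav hux

lemma exists_isCFCColoring_two_of_parts {A : V → Prop} {x y a b : V} (hx : A x) (hy : ¬ A y)
    (hadj : ∀ u v, A u → ¬ A v → ¬ (u = x ∧ v = y) → G.Adj u v)
    (ha : A a) (hax : a ≠ x) (hb : ¬ A b) (hby : b ≠ y) :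
    ∃ c : Sym2 V → ℕ, (∀ e ∈ G.edgeSet, c e < 2) ∧ IsCFCColoring G c := by
  have hne : ∀ {c d}, A c → ¬ A d → c ≠ d := fun h1 h2 h ↦ h2 (h ▸ h1)
  have across : G.JoinedOnceThrough {s(a, b)} x y :=
    joinedOnceThrough_three (e := s(a, b)) (a := b) (b := a) (by simp; grind)
      (hadj x b hx hb (by tauto)) (hadj a b ha hb (by tauto)).symm (hadj a y ha hy (by tauto))
      (by simp) rfl (fun _ _ h ↦ h)
  refine exists_isCFCColoring_two {s(a, b)} fun u v huv hn ↦ ?_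
  by_cases hu : A u <;> by_cases hv : A v
  · exact joinedOnceThrough_of_same_part hy hadj ha hax hb hby hu hv huv
  · obtain ⟨rfl, rfl⟩ : u = x ∧ v = y := by
      by_contra h
      exact hn (hadj u v hu hv h)
    exact across
  · obtain ⟨rfl, rfl⟩ : v = x ∧ u = y := by
      by_contra h
      exact hn (hadj v u hv hu h).symm
    exact across.symm
  · rw [Sym2.eq_swap]
    exact joinedOnceThrough_of_same_part (A := fun v ↦ ¬ A v) (x := y) (y := x) (not_not.2 hx)
      (fun u v hu hv h ↦ (hadj v u (not_not.1 hv) hu (by tauto)).symm) hb hby (not_not.2 ha) hax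
      hu hv huv

/-- If `x` is adjacent to all vertices but `y` and there are no vertices of degree one, then the
neighbours of `x` can be split so that every neighbour of `x` not adjacent to `y` has a neighbour
in the opposite part, while `y` has neighbours in both parts. -/
lemma exists_dominating_split [Finite V] {x y : V} (hxy : x ≠ y) (hyx : ¬ G.Adj x y)
    (hdeg : ∀ v w, v ≠ w → ∃ z, z ≠ w ∧ G.Adj v z) :
    ∃ S : Set V, x ∉ S ∧ y ∉ S ∧ (∃ s ∈ S, G.Adj y s) ∧ (∃ t ∉ S, t ≠ x ∧ G.Adj y t) ∧
      (∀ v ∈ S, ¬ G.Adj v y → ∃ w ∉ S, w ≠ x ∧ w ≠ y ∧ G.Adj v w) ∧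
      (∀ v ∉ S, v ≠ x → v ≠ y → ¬ G.Adj v y → ∃ w ∈ S, G.Adj v w) := by
  obtain ⟨s, -, hs⟩ := hdeg y x hxy.symm
  obtain ⟨t, hts, ht⟩ := hdeg y s hs.ne
  have hsx : s ≠ x := by rintro rfl; exact hyx hs.symm
  have htx : t ≠ x := by rintro rfl; exact hyx ht.symm
  let P : Set V → Prop := fun S ↦ x ∉ S ∧ y ∉ S ∧ s ∈ S ∧ t ∉ S ∧
    ∀ v ∉ S, v ≠ x → v ≠ y → ¬ G.Adj v y → ∃ w ∈ S, G.Adj v w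
  have hP : P {v | v ≠ x ∧ v ≠ y ∧ v ≠ t} := by
    refine ⟨by simp, by simp, ⟨hsx, hs.ne', hts.symm⟩, by simp, fun v hv hvx hvy hvy' ↦ ?_⟩
    have : v = t := by simp at hv; tauto
    exact absurd (this ▸ ht.symm) hvy'
  obtain ⟨S, hS, hmin⟩ := (Set.toFinite {S | P S}).exists_minimal ⟨_, hP⟩
  obtain ⟨hxS, hyS, hsS, htS, hdom⟩ := hS
  refine ⟨S, hxS, hyS, ⟨s, hsS, hs⟩, ⟨t, htS, htx, ht⟩, fun v hv hvy ↦ ?_, hdom⟩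
  by_contra! hcon
  have hvx : v ≠ x := by rintro rfl; exact hxS hv
  have hout : ∀ w ∉ S, w ≠ x → w ≠ y → ¬ G.Adj w v := fun w h1 h2 h3 h ↦ hcon w h1 h2 h3 h.symm
  have hPv : P (S \ {v}) := by
    refine ⟨by simp [hxS], by simp [hyS], ⟨hsS, ?_⟩, by simp [htS], fun w hw hwx hwy hwy' ↦ ?_⟩
    · rintro rfl
      exact hvy hs.symm
    · by_cases hwv : w = v
      · subst hwv
        obtain ⟨z, hzx, hz⟩ := hdeg w x hvx
        have hzy : z ≠ y := by rintro rfl; exact hvy hz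
        refine ⟨z, ⟨?_, hz.ne'⟩, hz⟩
        by_contra hzS
        exact hcon z hzS hzx hzy hz
      · have hwS : w ∉ S := fun h ↦ hw ⟨h, hwv⟩
        obtain ⟨z, hz, hwz⟩ := hdom w hwS hwx hwy hwy'
        refine ⟨z, ⟨hz, ?_⟩, hwz⟩
        rintro rfl
        exact hout w hwS hwx hwy hwz
  exact (hmin hPv Set.sdiff_subset hv).2 rfl

lemma exists_isCFCColoring_two_of_star [Finite V] {x y : V} (hxy : x ≠ y) (hyx : ¬ G.Adj x y)
    (hx : ∀ v, v ≠ x → v ≠ y → G.Adj x v) (hdeg : ∀ v w, v ≠ w → ∃ z, z ≠ w ∧ G.Adj v z) :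
    ∃ c : Sym2 V → ℕ, (∀ e ∈ G.edgeSet, c e < 2) ∧ IsCFCColoring G c := by
  obtain ⟨S, hxS, hyS, ⟨s, hs, hys⟩, ⟨t, ht, htx, hyt⟩, hin, hout⟩ :=
    exists_dominating_split hxy hyx hdeg
  let F : Set (Sym2 V) := {e | ∃ v ∈ S, e = s(x, v)}
  have hF : ∀ u v, s(u, v) ∈ F ↔ (u = x ∧ v ∈ S) ∨ (v = x ∧ u ∈ S) := by
    intro u v
    simp only [F, Set.mem_ofPred_eq, Sym2.eq_iff]
    grind
  have hne : ∀ {c d}, c ∈ S → d ∉ S → c ≠ d := fun h1 h2 h ↦ h2 (h ▸ h1)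
  have hsx := hne hs hxS
  have hsy := hne hs hyS
  have hty := hyt.ne'
  have hxs := hx s hsx hsy
  have hxt := hx t htx hty
  have x_y : G.JoinedOnceThrough F x y :=
    joinedOnceThrough_two (e := s(x, s)) (a := s) (by simp; grind) hxs hys.symm (by simp)
      (by simp [hF, hs]) (by simp [hF]; grind)
  have y_in : ∀ v ∈ S, ¬ G.Adj y v → G.JoinedOnceThrough F y v := fun v hv hyv ↦
    joinedOnceThrough_three (e := s(x, v)) (a := t) (b := x) (by simp; grind) hyt hxt.symm
      (hx v (hne hv hxS) (hne hv hyS)) (by simp) (by simp [hF, hv]) (by simp [hF]; grind)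
  have y_out : ∀ v ∉ S, v ≠ x → v ≠ y → ¬ G.Adj y v → G.JoinedOnceThrough F y v :=
    fun v hv hvx hvy hyv ↦
    joinedOnceThrough_three (e := s(x, s)) (a := s) (b := x) (by simp; grind) hys hxs.symm
      (hx v hvx hvy) (by simp [Sym2.eq_swap]) (by simp [hF, hs]) (by simp [hF]; grind)
  have in_out : ∀ u v, u ∈ S → v ∉ S → v ≠ x → v ≠ y → G.JoinedOnceThrough F u v :=
    fun u v hu hv hvx hvy ↦
    joinedOnceThrough_two (e := s(x, u)) (a := x) (by simp; grind)
      (hx u (hne hu hxS) (hne hu hyS)).symm (hx v hvx hvy) (by simp [Sym2.eq_swap])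
      (by simp [hF, hu]) (by simp [hF]; grind)
  have in_in_of : ∀ u v, u ∈ S → v ∈ S → u ≠ v → ¬ G.Adj u v → ¬ G.Adj u y →
      G.JoinedOnceThrough F u v := by
    intro u v hu hv huv hn huy
    obtain ⟨w, hw, hwx, hwy, huw⟩ := hin u hu huy
    exact joinedOnceThrough_three (e := s(x, v)) (a := w) (b := x) (by simp; grind) huw
      (hx w hwx hwy).symm (hx v (hne hv hxS) (hne hv hyS)) (by simp) (by simp [hF, hv])
      (by simp [hF]; grind)
  have in_in : ∀ u v, u ∈ S → v ∈ S → u ≠ v → ¬ G.Adj u v → G.JoinedOnceThrough F u v := by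
    intro u v hu hv huv hn
    by_cases huy : G.Adj u y
    · by_cases hvy : G.Adj v y
      · exact joinedOnceThrough_four (e := s(x, u)) (a := x) (b := t) (d := y) (by simp; grind)
          (hx u (hne hu hxS) (hne hu hyS)).symm hxt hyt.symm hvy.symm (by simp [Sym2.eq_swap])
          (by simp [hF, hu]) (by simp [hF]; grind)
      · exact (in_in_of v u hv hu huv.symm (fun h ↦ hn h.symm) hvy).symm
    · exact in_in_of u v hu hv huv hn huy
  have out_out_of : ∀ u v, u ∉ S → v ∉ S → u ≠ x → u ≠ y → v ≠ x → v ≠ y → u ≠ v →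
      ¬ G.Adj u y → G.JoinedOnceThrough F u v := by
    intro u v hu hv hux huy hvx hvy huv huy'
    obtain ⟨w, hw, huw⟩ := hout u hu hux huy huy'
    exact joinedOnceThrough_three (e := s(x, w)) (a := w) (b := x) (by simp; grind) huw
      (hx w (hne hw hxS) (hne hw hyS)).symm (hx v hvx hvy) (by simp [Sym2.eq_swap])
      (by simp [hF, hw]) (by simp [hF]; grind)
  have out_out : ∀ u v, u ∉ S → v ∉ S → u ≠ x → u ≠ y → v ≠ x → v ≠ y → u ≠ v →
      G.JoinedOnceThrough F u v := by
    intro u v hu hv hux huy hvx hvy huv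
    by_cases huy' : G.Adj u y
    · by_cases hvy' : G.Adj v y
      · exact joinedOnceThrough_four (e := s(x, s)) (a := x) (b := s) (d := y) (by simp; grind)
          (hx u hux huy).symm hxs hys.symm hvy'.symm (by simp)
          (by simp [hF, hs]) (by simp [hF]; grind)
      · exact (out_out_of v u hv hu hvx hvy hux huy huv.symm hvy').symm
    · exact out_out_of u v hu hv hux huy hvx hvy huv huy'
  refine exists_isCFCColoring_two F fun u v huv hn ↦ ?_
  have hn' : ¬ G.Adj v u := fun h ↦ hn h.symm
  have from_x : ∀ v, x ≠ v → ¬ G.Adj x v → G.JoinedOnceThrough F x v := by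
    intro v hxv hn
    by_cases hvy : v = y
    · exact hvy ▸ x_y
    · exact absurd (hx v hxv.symm hvy) hn
  have from_y : ∀ v, y ≠ v → v ≠ x → ¬ G.Adj y v → G.JoinedOnceThrough F y v := by
    intro v hyv hvx hn
    by_cases hv : v ∈ S
    · exact y_in v hv hn
    · exact y_out v hv hvx hyv.symm hn
  by_cases hux : u = x
  · subst hux
    exact from_x v huv hn
  by_cases hvx : v = x
  · subst hvx
    exact (from_x u huv.symm hn').symm
  by_cases huy : u = y
  · subst huy
    exact from_y v huv hvx hn
  by_cases hvy : v = y
  · subst hvy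
    exact (from_y u huv.symm hux hn').symm
  by_cases hu : u ∈ S <;> by_cases hv : v ∈ S
  · exact in_in u v hu hv huv hn
  · exact in_out u v hu hv hvx hvy
  · exact (in_out v u hv hu hux huy).symm
  · exact out_out u v hu hv hux huy hvx hvy huv

lemma isAcyclic_pathGraph_five : (pathGraph 5).IsAcyclic := by
  classical
  refine IsTree.isAcyclic (isTree_iff_connected_and_card.2 ⟨pathGraph_connected 4, ?_⟩)
  have h : (pathGraph 5).edgeSet =
      (({s(0, 1), s(1, 2), s(2, 3), s(3, 4)} : Finset (Sym2 (Fin 5))) : Set (Sym2 (Fin 5))) := by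
    ext e
    induction e with | h a b =>
    simp only [mem_edgeSet, pathGraph_adj, Finset.mem_coe]
    revert a b
    decide
  rw [h, Nat.card_coe_set_eq, Set.ncard_coe_finset, Nat.card_fin]
  rfl

lemma cfcNum_pathGraph_five : cfcNum (pathGraph 5) = 3 := by
  have hbound : ∀ e ∈ (pathGraph 5).edgeSet,
      (if e = s(1, 2) then 1 else if e = s(3, 4) then 2 else 0) < 3 := fun e _ ↦ by
    split_ifs <;> simp
  have hcol : IsCFCColoring (pathGraph 5)
      fun e ↦ if e = s(1, 2) then 1 else if e = s(3, 4) then 2 else 0 := by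
    refine isCFCColoring_of_labelling (pathGraph_connected 4) le_rfl (fun v ↦ v.val / 2) ?_
    simp only [pathGraph_adj]
    decide
  refine le_antisymm (cfcNum_le hbound hcol) ?_
  obtain ⟨c, hk, hc⟩ := Nat.sInf_mem (s := {k | ∃ c : Sym2 (Fin 5) → ℕ,
    (∀ e ∈ (pathGraph 5).edgeSet, c e < k) ∧ IsCFCColoring (pathGraph 5) c}) ⟨3, _, hbound, hcol⟩
  change ∀ e ∈ _, c e < cfcNum (pathGraph 5) at hk
  by_contra! hlt
  have h01 : (pathGraph 5).Adj 0 1 := by simp [pathGraph_adj]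
  have h12 : (pathGraph 5).Adj 1 2 := by simp [pathGraph_adj]
  have h23 : (pathGraph 5).Adj 2 3 := by simp [pathGraph_adj]
  have h34 : (pathGraph 5).Adj 3 4 := by simp [pathGraph_adj]
  have key : ∀ {u v : Fin 5} (p : (pathGraph 5).Walk u v), u ≠ v → p.IsPath →
      ∃ e ∈ p.edges, ∀ e' ∈ p.edges, c e' = c e → e' = e := by
    intro u v p huv hp
    obtain ⟨q, h⟩ := hc u v huv
    rwa [(isAcyclic_pathGraph_five.subsingleton_path u v).elim q ⟨p, hp⟩] at h
  have k02 := key (.cons h01 (.cons h12 .nil)) (by decide) (by simp [Walk.isPath_def])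
  have k13 := key (.cons h12 (.cons h23 .nil)) (by decide) (by simp [Walk.isPath_def])
  have k24 := key (.cons h23 (.cons h34 .nil)) (by decide) (by simp [Walk.isPath_def])
  have k04 := key (.cons h01 (.cons h12 (.cons h23 (.cons h34 .nil)))) (by decide)
    (by simp [Walk.isPath_def])
  have b01 := hk s(0, 1) h01
  have b12 := hk s(1, 2) h12
  have b23 := hk s(2, 3) h23
  have b34 := hk s(3, 4) h34
  simp at k02 k13 k24 k04
  omega

lemma nonempty_iso_pathGraph_five [Fintype V] (hG : G.Connected) (hcard : Fintype.card V = 5)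
    (hD : ∀ v, ∃ a b, a ≠ b ∧ a ≠ v ∧ b ≠ v ∧ ¬ G.Adj v a ∧ ¬ G.Adj v b)
    {A : V → Prop} {x y : V} (hx : A x) (hy : ¬ A y)
    (hA : ∀ u v, A u → ¬ A v → G.Adj u v → u = x ∧ v = y) : Nonempty (G ≃g pathGraph 5) := by
  classical
  rcases hG.exists_path_five_or hD with ⟨a, b, c, d, e, hn, hab, hbc, hcd, hde⟩ | h
  · have hinj : Function.Injective ![a, b, c, d, e] := by
      rw [← List.nodup_ofFn]
      simpa using hn
    have hbij : Function.Bijective ![a, b, c, d, e] :=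
      (Fintype.bijective_iff_injective_and_card _).2 ⟨hinj, by simp [hcard]⟩
    have hall : ∀ v, v = a ∨ v = b ∨ v = c ∨ v = d ∨ v = e := by
      intro v
      obtain ⟨i, rfl⟩ := hbij.2 v
      fin_cases i <;> simp
    simp only [List.nodup_cons, List.mem_cons, List.not_mem_nil, List.nodup_nil, not_or, or_false,
      not_false_eq_true, and_true] at hn
    have hb : ¬ G.Adj b d ∧ ¬ G.Adj b e := by
      obtain ⟨p, q, hpq, hp, hq, hap, haq⟩ := hD b
      have := hab.symm
      have := hall p
      have := hall q
      grind
    have hc : ¬ G.Adj c a ∧ ¬ G.Adj c e := by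
      obtain ⟨p, q, hpq, hp, hq, hap, haq⟩ := hD c
      have := hbc.symm
      have := hall p
      have := hall q
      grind
    have hd : ¬ G.Adj d a ∧ ¬ G.Adj d b := by
      obtain ⟨p, q, hpq, hp, hq, hap, haq⟩ := hD d
      have := hcd.symm
      have := hall p
      have := hall q
      grind
    have hae : ¬ G.Adj a e := by
      intro hae
      have := hab.symm
      have := hbc.symm
      have := hcd.symm
      have := hde.symm
      have := hae.symm
      have := hall x
      have := hall y
      by_cases A a <;> by_cases A b <;> by_cases A c <;> by_cases A d <;> by_cases A e <;> grind
    refine ⟨RelIso.symm ⟨Equiv.ofBijective _ hbij, ?_⟩⟩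
    intro i j
    simp only [Equiv.ofBijective_apply, pathGraph_adj]
    have := fun u v ↦ G.adj_comm u v
    fin_cases i <;> fin_cases j <;> simp <;> grind
  · obtain ⟨a, b, c, a', b', c', hn, -⟩ := h
    have := hn.length_le_card
    simp [hcard] at this

lemma exists_isCFCColoring_of_six_le [Fintype V] (hG : G.Connected) (hcard : 6 ≤ Fintype.card V)
    (hD : ∀ v, ∃ a b, a ≠ b ∧ a ≠ v ∧ b ≠ v ∧ ¬ G.Adj v a ∧ ¬ G.Adj v b) :
    ∃ c : Sym2 V → ℕ, (∀ d ∈ G.edgeSet, c d < Fintype.card V - 3) ∧ IsCFCColoring G c := by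
  obtain ⟨T, hTG, hT⟩ := hG.exists_isTree_le
  have hDT : ∀ v, ∃ a b, a ≠ b ∧ a ≠ v ∧ b ≠ v ∧ ¬ T.Adj v a ∧ ¬ T.Adj v b := by
    intro v
    obtain ⟨a, b, hab, ha, hb, hva, hvb⟩ := hD v
    exact ⟨a, b, hab, ha, hb, fun h ↦ hva (hTG h), fun h ↦ hvb (hTG h)⟩
  have of_two : HasTwoPathThree T → _ := fun h ↦ h.exists_isCFCColoring hT hTG (by omega)
  rcases hT.connected.exists_path_five_or hDT with ⟨a, b, c, d, e, hn, hab, hbc, hcd, hde⟩ | h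
  · rcases hT.connected.exists_matching_three_or hcard hn hab hbc hcd hde with
      ⟨p, p', q, q', r, r', hn, hp, hq, hr⟩ | h
    · exact exists_isCFCColoring_of_matching_three hT hTG (by omega) hn hp hq hr
    · exact of_two h
  · exact of_two h

lemma exists_adj_ne_of_forall_not_isBridge (hGb : ∀ e : Sym2 V, ¬ G.IsBridge e) {v w : V}
    (hvw : v ≠ w) : ∃ z, z ≠ w ∧ G.Adj v z := by
  have h := hGb s(v, w)
  rw [isBridge_iff, not_not] at h
  obtain ⟨p⟩ := h
  cases p with
  | nil => exact absurd rfl hvw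
  | @cons _ z _ h q =>
    rw [deleteEdges_adj] at h
    exact ⟨z, by rintro rfl; exact h.2 rfl, h.1⟩

/-- A bridge splits the vertices in two parts with no other edge between them. -/
lemma IsBridge.exists_parts {e : Sym2 V} (he : G.IsBridge e) :
    ∃ (A : V → Prop) (x y : V), A x ∧ ¬ A y ∧
      ∀ u v, A u → ¬ A v → G.Adj u v → u = x ∧ v = y := by
  induction e with | h x y =>
  rw [isBridge_iff] at he
  refine ⟨fun v ↦ (G.deleteEdges {s(x, y)}).Reachable x v, x, y, .rfl, he, ?_⟩
  intro u v hu hv huv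
  have h : s(u, v) = s(x, y) := by
    by_contra h
    exact hv (hu.trans (Adj.reachable (deleteEdges_adj.2 ⟨huv, h⟩)))
  rcases Sym2.eq_iff.1 h with h | ⟨rfl, rfl⟩
  · exact h
  · exact absurd hu he

lemma exists_isCFCColoring_two_of_compl_isBridge [Finite V]
    (hGb : ∀ e : Sym2 V, ¬ G.IsBridge e) (hGc : Gᶜ.Connected) {e : Sym2 V} (he : Gᶜ.IsBridge e) :
    ∃ c : Sym2 V → ℕ, (∀ e ∈ G.edgeSet, c e < 2) ∧ IsCFCColoring G c := by
  obtain ⟨A, x, y, hx, hy, hA⟩ := he.exists_parts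
  have hxy : x ≠ y := by rintro rfl; exact hy hx
  have hadj : ∀ u v, A u → ¬ A v → ¬ (u = x ∧ v = y) → G.Adj u v := by
    intro u v hu hv h
    by_contra huv
    refine h (hA u v hu hv ((compl_adj _ _ _).2 ⟨?_, huv⟩))
    rintro rfl
    exact hv hu
  have hnxy : ¬ G.Adj x y := by
    obtain ⟨u, v, huv, hu, hv⟩ := hGc.exists_adj_boundary A hx hy
    obtain ⟨rfl, rfl⟩ := hA u v hu hv huv
    exact ((compl_adj _ _ _).1 huv).2
  have hdeg : ∀ v w, v ≠ w → ∃ z, z ≠ w ∧ G.Adj v z := fun v w h ↦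
    exists_adj_ne_of_forall_not_isBridge hGb h
  by_cases ha : ∃ a, A a ∧ a ≠ x
  · obtain ⟨a, ha, hax⟩ := ha
    by_cases hb : ∃ b, ¬ A b ∧ b ≠ y
    · obtain ⟨b, hb, hby⟩ := hb
      exact exists_isCFCColoring_two_of_parts hx hy hadj ha hax hb hby
    · push Not at hb
      refine exists_isCFCColoring_two_of_star hxy.symm (fun h ↦ hnxy h.symm) (fun v hvy hvx ↦ ?_)
        hdeg
      exact (hadj v y (by by_contra h; exact hvy (hb v h)) hy (by tauto)).symm
  · push Not at ha
    exact exists_isCFCColoring_two_of_star hxy hnxy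
      (fun v hvx hvy ↦ hadj x v hx (fun h ↦ hvx (ha v h)) (by tauto)) hdeg

end SimpleGraph

/-- Nordhaus–Gaddum bounds when G is 2-edge-connected (n ≥ 5) and Ḡ is connected
with a cut-edge; equality in the upper bounds holds iff Ḡ ≅ P_5. -/
theorem nordhausGaddum_twoEdgeConnected {V : Type*} [Fintype V] (G : SimpleGraph V)
    (n : ℕ) (hn : Fintype.card V = n) (h5 : 5 ≤ n)
    (hG : G.Connected) (hGb : ∀ e : Sym2 V, ¬ G.IsBridge e)
    (hGc : Gᶜ.Connected) (hGcb : ∃ e : Sym2 V, Gᶜ.IsBridge e) :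
    (4 ≤ cfcNum G + cfcNum Gᶜ ∧ cfcNum G + cfcNum Gᶜ ≤ n) ∧
    (4 ≤ cfcNum G * cfcNum Gᶜ ∧ cfcNum G * cfcNum Gᶜ ≤ 2 * (n - 2)) ∧
    (cfcNum G + cfcNum Gᶜ = n ↔ Nonempty (Gᶜ ≃g SimpleGraph.pathGraph 5)) ∧
    (cfcNum G * cfcNum Gᶜ = 2 * (n - 2) ↔ Nonempty (Gᶜ ≃g SimpleGraph.pathGraph 5)) := by
  have hD : ∀ v, ∃ a b, a ≠ b ∧ a ≠ v ∧ b ≠ v ∧ ¬ Gᶜ.Adj v a ∧ ¬ Gᶜ.Adj v b := by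
    intro v
    have : Nontrivial V := Fintype.one_lt_card_iff_nontrivial.1 (by omega)
    obtain ⟨w, hw⟩ := exists_ne v
    obtain ⟨a, -, ha⟩ := exists_adj_ne_of_forall_not_isBridge hGb hw.symm
    obtain ⟨b, hba, hb⟩ := exists_adj_ne_of_forall_not_isBridge hGb ha.ne
    exact ⟨a, b, hba.symm, ha.ne', hb.ne', by simp [ha], by simp [hb]⟩
  obtain ⟨e, he⟩ := hGcb
  obtain ⟨A, x, y, hx, hy, hA⟩ := he.exists_parts
  obtain ⟨u, v, huv, -, -⟩ := hGc.exists_adj_boundary A hx hy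
  obtain ⟨v₀⟩ := hG.nonempty
  obtain ⟨a, -, -, ha, -, hva, -⟩ := hD v₀
  obtain ⟨c, hc, hcG⟩ := exists_isCFCColoring_two_of_compl_isBridge hGb hGc he
  have hG2 : cfcNum G = 2 :=
    le_antisymm (cfcNum_le hc hcG) (two_le_cfcNum hc hcG huv.ne ((compl_adj _ _ _).1 huv).2)
  have hiso : Nonempty (Gᶜ ≃g pathGraph 5) → n = 5 ∧ cfcNum Gᶜ = 3 := by
    rintro ⟨f⟩
    refine ⟨?_, (cfcNum_congr f).trans cfcNum_pathGraph_five⟩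
    rw [← hn, Fintype.card_congr f.toEquiv, Fintype.card_fin]
  rcases h5.eq_or_lt with rfl | h6
  · have hP := nonempty_iso_pathGraph_five hGc hn hD hx hy hA
    simp [hP, hG2, (hiso hP).2]
  · have hP : ¬ Nonempty (Gᶜ ≃g pathGraph 5) := fun h ↦ h6.ne' (hiso h).1
    obtain ⟨c', hc', hcG'⟩ := exists_isCFCColoring_of_six_le hGc (by omega) hD
    have h1 := cfcNum_le hc' hcG'
    have h2 := two_le_cfcNum hc' hcG' ha.symm hva
    rw [hn] at h1
    simp only [hP, hG2, iff_false]
    omega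
end
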